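/- arXiv:2101.08586 — 2 statements merged into one kernel-verified Lean document; each statement's English description precedes it below -/
import Mathlib

section
/- (General Carleman inequality for the backward heat operator.) Let d, m ≥ 1 be integers and t₁ < t₂ reals. Let u : [t₁,t₂] × ℝ^d → ℝ^m be smooth with support contained in [t₁,t₂] × K for some compact set K ⊂ ℝ^d, and let g : [t₁,t₂] × ℝ^d → ℝ be smooth. Set F := ∂ₜg − Δg − |∇g|² and let L := ∂ₜ + Δ act componentwise (Δ and ∇ in the space variables). Then ∫_{t₁}^{t₂}∫_{ℝ^d} ( (1/2)(LF)|u|² + 2 Hess_g(∇u,∇u) ) e^g dx dt ≤ (1/2)∫_{t₁}^{t₂}∫_{ℝ^d} |Lu|² e^g dx dt + [ ∫_{ℝ^d} ( |∇u|² + (1/2)F|u|² ) e^g dx ]_{t=t₁}^{t=t₂}, where Hess_g(∇u,∇u) := Σ_{i,j=1}^{d} Σ_{k=1}^{m} (∂_i∂_j g)(∂_i u_k)(∂_j u_k), |∇u|² := Σ_{i,k} (∂_i u_k)², and [H(t)]_{t=t₁}^{t=t₂} := H(t₂) − H(t₁). -/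
noncomputable section

open MeasureTheory Real Set

/-- Spatial partial derivative in the `i`-th coordinate direction. -/
def pdg {d : ℕ} (i : Fin d) (f : EuclideanSpace ℝ (Fin d) → ℝ)
    (x : EuclideanSpace ℝ (Fin d)) : ℝ :=
  fderiv ℝ f x (EuclideanSpace.single i 1)

/-- Spatial Laplacian. -/
def lapg {d : ℕ} (f : EuclideanSpace ℝ (Fin d) → ℝ) (x : EuclideanSpace ℝ (Fin d)) : ℝ :=
  ∑ i, pdg i (pdg i f) x

/-- Time derivative. -/
def tdg {d : ℕ} (f : ℝ → EuclideanSpace ℝ (Fin d) → ℝ) (t : ℝ)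
    (x : EuclideanSpace ℝ (Fin d)) : ℝ :=
  deriv (fun s => f s x) t

/-- The backward heat operator `L = ∂ₜ + Δ` acting on scalar functions. -/
def bheat {d : ℕ} (f : ℝ → EuclideanSpace ℝ (Fin d) → ℝ) (t : ℝ)
    (x : EuclideanSpace ℝ (Fin d)) : ℝ :=
  tdg f t x + lapg (f t) x

abbrev ZZ (d : ℕ) := ℝ × EuclideanSpace ℝ (Fin d)

def dvz {d : ℕ} (v : ZZ d) (f : ZZ d → ℝ) (z : ZZ d) : ℝ := fderiv ℝ f z v

def eez {d : ℕ} (i : Fin d) : ZZ d := (0, EuclideanSpace.single i 1)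

def ttz {d : ℕ} : ZZ d := (1, 0)

def lpz {d : ℕ} (f : ZZ d → ℝ) (z : ZZ d) : ℝ := ∑ i, dvz (eez i) (dvz (eez i) f) z

def ipz {d : ℕ} (a b : ZZ d → ℝ) (z : ZZ d) : ℝ := ∑ i, dvz (eez i) a z * dvz (eez i) b z

lemma ContDiff.diffz {d : ℕ} {f : ZZ d → ℝ} (hf : ContDiff ℝ (⊤ : ℕ∞) f) : Differentiable ℝ f :=
  ContDiff.differentiable hf (by simp)

@[fun_prop]
lemma dvz_smooth {d : ℕ} {v : ZZ d} {f : ZZ d → ℝ} (hf : ContDiff ℝ (⊤ : ℕ∞) f) : ContDiff ℝ (⊤ : ℕ∞) (dvz v f) := by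
  unfold dvz
  exact (ContDiff.fderiv_right (m := (⊤ : ℕ∞)) hf (by norm_cast)).clm_apply contDiff_const

@[fun_prop]
lemma lpz_smooth {d : ℕ} {f : ZZ d → ℝ} (hf : ContDiff ℝ (⊤ : ℕ∞) f) : ContDiff ℝ (⊤ : ℕ∞) (lpz f) := by
  unfold lpz
  exact ContDiff.sum fun i _ => dvz_smooth (dvz_smooth hf)

@[fun_prop]
lemma ipz_smooth {d : ℕ} {a b : ZZ d → ℝ} (ha : ContDiff ℝ (⊤ : ℕ∞) a) (hb : ContDiff ℝ (⊤ : ℕ∞) b) : ContDiff ℝ (⊤ : ℕ∞) (ipz a b) := by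
  unfold ipz
  exact ContDiff.sum fun i _ => (dvz_smooth ha).mul (dvz_smooth hb)

lemma dvz_comm {d : ℕ} {v w : ZZ d} {f : ZZ d → ℝ} (hf : ContDiff ℝ (⊤ : ℕ∞) f) (z : ZZ d) :
    dvz v (dvz w f) z = dvz w (dvz v f) z := by
  have h1 : DifferentiableAt ℝ (fderiv ℝ f) z :=
    (ContDiff.differentiable (n := (⊤ : ℕ∞)) (ContDiff.fderiv_right (m := (⊤ : ℕ∞)) hf (by norm_cast)) (by simp)) z
  have hs : IsSymmSndFDerivAt ℝ f z :=
    hf.contDiffAt.isSymmSndFDerivAt (by simp only [minSmoothness_of_isRCLikeNormedField]; exact WithTop.coe_le_coe.2 le_top)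
  have key : ∀ a b : ZZ d, dvz a (dvz b f) z = fderiv ℝ (fderiv ℝ f) z a b := by
    intro a b
    unfold dvz
    rw [fderiv_clm_apply h1 (differentiableAt_const b)]
    simp
  rw [key, key]
  exact hs v w

lemma dvz_add {d : ℕ} (v : ZZ d) {a b : ZZ d → ℝ} (ha : ContDiff ℝ (⊤ : ℕ∞) a) (hb : ContDiff ℝ (⊤ : ℕ∞) b) (z : ZZ d) :
    dvz v (fun z => a z + b z) z = dvz v a z + dvz v b z := by
  unfold dvz
  rw [fderiv_fun_add (ha.diffz z) (hb.diffz z)]; rfl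

lemma dvz_mul {d : ℕ} (v : ZZ d) {a b : ZZ d → ℝ} (ha : ContDiff ℝ (⊤ : ℕ∞) a) (hb : ContDiff ℝ (⊤ : ℕ∞) b) (z : ZZ d) :
    dvz v (fun z => a z * b z) z = dvz v a z * b z + a z * dvz v b z := by
  unfold dvz
  rw [fderiv_fun_mul (ha.diffz z) (hb.diffz z)]
  simp; ring

lemma dvz_cmul {d : ℕ} (v : ZZ d) (c : ℝ) {b : ZZ d → ℝ} (hb : ContDiff ℝ (⊤ : ℕ∞) b) (z : ZZ d) :
    dvz v (fun z => c * b z) z = c * dvz v b z := by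
  unfold dvz
  rw [fderiv_const_mul (hb.diffz z)]
  simp

lemma dvz_exp {d : ℕ} (v : ZZ d) {a : ZZ d → ℝ} (ha : ContDiff ℝ (⊤ : ℕ∞) a) (z : ZZ d) :
    dvz v (fun z => Real.exp (a z)) z = Real.exp (a z) * dvz v a z := by
  unfold dvz
  rw [fderiv_exp (ha.diffz z)]; simp

lemma dvz_sum {d : ℕ} {ι : Type*} (s : Finset ι) (v : ZZ d) {a : ι → ZZ d → ℝ}
    (ha : ∀ i, ContDiff ℝ (⊤ : ℕ∞) (a i)) (z : ZZ d) :
    dvz v (fun z => ∑ i ∈ s, a i z) z = ∑ i ∈ s, dvz v (a i) z := by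
  unfold dvz
  rw [fderiv_fun_sum (fun i _ => (ha i).diffz z)]
  simp

/-- Divergence of a weighted gradient field. -/
lemma div_field {d : ℕ} {g a b : ZZ d → ℝ} (hg : ContDiff ℝ (⊤ : ℕ∞) g) (ha : ContDiff ℝ (⊤ : ℕ∞) a) (hb : ContDiff ℝ (⊤ : ℕ∞) b) (z : ZZ d) :
    ∑ i, dvz (eez i) (fun z => Real.exp (g z) * (a z * dvz (eez i) b z)) z
      = Real.exp (g z) * (ipz a b z + a z * lpz b z + a z * ipz g b z) := by
  have h : ∀ i, dvz (eez i) (fun z => Real.exp (g z) * (a z * dvz (eez i) b z)) z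
      = Real.exp (g z) * (dvz (eez i) a z * dvz (eez i) b z
        + a z * dvz (eez i) (dvz (eez i) b) z + a z * (dvz (eez i) g z * dvz (eez i) b z)) := by
    intro i
    rw [dvz_mul _ (by fun_prop) (by fun_prop), dvz_exp _ hg, dvz_mul _ ha (by fun_prop)]
    ring
  simp_rw [h]
  rw [← Finset.mul_sum, Finset.sum_add_distrib, Finset.sum_add_distrib, ← Finset.mul_sum,
    ← Finset.mul_sum]
  rfl

lemma ipz_add {d : ℕ} {a b c : ZZ d → ℝ} (ha : ContDiff ℝ (⊤ : ℕ∞) a) (hb : ContDiff ℝ (⊤ : ℕ∞) b) (z : ZZ d) :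
    ipz (fun z => a z + b z) c z = ipz a c z + ipz b c z := by
  unfold ipz
  simp_rw [dvz_add _ ha hb, add_mul, Finset.sum_add_distrib]

lemma ipz_mul {d : ℕ} {a b c : ZZ d → ℝ} (ha : ContDiff ℝ (⊤ : ℕ∞) a) (hb : ContDiff ℝ (⊤ : ℕ∞) b) (z : ZZ d) :
    ipz (fun z => a z * b z) c z = b z * ipz a c z + a z * ipz b c z := by
  unfold ipz
  simp_rw [dvz_mul _ ha hb, Finset.mul_sum, ← Finset.sum_add_distrib]
  exact Finset.sum_congr rfl fun i _ => by ring

lemma ipz_cmul {d : ℕ} (r : ℝ) {a c : ZZ d → ℝ} (ha : ContDiff ℝ (⊤ : ℕ∞) a) (z : ZZ d) :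
    ipz (fun z => r * a z) c z = r * ipz a c z := by
  unfold ipz
  simp_rw [dvz_cmul _ r ha, Finset.mul_sum]
  exact Finset.sum_congr rfl fun i _ => by ring

lemma ipz_comm {d : ℕ} (a b : ZZ d → ℝ) (z : ZZ d) : ipz a b z = ipz b a z := by
  unfold ipz
  exact Finset.sum_congr rfl fun i _ => by ring

def hessz {d : ℕ} (g a b : ZZ d → ℝ) (z : ZZ d) : ℝ :=
  ∑ i, ∑ j, dvz (eez i) (dvz (eez j) g) z * dvz (eez i) a z * dvz (eez j) b z

lemma dvz_ipz {d : ℕ} (v : ZZ d) {a b : ZZ d → ℝ} (ha : ContDiff ℝ (⊤ : ℕ∞) a) (hb : ContDiff ℝ (⊤ : ℕ∞) b) (z : ZZ d) :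
    dvz v (ipz a b) z = ipz (dvz v a) b z + ipz a (dvz v b) z := by
  have : ipz a b = fun z => ∑ i, dvz (eez i) a z * dvz (eez i) b z := rfl
  rw [this, dvz_sum _ _ (fun i => by fun_prop)]
  unfold ipz
  rw [← Finset.sum_add_distrib]
  refine Finset.sum_congr rfl fun i _ => ?_
  rw [dvz_mul _ (by fun_prop) (by fun_prop), dvz_comm ha, dvz_comm hb]

lemma ipz_ipz {d : ℕ} {a b c : ZZ d → ℝ} (ha : ContDiff ℝ (⊤ : ℕ∞) a) (hb : ContDiff ℝ (⊤ : ℕ∞) b) (z : ZZ d) :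
    ipz (ipz a b) c z = hessz a c b z + hessz b c a z := by
  conv_lhs => unfold ipz
  unfold hessz
  rw [← Finset.sum_add_distrib]
  refine Finset.sum_congr rfl fun i _ => ?_
  have := dvz_ipz (eez i) ha hb z
  unfold ipz at this
  rw [this, ← Finset.sum_add_distrib, ← Finset.sum_add_distrib, Finset.sum_mul]
  refine Finset.sum_congr rfl fun j _ => ?_
  rw [dvz_comm ha, dvz_comm hb]
  ring

lemma hessz_symm {d : ℕ} {g : ZZ d → ℝ} (a b : ZZ d → ℝ) (hg : ContDiff ℝ (⊤ : ℕ∞) g) (z : ZZ d) :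
    hessz g a b z = hessz g b a z := by
  unfold hessz
  rw [Finset.sum_comm]
  refine Finset.sum_congr rfl fun i _ => Finset.sum_congr rfl fun j _ => ?_
  rw [dvz_comm hg]; ring

/-- The vector field. -/
def Vz {d : ℕ} (g F w : ZZ d → ℝ) (i : Fin d) (z : ZZ d) : ℝ :=
  Real.exp (g z) * ((2 * dvz ttz w z + (F z * w z + (-2) * ipz g w z)) * dvz (eez i) w z)
  + (Real.exp (g z) * (((-1/2) * (w z * w z)) * dvz (eez i) F z)
  + Real.exp (g z) * (((1/2) * (F z * (w z * w z)) + ipz w w z) * dvz (eez i) g z))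

lemma Vz_smooth {d : ℕ} {g F w : ZZ d → ℝ} (hg : ContDiff ℝ (⊤ : ℕ∞) g) (hF : ContDiff ℝ (⊤ : ℕ∞) F) (hw : ContDiff ℝ (⊤ : ℕ∞) w) (i : Fin d) :
    ContDiff ℝ (⊤ : ℕ∞) (Vz g F w i) := by
  unfold Vz
  fun_prop

lemma div_Vz {d : ℕ} {g F w : ZZ d → ℝ} (hg : ContDiff ℝ (⊤ : ℕ∞) g) (hF : ContDiff ℝ (⊤ : ℕ∞) F) (hw : ContDiff ℝ (⊤ : ℕ∞) w) (z : ZZ d) :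
    ∑ i, dvz (eez i) (Vz g F w i) z = Real.exp (g z) *
      ((2 * ipz (dvz ttz w) w z + (F z * ipz w w z + w z * ipz F w z)
          - 2 * (hessz g w w z + hessz w w g z)
        + (2 * dvz ttz w z + F z * w z - 2 * ipz g w z) * (lpz w z + ipz g w z))
      + (- w z * ipz F w z - 1/2 * w z ^ 2 * (lpz F z + ipz g F z))
      + ((1/2) * (w z ^ 2 * ipz F g z + 2 * F z * w z * ipz g w z) + 2 * hessz w w g z
        + ((1/2) * F z * w z ^ 2 + ipz w w z) * (lpz g z + ipz g g z))) := by
  have h : ∀ i, dvz (eez i) (Vz g F w i) z = _ := fun i => by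
    unfold Vz
    rw [dvz_add _ (by fun_prop) (by fun_prop), dvz_add _ (by fun_prop) (by fun_prop)]
  simp_rw [h]
  rw [Finset.sum_add_distrib, Finset.sum_add_distrib,
    div_field (a := fun z => 2 * dvz ttz w z + (F z * w z + (-2) * ipz g w z)) hg (by fun_prop) hw,
    div_field (a := fun z => (-1/2) * (w z * w z)) hg (by fun_prop) hF,
    div_field (a := fun z => (1/2) * (F z * (w z * w z)) + ipz w w z) hg (by fun_prop) hg,
    ipz_add (by fun_prop) (by fun_prop), ipz_add (by fun_prop) (by fun_prop),
    ipz_add (by fun_prop) (by fun_prop), ipz_cmul _ (by fun_prop), ipz_cmul _ (by fun_prop),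
    ipz_cmul _ (by fun_prop), ipz_cmul _ (by fun_prop), ipz_mul (by fun_prop) (by fun_prop),
    ipz_mul (by fun_prop) (by fun_prop), ipz_mul hF (by fun_prop),
    ipz_mul (c := g) hw hw,
    ipz_ipz (by fun_prop) (by fun_prop), ipz_ipz (by fun_prop) (by fun_prop),
    hessz_symm g w hw, ipz_comm w F, ipz_comm w g]
  ring

/-- The boundary density. -/
def Mz {d : ℕ} (g F w : ZZ d → ℝ) (z : ZZ d) : ℝ :=
  (ipz w w z + (1/2) * (F z * (w z * w z))) * Real.exp (g z)

lemma Mz_smooth {d : ℕ} {g F w : ZZ d → ℝ} (hg : ContDiff ℝ (⊤ : ℕ∞) g) (hF : ContDiff ℝ (⊤ : ℕ∞) F) (hw : ContDiff ℝ (⊤ : ℕ∞) w) :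
    ContDiff ℝ (⊤ : ℕ∞) (Mz g F w) := by
  unfold Mz
  fun_prop

lemma dt_Mz {d : ℕ} {g F w : ZZ d → ℝ} (hg : ContDiff ℝ (⊤ : ℕ∞) g) (hF : ContDiff ℝ (⊤ : ℕ∞) F) (hw : ContDiff ℝ (⊤ : ℕ∞) w) (z : ZZ d) :
    dvz ttz (Mz g F w) z = Real.exp (g z) * (2 * ipz (dvz ttz w) w z
      + (1/2) * dvz ttz F z * w z ^ 2 + F z * w z * dvz ttz w z
      + (ipz w w z + (1/2) * F z * w z ^ 2) * dvz ttz g z) := by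
  unfold Mz
  rw [dvz_mul _ (by fun_prop) (by fun_prop), dvz_exp _ hg, dvz_add _ (by fun_prop) (by fun_prop),
    dvz_ipz _ hw hw, dvz_cmul _ _ (by fun_prop), dvz_mul _ hF (by fun_prop), dvz_mul _ hw hw,
    ipz_comm w]
  ring

/-- Pointwise Carleman inequality modulo a spatial divergence. -/
lemma pointwise {d : ℕ} {g F w : ZZ d → ℝ} (hg : ContDiff ℝ (⊤ : ℕ∞) g) (hF : ContDiff ℝ (⊤ : ℕ∞) F) (hw : ContDiff ℝ (⊤ : ℕ∞) w)
    (hFg : ∀ z, F z = dvz ttz g z - lpz g z - ipz g g z) (z : ZZ d) :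
    ((1/2) * (dvz ttz F z + lpz F z) * w z ^ 2 + 2 * hessz g w w z) * Real.exp (g z)
      ≤ (1/2) * ((dvz ttz w z + lpz w z) ^ 2 * Real.exp (g z)) + dvz ttz (Mz g F w) z
        - ∑ i, dvz (eez i) (Vz g F w i) z := by
  rw [div_Vz hg hF hw, dt_Mz hg hF hw]
  have hT : dvz ttz g z = F z + lpz g z + ipz g g z := by rw [hFg z]; ring
  rw [hT, ipz_comm g F]
  have hsq : 0 ≤ (1/2) * (lpz w z + 2 * ipz g w z - F z * w z - dvz ttz w z) ^ 2
      * Real.exp (g z) := by positivity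
  linarith [hsq]

/-! Integration. -/

lemma dvz_vanish {d : ℕ} {K : Set (EuclideanSpace ℝ (Fin d))} (hK : IsClosed K) (v : ZZ d)
    {f : ZZ d → ℝ} (hf : ∀ z : ZZ d, z.2 ∉ K → f z = 0) (z : ZZ d) (hz : z.2 ∉ K) :
    dvz v f z = 0 := by
  unfold dvz
  have : f =ᶠ[nhds z] fun _ => 0 := by
    have ho : IsOpen {z : ZZ d | z.2 ∉ K} := hK.isOpen_compl.preimage continuous_snd
    filter_upwards [ho.mem_nhds hz] with y hy using hf y hy
  rw [this.fderiv_eq]; simp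

lemma integrable_prod_of {d : ℕ} {K : Set (EuclideanSpace ℝ (Fin d))} (hK : IsCompact K)
    (t₁ t₂ : ℝ) {f : ZZ d → ℝ} (hc : Continuous f) (hf : ∀ z : ZZ d, z.2 ∉ K → f z = 0) :
    Integrable f ((volume.restrict (Icc t₁ t₂)).prod volume) := by
  have h1 : IntegrableOn f (Icc t₁ t₂ ×ˢ K)
      (volume.prod volume : Measure (ZZ d)) :=
    hc.continuousOn.integrableOn_compact (isCompact_Icc.prod hK)
  unfold IntegrableOn at h1
  rw [← Measure.prod_restrict] at h1
  have h2 : (volume.restrict (Icc t₁ t₂)).prod (volume.restrict K)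
     = ((volume.restrict (Icc t₁ t₂)).prod
        (volume : Measure (EuclideanSpace ℝ (Fin d)))).restrict (univ ×ˢ K) := by
    rw [← Measure.prod_restrict, Measure.restrict_univ]
  rw [h2] at h1
  refine (integrableOn_iff_integrable_of_support_subset ?_).1 h1
  intro z hz
  by_contra hzK
  exact hz (hf z (fun h => hzK ⟨mem_univ _, h⟩))

lemma integrable_slice {d : ℕ} {K : Set (EuclideanSpace ℝ (Fin d))} (hK : IsCompact K)
    (t : ℝ) {f : ZZ d → ℝ} (hc : Continuous f) (hf : ∀ z : ZZ d, z.2 ∉ K → f z = 0) :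
    Integrable (fun x => f (t, x)) := by
  refine (Continuous.integrable_of_hasCompactSupport (by fun_prop) ?_)
  exact HasCompactSupport.intro hK fun x hx => hf (t, x) hx

lemma slice_hasFDerivAt {d : ℕ} {f : ZZ d → ℝ} (hf : ContDiff ℝ (⊤ : ℕ∞) f) (t : ℝ)
    (x : EuclideanSpace ℝ (Fin d)) :
    HasFDerivAt (fun y => f (t, y))
      ((fderiv ℝ f (t, x)).comp (ContinuousLinearMap.inr ℝ ℝ (EuclideanSpace ℝ (Fin d)))) x := by
  have h := (hf.diffz (t, x)).hasFDerivAt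
  exact h.comp x (hasFDerivAt_prodMk_right t x)

lemma slice_hasDerivAt {d : ℕ} {f : ZZ d → ℝ} (hf : ContDiff ℝ (⊤ : ℕ∞) f) (t : ℝ)
    (x : EuclideanSpace ℝ (Fin d)) :
    HasDerivAt (fun s => f (s, x)) (dvz ttz f (t, x)) t := by
  have h := (hf.diffz (t, x)).hasFDerivAt
  have h2 := (h.comp t (hasFDerivAt_prodMk_left t x)).hasDerivAt
  have e : ((fderiv ℝ f (t, x)).comp (ContinuousLinearMap.inl ℝ ℝ (EuclideanSpace ℝ (Fin d)))) 1
      = dvz ttz f (t, x) := by simp [dvz, ttz]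
  rw [← e]
  exact h2

lemma pdg_slice {d : ℕ} {f : ZZ d → ℝ} (hf : ContDiff ℝ (⊤ : ℕ∞) f) (i : Fin d) (t : ℝ) :
    pdg i (fun y => f (t, y)) = fun x => dvz (eez i) f (t, x) := by
  funext x
  unfold pdg
  rw [(slice_hasFDerivAt hf t x).fderiv]
  simp [dvz, eez]

lemma integral_div_zero {d : ℕ} {K : Set (EuclideanSpace ℝ (Fin d))} (hK : IsCompact K)
    (t : ℝ) {f : ZZ d → ℝ} (hs : ContDiff ℝ (⊤ : ℕ∞) f) (hf : ∀ z : ZZ d, z.2 ∉ K → f z = 0) (i : Fin d) :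
    ∫ x, dvz (eez i) f (t, x) = 0 := by
  have hi := integrable_slice hK t hs.continuous hf
  have hi' := integrable_slice hK t (dvz_smooth (v := eez i) hs).continuous
    (dvz_vanish hK.isClosed _ hf)
  have h := integral_mul_fderiv_eq_neg_fderiv_mul_of_integrable
    (μ := (volume : Measure (EuclideanSpace ℝ (Fin d)))) (f := fun _ => (1 : ℝ))
    (g := fun y => f (t, y)) (v := EuclideanSpace.single i 1) (by simp)
    (by
      have := pdg_slice hs i t
      unfold pdg at this
      simp only [one_mul, this]; exact hi') (by simpa using hi) (by simp)
    (fun x _ => (slice_hasFDerivAt hs t x).differentiableAt)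
  have h3 := pdg_slice hs i t
  unfold pdg at h3
  simpa [h3] using h

lemma int_main {d : ℕ} {K : Set (EuclideanSpace ℝ (Fin d))} (hK : IsCompact K)
    {t₁ t₂ : ℝ} (ht : t₁ < t₂) {P Q M : ZZ d → ℝ} {V : Fin d → ZZ d → ℝ}
    (hP : Continuous P) (hQ : Continuous Q) (hM : ContDiff ℝ (⊤ : ℕ∞) M) (hV : ∀ i, ContDiff ℝ (⊤ : ℕ∞) (V i))
    (hP0 : ∀ z : ZZ d, z.2 ∉ K → P z = 0) (hQ0 : ∀ z : ZZ d, z.2 ∉ K → Q z = 0)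
    (hM0 : ∀ z : ZZ d, z.2 ∉ K → M z = 0) (hV0 : ∀ i, ∀ z : ZZ d, z.2 ∉ K → V i z = 0)
    (h : ∀ z, P z ≤ (1/2) * Q z + dvz ttz M z - ∑ i, dvz (eez i) (V i) z) :
    (∫ t in Icc t₁ t₂, ∫ x, P (t, x)) ≤ (1/2) * (∫ t in Icc t₁ t₂, ∫ x, Q (t, x))
      + ((∫ x, M (t₂, x)) - ∫ x, M (t₁, x)) := by
  have iP := integrable_prod_of hK t₁ t₂ hP hP0
  have iQ := integrable_prod_of hK t₁ t₂ hQ hQ0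
  have iM := integrable_prod_of hK t₁ t₂ (dvz_smooth (v := ttz) hM).continuous
    (dvz_vanish hK.isClosed _ hM0)
  have iV := fun i => integrable_prod_of hK t₁ t₂ (dvz_smooth (v := eez i) (hV i)).continuous
    (dvz_vanish hK.isClosed _ (hV0 i))
  have iS := integrable_finsetSum Finset.univ (fun i _ => iV i)
  have hle := integral_mono iP (((iQ.const_mul (1/2)).add iM).sub iS) h
  have e : ∫ z, (((fun z => (1/2) * Q z) + dvz ttz M) - fun z => ∑ i, dvz (eez i) (V i) z) z
      ∂((volume.restrict (Icc t₁ t₂)).prod volume)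
      = (1/2) * (∫ t in Icc t₁ t₂, ∫ x, Q (t, x)) + (∫ t in Icc t₁ t₂, ∫ x, dvz ttz M (t, x)) := by
    rw [integral_sub' ((iQ.const_mul (1/2)).add iM) iS, integral_add' (iQ.const_mul (1/2)) iM,
      integral_const_mul, integral_prod _ iQ, integral_prod _ iM,
      integral_finsetSum _ (fun i _ => iV i)]
    have : ∀ i, ∫ z, dvz (eez i) (V i) z ∂((volume.restrict (Icc t₁ t₂)).prod volume) = 0 := by
      intro i
      rw [integral_prod _ (iV i)]
      simp [integral_div_zero hK _ (hV i) (hV0 i) i]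
    simp [this]
  have e2 : (∫ t in Icc t₁ t₂, ∫ x, dvz ttz M (t, x))
      = (∫ x, M (t₂, x)) - ∫ x, M (t₁, x) := by
    rw [integral_integral_swap (f := fun t x => dvz ttz M (t, x)) iM]
    rw [← integral_sub (integrable_slice hK _ hM.continuous hM0)
      (integrable_slice hK _ hM.continuous hM0)]
    refine integral_congr_ae (Filter.Eventually.of_forall fun x => ?_)
    simp only
    rw [integral_Icc_eq_integral_Ioc, ← intervalIntegral.integral_of_le ht.le]
    refine intervalIntegral.integral_eq_sub_of_hasDerivAt
      (fun t _ => slice_hasDerivAt hM t x) ?_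
    refine Continuous.intervalIntegrable ?_ _ _
    have := (dvz_smooth (v := ttz) hM).continuous
    fun_prop
  rw [← e2]
  rw [integral_prod _ iP] at hle
  exact hle.trans_eq e

lemma lapg_slice {d : ℕ} {f : ZZ d → ℝ} (hf : ContDiff ℝ (⊤ : ℕ∞) f) (t : ℝ) (x : EuclideanSpace ℝ (Fin d)) :
    lapg (fun y => f (t, y)) x = lpz f (t, x) := by
  unfold lapg lpz
  refine Finset.sum_congr rfl fun i _ => ?_
  rw [pdg_slice hf, pdg_slice (dvz_smooth hf)]

lemma tdg_slice {d : ℕ} {f : ZZ d → ℝ} (hf : ContDiff ℝ (⊤ : ℕ∞) f) (t : ℝ) (x : EuclideanSpace ℝ (Fin d)) :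
    tdg (fun s y => f (s, y)) t x = dvz ttz f (t, x) :=
  (slice_hasDerivAt hf t x).deriv

/-- General Carleman inequality for the backward heat operator
`L = ∂ₜ + Δ`: with `F := ∂ₜ g - Δg - |∇g|²`,
`∫∫ ((1/2)(LF)|u|² + 2 Hess_g(∇u,∇u)) e^g ≤ (1/2)∫∫ |Lu|² e^g + [∫ (|∇u|² + (1/2)F|u|²) e^g]_{t₁}^{t₂}`. -/
theorem statement15 (d m : ℕ) (hd : 1 ≤ d) (hm : 1 ≤ m) (t₁ t₂ : ℝ) (ht : t₁ < t₂)
    (u : ℝ → EuclideanSpace ℝ (Fin d) → EuclideanSpace ℝ (Fin m))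
    (g : ℝ → EuclideanSpace ℝ (Fin d) → ℝ)
    (hu : ContDiff ℝ (⊤ : ℕ∞) (fun z : ℝ × EuclideanSpace ℝ (Fin d) => u z.1 z.2))
    (hg : ContDiff ℝ (⊤ : ℕ∞) (fun z : ℝ × EuclideanSpace ℝ (Fin d) => g z.1 z.2))
    (hsupp : ∃ K : Set (EuclideanSpace ℝ (Fin d)), IsCompact K ∧
      ∀ (t : ℝ) (x : EuclideanSpace ℝ (Fin d)), x ∉ K → u t x = 0)
    (F : ℝ → EuclideanSpace ℝ (Fin d) → ℝ)
    (hF : ∀ t x, F t x = tdg g t x - lapg (g t) x - ∑ i, (pdg i (g t) x) ^ 2) :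
    (∫ t in Icc t₁ t₂, ∫ x,
        ((1/2) * bheat F t x * ‖u t x‖ ^ 2
          + 2 * ∑ i, ∑ j, ∑ k, pdg i (pdg j (g t)) x
              * pdg i (fun y => u t y k) x * pdg j (fun y => u t y k) x)
          * Real.exp (g t x))
      ≤ (1/2) * (∫ t in Icc t₁ t₂, ∫ x,
            (∑ k, (bheat (fun s y => u s y k) t x) ^ 2) * Real.exp (g t x))
        + ((∫ x, ((∑ i, ∑ k, (pdg i (fun y => u t₂ y k) x) ^ 2)
              + (1/2) * F t₂ x * ‖u t₂ x‖ ^ 2) * Real.exp (g t₂ x))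
          - (∫ x, ((∑ i, ∑ k, (pdg i (fun y => u t₁ y k) x) ^ 2)
              + (1/2) * F t₁ x * ‖u t₁ x‖ ^ 2) * Real.exp (g t₁ x))) := by

  obtain ⟨K, hK, hu0⟩ := hsupp
  set G : ZZ d → ℝ := fun z => g z.1 z.2 with hGdef
  set U : Fin m → ZZ d → ℝ := fun k z => u z.1 z.2 k with hUdef
  set Φ : ZZ d → ℝ := fun z => F z.1 z.2 with hΦdef
  have hG : ContDiff ℝ (⊤ : ℕ∞) G := hg
  have hU : ∀ k, ContDiff ℝ (⊤ : ℕ∞) (U k) := by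
    intro k
    exact (contDiff_euclidean.1 hu) k
  have gs : ∀ t, g t = fun y => G (t, y) := fun t => rfl
  have hΦeq : ∀ z, Φ z = dvz ttz G z - lpz G z - ipz G G z := by
    rintro ⟨t, x⟩
    show F t x = _
    rw [hF, gs t, lapg_slice hG, show tdg g t x = _ from tdg_slice hG t x]
    simp_rw [pdg_slice hG]
    simp [ipz, pow_two]
  have hΦ : ContDiff ℝ (⊤ : ℕ∞) Φ := by
    have : Φ = fun z => dvz ttz G z - lpz G z - ipz G G z := funext hΦeq
    rw [this]; fun_prop
  have hU0 : ∀ k, ∀ z : ZZ d, z.2 ∉ K → U k z = 0 := by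
    intro k z hz
    simp [hUdef, hu0 z.1 z.2 hz]
  have hD0 : ∀ k v, ∀ z : ZZ d, z.2 ∉ K → dvz v (U k) z = 0 :=
    fun k v => dvz_vanish hK.isClosed v (hU0 k)
  have hL0 : ∀ k, ∀ z : ZZ d, z.2 ∉ K → lpz (U k) z = 0 := by
    intro k z hz
    unfold lpz
    exact Finset.sum_eq_zero fun i _ => dvz_vanish hK.isClosed _ (hD0 k _) z hz
  have hI0 : ∀ k, ∀ z : ZZ d, z.2 ∉ K → ipz (U k) (U k) z = 0 := by
    intro k z hz
    unfold ipz
    exact Finset.sum_eq_zero fun i _ => by rw [hD0 k _ z hz]; simp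
  have hH0 : ∀ k, ∀ z : ZZ d, z.2 ∉ K → hessz G (U k) (U k) z = 0 := by
    intro k z hz
    unfold hessz
    exact Finset.sum_eq_zero fun i _ => Finset.sum_eq_zero fun j _ => by
      rw [hD0 k _ z hz]; simp
  have hHs : ∀ k, ContDiff ℝ (⊤ : ℕ∞) (hessz G (U k) (U k)) := by
    intro k
    unfold hessz
    have := hU k
    fun_prop
  have nrm : ∀ t x, ‖u t x‖ ^ 2 = ∑ k, U k (t, x) ^ 2 := by
    intro t x
    rw [EuclideanSpace.norm_sq_eq]
    simp [hUdef]
  have pu : ∀ i k t, pdg i (fun y => u t y k) = fun x => dvz (eez i) (U k) (t, x) :=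
    fun i k t => pdg_slice (hU k) i t
  have main := int_main hK ht
    (P := fun z => ∑ k, ((1/2) * (dvz ttz Φ z + lpz Φ z) * U k z ^ 2 + 2 * hessz G (U k) (U k) z)
        * Real.exp (G z))
    (Q := fun z => ∑ k, (dvz ttz (U k) z + lpz (U k) z) ^ 2 * Real.exp (G z))
    (M := fun z => ∑ k, Mz G Φ (U k) z)
    (V := fun i z => ∑ k, Vz G Φ (U k) i z)
    (ContDiff.continuous (𝕜 := ℝ) (n := (⊤ : ℕ∞)) (by fun_prop))
    (ContDiff.continuous (𝕜 := ℝ) (n := (⊤ : ℕ∞)) (by fun_prop))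
    (ContDiff.sum fun k _ => Mz_smooth hG hΦ (hU k))
    (fun i => ContDiff.sum fun k _ => Vz_smooth hG hΦ (hU k) i)
    (fun z hz => Finset.sum_eq_zero fun k _ => by simp [hU0 k z hz, hH0 k z hz])
    (fun z hz => Finset.sum_eq_zero fun k _ => by simp [hD0 k _ z hz, hL0 k z hz])
    (fun z hz => Finset.sum_eq_zero fun k _ => by simp [Mz, hU0 k z hz, hI0 k z hz])
    (fun i z hz => Finset.sum_eq_zero fun k _ => by
      simp [Vz, hU0 k z hz, hI0 k z hz, hD0 k _ z hz])
    (fun z => by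
      rw [dvz_sum _ _ (fun k => Mz_smooth hG hΦ (hU k))]
      simp_rw [fun i => dvz_sum Finset.univ (eez i) (fun k => Vz_smooth hG hΦ (hU k) i) z]
      rw [Finset.sum_comm, Finset.mul_sum, ← Finset.sum_add_distrib, ← Finset.sum_sub_distrib]
      exact Finset.sum_le_sum fun k _ => pointwise hG hΦ (hU k) hΦeq z)
  have eM : ∀ t x, ((∑ i, ∑ k, (pdg i (fun y => u t y k) x) ^ 2)
      + (1/2) * F t x * ‖u t x‖ ^ 2) * Real.exp (g t x) = ∑ k, Mz G Φ (U k) (t, x) := by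
    intro t x
    simp only [pu, nrm, Mz, ipz]
    rw [← Finset.sum_mul, Finset.sum_add_distrib, Finset.sum_comm, Finset.mul_sum]
    congr 2
    · simp only [pow_two]
    · exact Finset.sum_congr rfl fun k _ => by simp only [hΦdef]; ring
  have eQ : ∀ t x, (∑ k, (bheat (fun s y => u s y k) t x) ^ 2) * Real.exp (g t x)
      = ∑ k, (dvz ttz (U k) (t, x) + lpz (U k) (t, x)) ^ 2 * Real.exp (G (t, x)) := by
    intro t x
    rw [Finset.sum_mul]
    refine Finset.sum_congr rfl fun k _ => ?_
    unfold bheat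
    rw [show tdg (fun s y => u s y k) t x = _ from tdg_slice (hU k) t x,
      show lapg (fun y => u t y k) x = _ from lapg_slice (hU k) t x]
  have eP : ∀ t x, ((1/2) * bheat F t x * ‖u t x‖ ^ 2
          + 2 * ∑ i, ∑ j, ∑ k, pdg i (pdg j (g t)) x
              * pdg i (fun y => u t y k) x * pdg j (fun y => u t y k) x)
          * Real.exp (g t x) = ∑ k, ((1/2) * (dvz ttz Φ (t, x) + lpz Φ (t, x)) * U k (t, x) ^ 2
            + 2 * hessz G (U k) (U k) (t, x)) * Real.exp (G (t, x)) := by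
    intro t x
    have hb : bheat F t x = dvz ttz Φ (t, x) + lpz Φ (t, x) := by
      unfold bheat
      rw [show tdg F t x = _ from tdg_slice hΦ t x, show lapg (F t) x = _ from lapg_slice hΦ t x]
    have hgg : ∀ i j, pdg i (pdg j (g t)) x = dvz (eez i) (dvz (eez j) G) (t, x) := by
      intro i j
      rw [gs t, pdg_slice hG, pdg_slice (dvz_smooth hG)]
    rw [hb, ← Finset.sum_mul, Finset.sum_add_distrib, ← Finset.mul_sum, ← Finset.mul_sum, nrm]
    congr 3
    simp only [hgg, pu, hessz]
    rw [Finset.sum_comm (s := (Finset.univ : Finset (Fin m)))]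
    refine Finset.sum_congr rfl fun i _ => ?_
    rw [Finset.sum_comm]
  simp only [eM, eQ, eP]
  exact main
end
end

section
/- (Backward uniqueness Carleman estimate in a cylindrical shell.) Let d₁ ≥ 1 and d₂ ≥ 0 be integers. For x ∈ ℝ^{d₁+d₂} write r := √(x₁²+…+x_{d₁}²) and |z| := √(x_{d₁+1}²+…+x_{d₁+d₂}²). There exist constants C₀* ≥ 1 and C ≥ 1 depending only on d₁+d₂ such that for every C₀ ≥ C₀* the following holds. Let T > 0, 0 < r₋ < r₊, let 𝒞 := {(t,x) : t ∈ [0,T], r₋ ≤ r ≤ r₊, |z| ≤ r₊}, and let u be a smooth real-valued function on an open neighborhood of 𝒞 obeying |Lu| ≤ (1/(C₀T))|u| + (1/(C₀T)^{1/2})|∇u| on 𝒞, where L := ∂ₜ + Δ (spatial Laplacian). Assume r₋² ≥ 4C₀T. Then ∫_0^{T/4} ∫_{{10r₋ ≤ r ≤ r₊/2, |z| ≤ r₊/2}} ( T^{−1}|u|² + |∇u|² ) dx dt ≤ C C₀ e^{−r₋r₊/(4C₀T)} ( X + e^{2r₊²/(C₀T)} Y ), where X := ∬_𝒞 e^{2|x|²/(C₀T)}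 ( T^{−1}|u(t,x)|² + |∇u(t,x)|² ) dx dt and Y := ∫_{{r₋ ≤ r ≤ r₊, |z| ≤ r₊}} |u(0,x)|² dx. -/
noncomputable section

open MeasureTheory Real Set

/-- The "axial" radius `r = √(x₁² + ⋯ + x_{d₁}²)` in `ℝ^{d₁+d₂}`. -/
def radP (d₁ d₂ : ℕ) (x : EuclideanSpace ℝ (Fin (d₁ + d₂))) : ℝ :=
  Real.sqrt (∑ i : Fin (d₁ + d₂), if (i : ℕ) < d₁ then x i ^ 2 else 0)

/-- The "vertical" radius `|z| = √(x_{d₁+1}² + ⋯ + x_{d₁+d₂}²)` in `ℝ^{d₁+d₂}`. -/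
def zradP (d₁ d₂ : ℕ) (x : EuclideanSpace ℝ (Fin (d₁ + d₂))) : ℝ :=
  Real.sqrt (∑ i : Fin (d₁ + d₂), if (i : ℕ) < d₁ then 0 else x i ^ 2)

open scoped ContDiff


/-- directional derivative -/
def Dv {H : Type*} [NormedAddCommGroup H] [NormedSpace ℝ H] (v : H) (f : H → ℝ) (z : H) : ℝ :=
  fderiv ℝ f z v

section DvAPI
variable {H : Type*} [NormedAddCommGroup H] [NormedSpace ℝ H]

lemma Dv_smooth {f : H → ℝ} (hf : ContDiff ℝ ∞ f) (v : H) : ContDiff ℝ ∞ (Dv v f) := by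
  unfold Dv
  exact (hf.fderiv_right (m := ∞) (by norm_cast)).clm_apply contDiff_const

lemma smooth_diff {f : H → ℝ} (hf : ContDiff ℝ ∞ f) (z : H) : DifferentiableAt ℝ f z :=
  (hf.differentiable (by simp)) z

lemma Dv_add {f g : H → ℝ} {z : H} (hf : DifferentiableAt ℝ f z) (hg : DifferentiableAt ℝ g z)
    (v : H) : Dv v (fun z => f z + g z) z = Dv v f z + Dv v g z := by
  simp [Dv, fderiv_fun_add hf hg]

lemma Dv_sub {f g : H → ℝ} {z : H} (hf : DifferentiableAt ℝ f z) (hg : DifferentiableAt ℝ g z)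
    (v : H) : Dv v (fun z => f z - g z) z = Dv v f z - Dv v g z := by
  simp [Dv, fderiv_fun_sub hf hg]

lemma Dv_mul {f g : H → ℝ} {z : H} (hf : DifferentiableAt ℝ f z) (hg : DifferentiableAt ℝ g z)
    (v : H) : Dv v (fun z => f z * g z) z = Dv v f z * g z + f z * Dv v g z := by
  simp [Dv, fderiv_fun_mul hf hg]; ring

lemma Dv_cmul {f : H → ℝ} {z : H} (hf : DifferentiableAt ℝ f z) (c : ℝ)
    (v : H) : Dv v (fun z => c * f z) z = c * Dv v f z := by
  simp [Dv, fderiv_const_mul hf]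

lemma Dv_sq {f : H → ℝ} {z : H} (hf : DifferentiableAt ℝ f z)
    (v : H) : Dv v (fun z => f z ^ 2) z = 2 * f z * Dv v f z := by
  simp only [pow_two]; rw [Dv_mul hf hf]; ring

lemma Dv_exp {f : H → ℝ} {z : H} (hf : DifferentiableAt ℝ f z)
    (v : H) : Dv v (fun z => Real.exp (f z)) z = Real.exp (f z) * Dv v f z := by
  simp [Dv, fderiv_exp hf]

lemma Dv_sum {ι : Type*} (s : Finset ι) {f : ι → H → ℝ} {z : H}
    (hf : ∀ i ∈ s, DifferentiableAt ℝ (f i) z)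
    (v : H) : Dv v (fun z => ∑ i ∈ s, f i z) z = ∑ i ∈ s, Dv v (f i) z := by
  simp [Dv, fderiv_fun_sum hf]

lemma Dv_comm {f : H → ℝ} (hf : ContDiff ℝ ∞ f) (v w : H) (z : H) :
    Dv v (Dv w f) z = Dv w (Dv v f) z := by
  have h1 : DifferentiableAt ℝ (fderiv ℝ f) z :=
    ((hf.fderiv_right (m := ∞) (by norm_cast)).differentiable (by simp)) z
  have key : ∀ v w, Dv v (Dv w f) z = fderiv ℝ (fderiv ℝ f) z v w := by
    intro v w
    unfold Dv
    rw [fderiv_clm_apply h1 (by fun_prop)]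
    simp
  rw [key, key]
  have : IsSymmSndFDerivAt ℝ f z := by
    apply hf.contDiffAt.isSymmSndFDerivAt
    simp only [minSmoothness_of_isRCLikeNormedField]
    norm_cast
  exact this v w

lemma Dv_congr {f g : H → ℝ} {z : H} (h : f =ᶠ[nhds z] g) (v : H) : Dv v f z = Dv v g z := by
  simp [Dv, h.fderiv_eq]

lemma Dv_congr_ev {f g : H → ℝ} {z : H} (h : f =ᶠ[nhds z] g) (v : H) :
    Dv v f =ᶠ[nhds z] Dv v g := by
  filter_upwards [h.eventuallyEq_nhds] with y hy
  exact Dv_congr hy v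

lemma Dv_of_line {f : H → ℝ} {z v : H} {c : ℝ} (hf : DifferentiableAt ℝ f z)
    (h : HasDerivAt (fun s : ℝ => f (z + s • v)) c 0) : Dv v f z = c := by
  have := hf.hasFDerivAt.hasLineDerivAt v
  exact HasDerivAt.unique this h

lemma Dv_zero {z v : H} : Dv v (fun _ => (0:ℝ)) z = 0 := by simp [Dv]

lemma Dv_compact {f : H → ℝ} (hf : HasCompactSupport f) (v : H) : HasCompactSupport (Dv v f) :=
  hf.fderiv_apply ℝ v

end DvAPI

section carl
variable {d : ℕ}

abbrev eT (d : ℕ) : ℝ × EuclideanSpace ℝ (Fin d) := (1, 0)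
abbrev eX {d : ℕ} (i : Fin d) : ℝ × EuclideanSpace ℝ (Fin d) := (0, EuclideanSpace.single i 1)

/-- `F = g_t - Δ g - |∇ g|²`. -/
def Fof (g : ℝ × EuclideanSpace ℝ (Fin d) → ℝ) (z : ℝ × EuclideanSpace ℝ (Fin d)) : ℝ :=
  Dv (eT d) g z - ∑ i, Dv (eX i) (Dv (eX i) g) z - ∑ i, (Dv (eX i) g z) ^ 2

def Lof (g : ℝ × EuclideanSpace ℝ (Fin d) → ℝ) (z : ℝ × EuclideanSpace ℝ (Fin d)) : ℝ :=
  Dv (eT d) g z + ∑ i, Dv (eX i) (Dv (eX i) g) z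

def Eof (g u : ℝ × EuclideanSpace ℝ (Fin d) → ℝ) (z : ℝ × EuclideanSpace ℝ (Fin d)) : ℝ :=
  Real.exp (g z) * (∑ i, (Dv (eX i) u z) ^ 2 + (1/2) * (Fof g z * (u z) ^ 2))

def Wof (g u : ℝ × EuclideanSpace ℝ (Fin d) → ℝ) (i : Fin d) (z : ℝ × EuclideanSpace ℝ (Fin d)) : ℝ :=
  Real.exp (g z) * (2 * (Dv (eT d) u z * Dv (eX i) u z)
    - 2 * (Dv (eX i) u z * ∑ j, Dv (eX j) g z * Dv (eX j) u z)
    + Dv (eX i) g z * (∑ j, (Dv (eX j) u z) ^ 2 + (1/2) * (Fof g z * (u z) ^ 2))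
    + Fof g z * (u z * Dv (eX i) u z) - (1/2) * (u z ^ 2 * Dv (eX i) (Fof g) z))

def Iof (g u : ℝ × EuclideanSpace ℝ (Fin d) → ℝ) (z : ℝ × EuclideanSpace ℝ (Fin d)) : ℝ :=
  Real.exp (g z) * ((1/2) * (Lof (Fof g) z * (u z) ^ 2)
    + 2 * (∑ i, ∑ j, Dv (eX i) (Dv (eX j) g) z * (Dv (eX i) u z * Dv (eX j) u z))
    - (1/2) * (Lof u z) ^ 2)

lemma Fof_smooth {g : ℝ × EuclideanSpace ℝ (Fin d) → ℝ} (hg : ContDiff ℝ ∞ g) :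
    ContDiff ℝ ∞ (Fof g) := by
  unfold Fof
  refine ((Dv_smooth hg _).sub (ContDiff.sum fun i _ => Dv_smooth (Dv_smooth hg _) _)).sub
    (ContDiff.sum fun i _ => (Dv_smooth hg _).pow 2)

lemma Lof_smooth {g : ℝ × EuclideanSpace ℝ (Fin d) → ℝ} (hg : ContDiff ℝ ∞ g) :
    ContDiff ℝ ∞ (Lof g) := by
  unfold Lof
  exact ((Dv_smooth hg _).add (ContDiff.sum fun i _ => Dv_smooth (Dv_smooth hg _) _))

lemma Eof_smooth {g u : ℝ × EuclideanSpace ℝ (Fin d) → ℝ} (hg : ContDiff ℝ ∞ g)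
    (hu : ContDiff ℝ ∞ u) : ContDiff ℝ ∞ (Eof g u) := by
  unfold Eof
  exact (Real.contDiff_exp.comp hg).mul ((ContDiff.sum fun i _ => (Dv_smooth hu _).pow 2).add
    (contDiff_const.mul ((Fof_smooth hg).mul (hu.pow 2))))

lemma Iof_smooth {g u : ℝ × EuclideanSpace ℝ (Fin d) → ℝ} (hg : ContDiff ℝ ∞ g)
    (hu : ContDiff ℝ ∞ u) : ContDiff ℝ ∞ (Iof g u) := by
  unfold Iof
  refine (Real.contDiff_exp.comp hg).mul (((contDiff_const.mul
    ((Lof_smooth (Fof_smooth hg)).mul (hu.pow 2))).add (contDiff_const.mul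
      (ContDiff.sum fun i _ => ContDiff.sum fun j _ => (Dv_smooth (Dv_smooth hg _) _).mul
       ((Dv_smooth hu _).mul (Dv_smooth hu _))))).sub (contDiff_const.mul ((Lof_smooth hu).pow 2)))

lemma Wof_smooth {g u : ℝ × EuclideanSpace ℝ (Fin d) → ℝ} (hg : ContDiff ℝ ∞ g)
    (hu : ContDiff ℝ ∞ u) (i : Fin d) : ContDiff ℝ ∞ (Wof g u i) := by
  unfold Wof
  have h1 := fun v => Dv_smooth hu v
  have h2 := fun v => Dv_smooth hg v
  have h3 := Fof_smooth hg
  have h4 := fun v => Dv_smooth h3 v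
  have h5 : ContDiff ℝ ∞ (fun z => Real.exp (g z)) := Real.contDiff_exp.comp hg
  fun_prop

lemma Eof_t {g u : ℝ × EuclideanSpace ℝ (Fin d) → ℝ} (hg : ContDiff ℝ ∞ g)
    (hu : ContDiff ℝ ∞ u) (z) : Dv (eT d) (Eof g u) z =
    Real.exp (g z) * (Dv (eT d) g z * (∑ i, (Dv (eX i) u z) ^ 2 + (1/2) * (Fof g z * (u z) ^ 2))
      + (∑ i, 2 * Dv (eX i) u z * Dv (eX i) (Dv (eT d) u) z)
      + (1/2) * (Dv (eT d) (Fof g) z * (u z)^2 + Fof g z * (2 * u z * Dv (eT d) u z))) := by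
  have h0 := smooth_diff hu z
  have hg0 := smooth_diff hg z
  have h1 := fun v => smooth_diff (Dv_smooth hu v) z
  have h3 := smooth_diff (Fof_smooth hg) z
  unfold Eof
  rw [Dv_mul (by fun_prop) (by fun_prop), Dv_exp hg0, Dv_add (by fun_prop) (by fun_prop),
    Dv_sum _ (by fun_prop), Dv_cmul (by fun_prop), Dv_mul (by fun_prop) (by fun_prop), Dv_sq h0]
  have : ∀ i : Fin d, Dv (eT d) (fun z => Dv (eX i) u z ^ 2) z =
     2 * Dv (eX i) u z * Dv (eX i) (Dv (eT d) u) z := by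
    intro i
    rw [Dv_sq (h1 _), Dv_comm hu]
  simp only [this]
  ring

lemma Wof_x {g u : ℝ × EuclideanSpace ℝ (Fin d) → ℝ} (hg : ContDiff ℝ ∞ g)
    (hu : ContDiff ℝ ∞ u) (i : Fin d) (z) : Dv (eX i) (Wof g u i) z =
    Real.exp (g z) * (Dv (eX i) g z * (2 * (Dv (eT d) u z * Dv (eX i) u z)
    - 2 * (Dv (eX i) u z * ∑ j, Dv (eX j) g z * Dv (eX j) u z)
    + Dv (eX i) g z * (∑ j, (Dv (eX j) u z) ^ 2 + (1/2) * (Fof g z * (u z) ^ 2))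
    + Fof g z * (u z * Dv (eX i) u z) - (1/2) * (u z ^ 2 * Dv (eX i) (Fof g) z))
    + (2 * (Dv (eX i) (Dv (eT d) u) z * Dv (eX i) u z
        + Dv (eT d) u z * Dv (eX i) (Dv (eX i) u) z)
    - 2 * (Dv (eX i) (Dv (eX i) u) z * ∑ j, Dv (eX j) g z * Dv (eX j) u z
        + Dv (eX i) u z * ∑ j, (Dv (eX i) (Dv (eX j) g) z * Dv (eX j) u z
            + Dv (eX j) g z * Dv (eX i) (Dv (eX j) u) z))
    + (Dv (eX i) (Dv (eX i) g) z * (∑ j, (Dv (eX j) u z) ^ 2 + (1/2) * (Fof g z * (u z) ^ 2))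
      + Dv (eX i) g z * (∑ j, 2 * Dv (eX j) u z * Dv (eX i) (Dv (eX j) u) z
        + (1/2) * (Dv (eX i) (Fof g) z * (u z) ^ 2 + Fof g z * (2 * u z * Dv (eX i) u z))))
    + (Dv (eX i) (Fof g) z * (u z * Dv (eX i) u z)
      + Fof g z * (Dv (eX i) u z * Dv (eX i) u z + u z * Dv (eX i) (Dv (eX i) u) z))
      - (1/2) * (2 * u z * Dv (eX i) u z * Dv (eX i) (Fof g) z
         + u z ^ 2 * Dv (eX i) (Dv (eX i) (Fof g)) z))) := by
  have h0 := smooth_diff hu z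
  have hg0 := smooth_diff hg z
  have h1 := fun v => smooth_diff (Dv_smooth hu v) z
  have hg1 := fun v => smooth_diff (Dv_smooth hg v) z
  have h3 := smooth_diff (Fof_smooth hg) z
  have h4 := fun v => smooth_diff (Dv_smooth (Fof_smooth hg) v) z
  unfold Wof
  rw [Dv_mul (by fun_prop) (by fun_prop), Dv_exp hg0, Dv_sub (by fun_prop) (by fun_prop),
    Dv_add (by fun_prop) (by fun_prop), Dv_add (by fun_prop) (by fun_prop),
    Dv_sub (by fun_prop) (by fun_prop), Dv_cmul (by fun_prop), Dv_cmul (by fun_prop),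
    Dv_cmul (by fun_prop), Dv_mul (h1 _) (h1 _), Dv_mul (h1 _) (by fun_prop),
    Dv_mul (hg1 _) (by fun_prop), Dv_mul h3 (by fun_prop), Dv_mul h0 (h1 _),
    Dv_mul (by fun_prop) (h4 _), Dv_sq h0, Dv_add (by fun_prop) (by fun_prop),
    Dv_cmul (by fun_prop), Dv_mul h3 (by fun_prop), Dv_sq h0, Dv_sum _ (by fun_prop),
    Dv_sum _ (by fun_prop)]
  have e1 : ∀ j : Fin d, Dv (eX i) (fun z => Dv (eX j) u z ^ 2) z =
     2 * Dv (eX j) u z * Dv (eX i) (Dv (eX j) u) z := by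
    intro j
    rw [Dv_sq (h1 _)]
  have e2 : ∀ j : Fin d, Dv (eX i) (fun z => Dv (eX j) g z * Dv (eX j) u z) z =
     Dv (eX i) (Dv (eX j) g) z * Dv (eX j) u z
            + Dv (eX j) g z * Dv (eX i) (Dv (eX j) u) z := by
    intro j
    rw [Dv_mul (hg1 _) (h1 _)]
  simp only [e1, e2]
  ring

lemma carl_alg (u ut Ft gt F : ℝ) (ui gi Fi uii gii Fii uti : Fin d → ℝ) (uij gij : Fin d → Fin d → ℝ)
    (hsym : ∀ i j, uij i j = uij j i)
    (hF : F = gt - ∑ i, gii i - ∑ i, gi i ^ 2) :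
    (gt * (∑ i, (ui i) ^ 2 + (1/2) * (F * u ^ 2))
      + (∑ i, 2 * ui i * uti i)
      + (1/2) * (Ft * u^2 + F * (2 * u * ut))) -
    ∑ i, (gi i * (2 * (ut * ui i)
    - 2 * (ui i * ∑ j, gi j * ui j)
    + gi i * (∑ j, (ui j) ^ 2 + (1/2) * (F * u ^ 2))
    + F * (u * ui i) - (1/2) * (u ^ 2 * Fi i))
    + (2 * (uti i * ui i + ut * uii i)
    - 2 * (uii i * ∑ j, gi j * ui j
        + ui i * ∑ j, (gij i j * ui j + gi j * uij i j))
    + (gii i * (∑ j, (ui j) ^ 2 + (1/2) * (F * u ^ 2))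
      + gi i * (∑ j, 2 * ui j * uij i j
        + (1/2) * (Fi i * u ^ 2 + F * (2 * u * ui i))))
    + (Fi i * (u * ui i)
      + F * (ui i * ui i + u * uii i))
      - (1/2) * (2 * u * ui i * Fi i
         + u ^ 2 * Fii i)))
    = 2 * (∑ i, uii i + ∑ i, gi i * ui i - (1/2) * F * u) ^ 2
      - 2 * (∑ i, uii i + ∑ i, gi i * ui i - (1/2) * F * u) * (ut + ∑ i, uii i)
      + (1/2) * ((Ft + ∑ i, Fii i) * u ^ 2) + 2 * ∑ i, ∑ j, gij i j * (ui i * ui j) := by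
  have hsw : ∑ i, gi i * ∑ j, ui j * uij i j = ∑ i, ui i * ∑ j, gi j * uij i j := by
    simp only [Finset.mul_sum]
    rw [Finset.sum_comm]
    refine Finset.sum_congr rfl fun i _ => Finset.sum_congr rfl fun j _ => ?_
    rw [hsym]; ring
  have hgg : ∑ i, ∑ j, gij i j * (ui i * ui j) = ∑ i, ui i * ∑ j, gij i j * ui j := by
    simp only [Finset.mul_sum]
    refine Finset.sum_congr rfl fun i _ => Finset.sum_congr rfl fun j _ => ?_
    ring
  set b := ∑ i, gi i * ui i with hb
  set c := ∑ i, ui i ^ 2 with hc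
  have e : ∀ i, (gi i * (2 * (ut * ui i)
    - 2 * (ui i * b)
    + gi i * (c + (1/2) * (F * u ^ 2))
    + F * (u * ui i) - (1/2) * (u ^ 2 * Fi i))
    + (2 * (uti i * ui i + ut * uii i)
    - 2 * (uii i * b
        + ui i * ∑ j, (gij i j * ui j + gi j * uij i j))
    + (gii i * (c + (1/2) * (F * u ^ 2))
      + gi i * (∑ j, 2 * ui j * uij i j
        + (1/2) * (Fi i * u ^ 2 + F * (2 * u * ui i))))
    + (Fi i * (u * ui i)
      + F * (ui i * ui i + u * uii i))
      - (1/2) * (2 * u * ui i * Fi i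
         + u ^ 2 * Fii i))) =
      (2 * ut - 2 * b + 2 * F * u) * (gi i * ui i) + (c + (1/2) * (F * u ^ 2)) * gi i ^ 2
      + 2 * (ui i * uti i) + (2 * ut - 2 * b + F * u) * uii i
      - 2 * (ui i * ∑ j, gij i j * ui j) - 2 * (ui i * ∑ j, gi j * uij i j)
      + (c + (1/2) * (F * u ^ 2)) * gii i + 2 * (gi i * ∑ j, ui j * uij i j)
      + F * ui i ^ 2 - (1/2) * u^2 * Fii i := by
    intro i
    have : ∑ j, 2 * ui j * uij i j = 2 * ∑ j, ui j * uij i j := by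
      rw [Finset.mul_sum]; exact Finset.sum_congr rfl fun j _ => by ring
    rw [this, Finset.sum_add_distrib]
    ring
  have e3 : ∑ i, 2 * ui i * uti i = 2 * ∑ i, ui i * uti i := by
    rw [Finset.mul_sum]; exact Finset.sum_congr rfl fun j _ => by ring
  rw [Finset.sum_congr rfl fun i _ => e i, e3]
  simp only [Finset.sum_add_distrib, Finset.sum_sub_distrib, ← Finset.mul_sum]
  rw [hsw, hgg, ← hb, ← hc]
  have hgt : gt = F + ∑ i, gii i + ∑ i, gi i ^ 2 := by rw [hF]; ring
  rw [hgt]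
  ring

lemma carl_pt {g u : ℝ × EuclideanSpace ℝ (Fin d) → ℝ} (hg : ContDiff ℝ ∞ g)
    (hu : ContDiff ℝ ∞ u) (z) :
    Iof g u z ≤ Dv (eT d) (Eof g u) z - ∑ i, Dv (eX i) (Wof g u i) z := by
  rw [Eof_t hg hu, Finset.sum_congr rfl fun i _ => Wof_x hg hu i z, ← Finset.mul_sum,
    ← mul_sub]
  have := carl_alg (u z) (Dv (eT d) u z) (Dv (eT d) (Fof g) z) (Dv (eT d) g z) (Fof g z)
    (fun i => Dv (eX i) u z) (fun i => Dv (eX i) g z) (fun i => Dv (eX i) (Fof g) z)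
    (fun i => Dv (eX i) (Dv (eX i) u) z) (fun i => Dv (eX i) (Dv (eX i) g) z)
    (fun i => Dv (eX i) (Dv (eX i) (Fof g)) z) (fun i => Dv (eX i) (Dv (eT d) u) z)
    (fun i j => Dv (eX i) (Dv (eX j) u) z) (fun i j => Dv (eX i) (Dv (eX j) g) z)
    (fun i j => Dv_comm hu _ _ z) rfl
  rw [this]
  unfold Iof
  refine mul_le_mul_of_nonneg_left ?_ (Real.exp_pos _).le
  unfold Lof
  set S := ∑ i, Dv (eX i) (Dv (eX i) u) z + ∑ i, Dv (eX i) g z * Dv (eX i) u z - 1 / 2 * Fof g z * u z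
  set Q := Dv (eT d) u z + ∑ i, Dv (eX i) (Dv (eX i) u) z
  nlinarith [sq_nonneg (2 * S - Q)]

lemma zero_near {u : ℝ × EuclideanSpace ℝ (Fin d) → ℝ} {z} (hz : z ∉ tsupport u) :
    u =ᶠ[nhds z] (fun _ => 0) :=
  notMem_tsupport_iff_eventuallyEq.mp hz

lemma u_zero {u : ℝ × EuclideanSpace ℝ (Fin d) → ℝ} {z} (hz : z ∉ tsupport u) :
    u z = 0 ∧ (∀ v, Dv v u z = 0) ∧ (∀ v w, Dv v (Dv w u) z = 0) := by
  have h := zero_near hz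
  refine ⟨h.eq_of_nhds, fun v => ?_, fun v w => ?_⟩
  · rw [Dv_congr h, Dv_zero]
  · have h2 : Dv w u =ᶠ[nhds z] fun _ => 0 := by
      have := Dv_congr_ev h w
      filter_upwards [this] with y hy
      rw [hy, Dv_zero]
    rw [Dv_congr h2, Dv_zero]

lemma Eof_zero {g u : ℝ × EuclideanSpace ℝ (Fin d) → ℝ} {z} (hz : z ∉ tsupport u) :
    Eof g u z = 0 := by
  obtain ⟨h0, h1, h2⟩ := u_zero hz
  simp [Eof, h0, h1]

lemma Iof_zero {g u : ℝ × EuclideanSpace ℝ (Fin d) → ℝ} {z} (hz : z ∉ tsupport u) :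
    Iof g u z = 0 := by
  obtain ⟨h0, h1, h2⟩ := u_zero hz
  simp [Iof, Lof, h0, h1, h2]

lemma Wof_zero {g u : ℝ × EuclideanSpace ℝ (Fin d) → ℝ} {z} (hz : z ∉ tsupport u) (i) :
    Wof g u i z = 0 := by
  obtain ⟨h0, h1, h2⟩ := u_zero hz
  simp [Wof, h0, h1]

lemma cpt_of {u f : ℝ × EuclideanSpace ℝ (Fin d) → ℝ} (hu : HasCompactSupport u)
    (h : ∀ z, z ∉ tsupport u → f z = 0) : HasCompactSupport f :=
  HasCompactSupport.intro hu (fun z hz => h z hz)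

lemma slice_cpt {f : ℝ × EuclideanSpace ℝ (Fin d) → ℝ} (hf : HasCompactSupport f) (t : ℝ) :
    HasCompactSupport (fun x => f (t, x)) := by
  refine HasCompactSupport.intro (K := Prod.snd '' tsupport f) (hf.image continuous_snd) ?_
  intro x hx
  by_contra hne
  exact hx ⟨(t, x), subset_tsupport f hne, rfl⟩

lemma slice_deriv {f : ℝ × EuclideanSpace ℝ (Fin d) → ℝ} {t : ℝ} {x : EuclideanSpace ℝ (Fin d)}
    (hf : DifferentiableAt ℝ f (t, x)) (v : EuclideanSpace ℝ (Fin d)) :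
    fderiv ℝ (fun y => f (t, y)) x v = Dv (0, v) f (t, x) := by
  have h1 : HasFDerivAt (fun y : EuclideanSpace ℝ (Fin d) => (t, y))
      (ContinuousLinearMap.inr ℝ ℝ (EuclideanSpace ℝ (Fin d))) x := hasFDerivAt_prodMk_right t x
  have h2 := HasFDerivAt.comp x hf.hasFDerivAt h1
  have h3 : fderiv ℝ (fun y => f (t, y)) x = _ := h2.fderiv
  rw [h3]
  simp [Dv]

lemma slice_derivT {f : ℝ × EuclideanSpace ℝ (Fin d) → ℝ} {t : ℝ} {x : EuclideanSpace ℝ (Fin d)}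
    (hf : DifferentiableAt ℝ f (t, x)) :
    HasDerivAt (fun s => f (s, x)) (Dv (eT d) f (t, x)) t := by
  have h1 : HasFDerivAt (fun s : ℝ => (s, x))
      (ContinuousLinearMap.inl ℝ ℝ (EuclideanSpace ℝ (Fin d))) t := hasFDerivAt_prodMk_left t x
  have h2 := HasFDerivAt.comp t hf.hasFDerivAt h1
  have h3 := h2.hasDerivAt
  have h4 : Dv (eT d) f (t, x) =
      ((fderiv ℝ f (t, x)).comp (ContinuousLinearMap.inl ℝ ℝ (EuclideanSpace ℝ (Fin d)))) 1 := by
    simp [Dv, eT]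
  rw [h4]
  exact h3

lemma int_div {W : ℝ × EuclideanSpace ℝ (Fin d) → ℝ} (hW : ContDiff ℝ ∞ W)
    (hc : HasCompactSupport W) (i : Fin d) (t : ℝ) :
    ∫ x, Dv (eX i) W (t, x) = 0 := by
  have hs : ContDiff ℝ ∞ (fun x : EuclideanSpace ℝ (Fin d) => W (t, x)) :=
    hW.comp (contDiff_const.prodMk contDiff_id)
  have hsc := slice_cpt hc t
  have e : ∀ x, Dv (eX i) W (t, x) =
      fderiv ℝ (fun y => W (t, y)) x (EuclideanSpace.single i 1) := fun x =>
    (slice_deriv (smooth_diff hW _) _).symm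
  simp only [e]
  have hIntg : Integrable (fun x => fderiv ℝ (fun y => W (t, y)) x (EuclideanSpace.single i 1)) :=
    ((Dv_smooth hs _).continuous).integrable_of_hasCompactSupport (Dv_compact hsc _)
  have := integral_mul_fderiv_eq_neg_fderiv_mul_of_integrable (μ := (volume : Measure (EuclideanSpace ℝ (Fin d))))
    (f := fun _ => (1:ℝ)) (g := fun y => W (t, y)) (v := EuclideanSpace.single i 1)
    (by simp) (by simpa using hIntg)
    (by simpa using hs.continuous.integrable_of_hasCompactSupport hsc)
    (fun x _ => by fun_prop) (fun x _ => smooth_diff hs x)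
  simpa using this

theorem carleman {g u : ℝ × EuclideanSpace ℝ (Fin d) → ℝ} (hg : ContDiff ℝ ∞ g)
    (hu : ContDiff ℝ ∞ u) (hc : HasCompactSupport u) {a b : ℝ} (hab : a ≤ b) :
    ∫ z in (Icc a b) ×ˢ univ, Iof g u z ≤ (∫ x, Eof g u (b, x)) - ∫ x, Eof g u (a, x) := by
  have hE := Eof_smooth hg hu
  have hEc : HasCompactSupport (Eof g u) := cpt_of hc fun z hz => Eof_zero hz
  have hI := Iof_smooth hg hu
  have hIc : HasCompactSupport (Iof g u) := cpt_of hc fun z hz => Iof_zero hz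
  have hW := Wof_smooth hg hu
  have hWc : ∀ i, HasCompactSupport (Wof g u i) := fun i => cpt_of hc fun z hz => Wof_zero hz i
  have hdE : Integrable (Dv (eT d) (Eof g u)) :=
    (Dv_smooth hE _).continuous.integrable_of_hasCompactSupport (Dv_compact hEc _)
  have hdW : ∀ i, Integrable (Dv (eX i) (Wof g u i)) := fun i =>
    (Dv_smooth (hW i) _).continuous.integrable_of_hasCompactSupport (Dv_compact (hWc i) _)
  have hII : Integrable (Iof g u) := hI.continuous.integrable_of_hasCompactSupport hIc
  have step1 : ∫ z in (Icc a b) ×ˢ univ, Iof g u z ≤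
      ∫ z in (Icc a b) ×ˢ univ, (Dv (eT d) (Eof g u) z - ∑ i, Dv (eX i) (Wof g u i) z) := by
    apply integral_mono hII.integrableOn
    · exact (hdE.sub (integrable_finsetSum _ fun i _ => hdW i)).integrableOn
    · intro z; exact carl_pt hg hu z
  refine step1.trans (le_of_eq ?_)
  rw [integral_sub hdE.integrableOn (integrable_finsetSum _ fun i _ => (hdW i).integrableOn),
    integral_finsetSum _ fun i _ => (hdW i).integrableOn]
  have hz : ∀ i, ∫ z in (Icc a b) ×ˢ univ, Dv (eX i) (Wof g u i) z = 0 := by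
    intro i
    rw [Measure.volume_eq_prod, setIntegral_prod _ (by rw [← Measure.volume_eq_prod]; exact (hdW i).integrableOn)]
    simp [int_div (hW i) (hWc i) i]
  simp only [hz, Finset.sum_const_zero, sub_zero]
  rw [Measure.volume_eq_prod, ← Measure.prod_restrict, Measure.restrict_univ]
  rw [integral_prod_symm]
  · rw [← integral_sub]
    · refine integral_congr_ae (Filter.Eventually.of_forall fun x => ?_)
      simp only
      rw [integral_Icc_eq_integral_Ioc, ← intervalIntegral.integral_of_le hab]
      refine intervalIntegral.integral_eq_sub_of_hasDerivAt
        (f := fun t => Eof g u (t, x)) (fun t _ => slice_derivT (smooth_diff hE _)) ?_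
      apply Continuous.intervalIntegrable
      exact (Dv_smooth hE _).continuous.comp (by fun_prop)
    · exact (hE.continuous.comp (by fun_prop)).integrable_of_hasCompactSupport (slice_cpt hEc b)
    · exact (hE.continuous.comp (by fun_prop)).integrable_of_hasCompactSupport (slice_cpt hEc a)
  · have := hdE.integrableOn (s := (Icc a b) ×ˢ univ)
    rw [IntegrableOn, Measure.volume_eq_prod, ← Measure.prod_restrict, Measure.restrict_univ] at this
    exact this
end carl


section HDsec
variable {H : Type*} [NormedAddCommGroup H] [NormedSpace ℝ H]

def HD (v : H) (f : H → ℝ) (z : H) (c : ℝ) : Prop := DifferentiableAt ℝ f z ∧ Dv v f z = c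

lemma HD.add {v : H} {f g : H → ℝ} {z : H} {a b : ℝ} (hf : HD v f z a) (hg : HD v g z b) :
    HD v (fun z => f z + g z) z (a + b) :=
  ⟨hf.1.fun_add hg.1, by rw [Dv_add hf.1 hg.1, hf.2, hg.2]⟩

lemma HD.sub {v : H} {f g : H → ℝ} {z : H} {a b : ℝ} (hf : HD v f z a) (hg : HD v g z b) :
    HD v (fun z => f z - g z) z (a - b) :=
  ⟨hf.1.fun_sub hg.1, by rw [Dv_sub hf.1 hg.1, hf.2, hg.2]⟩

lemma HD.mul {v : H} {f g : H → ℝ} {z : H} {a b : ℝ} (hf : HD v f z a) (hg : HD v g z b) :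
    HD v (fun z => f z * g z) z (a * g z + f z * b) :=
  ⟨hf.1.fun_mul hg.1, by rw [Dv_mul hf.1 hg.1, hf.2, hg.2]⟩

lemma HD.const (v : H) (c : ℝ) (z : H) : HD v (fun _ => c) z 0 :=
  ⟨by fun_prop, by simp [Dv]⟩

lemma HD.cmul {v : H} {f : H → ℝ} {z : H} {a : ℝ} (c : ℝ) (hf : HD v f z a) :
    HD v (fun z => c * f z) z (c * a) :=
  ⟨hf.1.const_mul c, by rw [Dv_cmul hf.1, hf.2]⟩

lemma HD.comp {v : H} {f : H → ℝ} {z : H} {a : ℝ} {φ : ℝ → ℝ} {b : ℝ} (hφ : HasDerivAt φ b (f z))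
    (hf : HD v f z a) :
    HD v (fun z => φ (f z)) z (b * a) := by
  have h := hφ.hasFDerivAt.comp z hf.1.hasFDerivAt
  refine ⟨h.differentiableAt, ?_⟩
  have h2 : fderiv ℝ (fun z => φ (f z)) z = _ := h.fderiv
  have h3 := hf.2
  unfold Dv at *
  rw [h2]
  simp [h3, mul_comm]

lemma HD.val {v : H} {f : H → ℝ} {z : H} {a b : ℝ} (hf : HD v f z a) (h : a = b) :
    HD v f z b := h ▸ hf

lemma HD.congr {v : H} {f g : H → ℝ} {z : H} {a : ℝ} (hf : HD v f z a) (h : g =ᶠ[nhds z] f) :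
    HD v g z a := ⟨hf.1.congr_of_eventuallyEq h, by rw [Dv_congr h, hf.2]⟩
end HDsec

section weight
variable {d : ℕ}

/-- weighted square sum -/
def R2 (p : Fin d → ℝ) (x : EuclideanSpace ℝ (Fin d)) : ℝ := ∑ i, p i * x i ^ 2

lemma HD_coord_X (i j : Fin d) (z : ℝ × EuclideanSpace ℝ (Fin d)) :
    HD (eX i) (fun z : ℝ × EuclideanSpace ℝ (Fin d) => z.2 j) z (if j = i then 1 else 0) := by
  have h : DifferentiableAt ℝ (fun z : ℝ × EuclideanSpace ℝ (Fin d) => z.2 j) z := by fun_prop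
  refine ⟨h, Dv_of_line h ?_⟩
  have : HasDerivAt (fun s : ℝ => z.2 j + s * (if j = i then (1:ℝ) else 0))
      (1 * (if j = i then (1:ℝ) else 0)) 0 := ((hasDerivAt_id 0).mul_const _).const_add _
  simpa [eX, PiLp.single_apply] using this

lemma HD_coord_T (j : Fin d) (z : ℝ × EuclideanSpace ℝ (Fin d)) :
    HD (eT d) (fun z : ℝ × EuclideanSpace ℝ (Fin d) => z.2 j) z 0 := by
  have h : DifferentiableAt ℝ (fun z : ℝ × EuclideanSpace ℝ (Fin d) => z.2 j) z := by fun_prop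
  refine ⟨h, Dv_of_line h ?_⟩
  simpa [eT] using hasDerivAt_const (0:ℝ) (z.2 j)

lemma HD_tau_X (T0 : ℝ) (i : Fin d) (z : ℝ × EuclideanSpace ℝ (Fin d)) :
    HD (eX i) (fun z : ℝ × EuclideanSpace ℝ (Fin d) => T0 - z.1) z 0 := by
  have h : DifferentiableAt ℝ (fun z : ℝ × EuclideanSpace ℝ (Fin d) => T0 - z.1) z := by fun_prop
  refine ⟨h, Dv_of_line h ?_⟩
  simpa [eX] using hasDerivAt_const (0:ℝ) (T0 - z.1)

lemma HD_tau_T (T0 : ℝ) (z : ℝ × EuclideanSpace ℝ (Fin d)) :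
    HD (eT d) (fun z : ℝ × EuclideanSpace ℝ (Fin d) => T0 - z.1) z (-1) := by
  have h : DifferentiableAt ℝ (fun z : ℝ × EuclideanSpace ℝ (Fin d) => T0 - z.1) z := by fun_prop
  refine ⟨h, Dv_of_line h ?_⟩
  have : HasDerivAt (fun s : ℝ => T0 - (z.1 + s)) (-1) 0 :=
    ((hasDerivAt_id (0:ℝ)).const_add z.1).const_sub T0
  simpa [eT] using this

lemma HD_sum {v : ℝ × EuclideanSpace ℝ (Fin d)} {f : Fin d → ℝ × EuclideanSpace ℝ (Fin d) → ℝ}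
    {z} {a : Fin d → ℝ} (hf : ∀ i, HD v (f i) z (a i)) :
    HD v (fun z => ∑ i, f i z) z (∑ i, a i) :=
  ⟨DifferentiableAt.fun_sum fun i _ => (hf i).1, by
    rw [Dv_sum _ fun i _ => (hf i).1]; exact Finset.sum_congr rfl fun i _ => (hf i).2⟩

lemma HD_R2_X (p : Fin d → ℝ) (i : Fin d) (z : ℝ × EuclideanSpace ℝ (Fin d)) :
    HD (eX i) (fun z => R2 p z.2) z (2 * (p i * z.2 i)) := by
  have := HD_sum (fun j => (((HD_coord_X i j z).mul (HD_coord_X i j z)).cmul (p j)))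
  unfold R2
  simp only [pow_two]
  refine this.val ?_
  rw [Finset.sum_eq_single i]
  · simp only [if_true]; ring
  · intro j _ hj; simp [hj]
  · simp

lemma HD_R2_T (p : Fin d → ℝ) (z : ℝ × EuclideanSpace ℝ (Fin d)) :
    HD (eT d) (fun z => R2 p z.2) z 0 := by
  have := HD_sum (fun j => (((HD_coord_T j z).mul (HD_coord_T j z)).cmul (p j)))
  unfold R2
  simp only [pow_two]
  refine this.val ?_
  simp

lemma R2_smooth (p : Fin d → ℝ) : ContDiff ℝ ∞ (fun x : EuclideanSpace ℝ (Fin d) => R2 p x) := by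
  unfold R2; fun_prop

lemma R2_smooth' (p : Fin d → ℝ) :
    ContDiff ℝ ∞ (fun z : ℝ × EuclideanSpace ℝ (Fin d) => R2 p z.2) :=
  (R2_smooth p).comp contDiff_snd

def rr (p : Fin d → ℝ) (z : ℝ × EuclideanSpace ℝ (Fin d)) : ℝ := √(R2 p z.2)
def nu (p : Fin d → ℝ) (z : ℝ × EuclideanSpace ℝ (Fin d)) : ℝ := (√(R2 p z.2))⁻¹

section
variable {p : Fin d → ℝ} {z : ℝ × EuclideanSpace ℝ (Fin d)}

lemma rr_pos (h : 0 < R2 p z.2) : 0 < rr p z := Real.sqrt_pos.2 h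
lemma rr_nu (h : 0 < R2 p z.2) : rr p z * nu p z = 1 := by
  unfold rr nu; exact mul_inv_cancel₀ (Real.sqrt_pos.2 h).ne'
lemma rr_sq (h : 0 < R2 p z.2) : rr p z ^ 2 = R2 p z.2 := Real.sq_sqrt h.le

lemma HD_rr_gen (h : 0 < R2 p z.2) {v : ℝ × EuclideanSpace ℝ (Fin d)} {a : ℝ}
    (ha : HD v (fun z => R2 p z.2) z (2 * a)) : HD v (rr p) z (a * nu p z) := by
  have := HD.comp (φ := Real.sqrt) (f := fun z : ℝ × EuclideanSpace ℝ (Fin d) => R2 p z.2)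
    (Real.hasDerivAt_sqrt h.ne') ha
  refine this.val ?_
  unfold nu
  have := (Real.sqrt_pos.2 h).ne'
  field_simp

lemma HD_rr_X (h : 0 < R2 p z.2) (i : Fin d) :
    HD (eX i) (rr p) z (p i * z.2 i * nu p z) := HD_rr_gen h (HD_R2_X p i z)

lemma HD_rr_T (h : 0 < R2 p z.2) : HD (eT d) (rr p) z 0 :=
  (HD_rr_gen (a := 0) h ((HD_R2_T p z).val (by simp))).val (by simp)

lemma HD_nu_gen (h : 0 < R2 p z.2) {v : ℝ × EuclideanSpace ℝ (Fin d)} {a : ℝ}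
    (ha : HD v (rr p) z a) : HD v (nu p) z (- (nu p z)^2 * a) := by
  have := HD.comp (φ := fun y => y⁻¹) (f := rr p) (hasDerivAt_inv (rr_pos h).ne') ha
  refine this.val ?_
  unfold nu rr
  rw [inv_pow]

lemma HD_nu_X (h : 0 < R2 p z.2) (i : Fin d) :
    HD (eX i) (nu p) z (-(p i * z.2 i * nu p z ^ 3)) := (HD_nu_gen h (HD_rr_X h i)).val (by ring)

lemma HD_nu_T (h : 0 < R2 p z.2) : HD (eT d) (nu p) z 0 :=
  (HD_nu_gen h (HD_rr_T h)).val (by ring)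

end

/-- model weight -/
def g1 (α T0 κ : ℝ) (p : Fin d → ℝ) (z : ℝ × EuclideanSpace ℝ (Fin d)) : ℝ :=
  α * ((T0 - z.1) * rr p z) + κ * R2 (fun _ => 1) z.2

def g1i (α T0 κ : ℝ) (p : Fin d → ℝ) (i : Fin d) (z : ℝ × EuclideanSpace ℝ (Fin d)) : ℝ :=
  (α * p i) * ((T0 - z.1) * (z.2 i * nu p z)) + (2 * κ) * z.2 i

def F1 (α T0 κ : ℝ) (p : Fin d → ℝ) (z : ℝ × EuclideanSpace ℝ (Fin d)) : ℝ :=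
  (-α) * rr p z - (α * (∑ i, p i - 1)) * ((T0 - z.1) * nu p z) - (2 * κ * d)
    - (α^2) * ((T0 - z.1) * (T0 - z.1)) - (4 * α * κ) * ((T0 - z.1) * rr p z)
    - (4 * κ^2) * R2 (fun _ => 1) z.2

def F1i (α T0 κ : ℝ) (p : Fin d → ℝ) (i : Fin d) (z : ℝ × EuclideanSpace ℝ (Fin d)) : ℝ :=
  (-α * p i) * (z.2 i * nu p z)
   + (α * (∑ i, p i - 1) * p i) * ((T0 - z.1) * (z.2 i * (nu p z * (nu p z * nu p z))))
    - (4 * α * κ * p i) * ((T0 - z.1) * (z.2 i * nu p z))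
    - (8 * κ^2) * z.2 i

variable {α T0 κ a : ℝ} {p : Fin d → ℝ} {z : ℝ × EuclideanSpace ℝ (Fin d)}

lemma HD_g1_T (h : 0 < R2 p z.2) : HD (eT d) (g1 α T0 κ p) z (-α * rr p z) :=
  ((((HD_tau_T T0 z).mul (HD_rr_T h)).cmul α).add ((HD_R2_T _ z).cmul κ)).val (by ring)

lemma HD_g1_X (h : 0 < R2 p z.2) (i : Fin d) : HD (eX i) (g1 α T0 κ p) z (g1i α T0 κ p i z) :=
  ((((HD_tau_X T0 i z).mul (HD_rr_X h i)).cmul α).add ((HD_R2_X _ i z).cmul κ)).val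
    (by unfold g1i; ring)

lemma HD_g1i_X (h : 0 < R2 p z.2) (i j : Fin d) : HD (eX j) (g1i α T0 κ p i) z
    (α * (T0 - z.1) * p i * ((if i = j then 1 else 0) * nu p z - z.2 i * (p j * z.2 j) * nu p z ^ 3)
      + 2 * κ * (if i = j then 1 else 0)) :=
  ((((HD_tau_X T0 j z).mul ((HD_coord_X j i z).mul (HD_nu_X h j))).cmul (α * p i)).add
    ((HD_coord_X j i z).cmul (2 * κ))).val (by ring)

lemma HD_F1_T (h : 0 < R2 p z.2) : HD (eT d) (F1 α T0 κ p) z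
    (α * (∑ i, p i - 1) * nu p z + 2 * α^2 * (T0 - z.1) + 4 * α * κ * rr p z) :=
  (((((((HD_rr_T h).cmul (-α)).sub (((HD_tau_T T0 z).mul (HD_nu_T h)).cmul (α * (∑ i, p i - 1)))).sub
    (HD.const _ (2 * κ * d) z)).sub (((HD_tau_T T0 z).mul (HD_tau_T T0 z)).cmul (α^2))).sub
    (((HD_tau_T T0 z).mul (HD_rr_T h)).cmul (4 * α * κ))).sub
    ((HD_R2_T _ z).cmul (4 * κ ^ 2))).val (by ring)

lemma HD_F1_X (h : 0 < R2 p z.2) (i : Fin d) : HD (eX i) (F1 α T0 κ p) z (F1i α T0 κ p i z) :=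
  (((((((HD_rr_X h i).cmul (-α)).sub (((HD_tau_X T0 i z).mul (HD_nu_X h i)).cmul (α * (∑ i, p i - 1)))).sub
    (HD.const _ (2 * κ * d) z)).sub (((HD_tau_X T0 i z).mul (HD_tau_X T0 i z)).cmul (α^2))).sub
    (((HD_tau_X T0 i z).mul (HD_rr_X h i)).cmul (4 * α * κ))).sub
    ((HD_R2_X _ i z).cmul (4 * κ ^ 2))).val (by unfold F1i; ring)

lemma HD_F1i_X (h : 0 < R2 p z.2) (i : Fin d) : HD (eX i) (F1i α T0 κ p i) z
    (-α * p i * (nu p z - p i * z.2 i ^ 2 * nu p z ^ 3)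
    + α * (∑ i, p i - 1) * p i * (T0 - z.1) * (nu p z ^ 3 - 3 * (p i * z.2 i ^ 2 * nu p z ^ 5))
    - 4 * α * κ * p i * (T0 - z.1) * (nu p z - p i * z.2 i ^ 2 * nu p z ^ 3) - 8 * κ ^ 2) := by
  have hn := HD_nu_X h i
  have hx := HD_coord_X i i z
  have ht := HD_tau_X T0 i z
  exact (((((hx.mul hn).cmul (-α * p i)).add
    ((ht.mul (hx.mul (hn.mul (hn.mul hn)))).cmul (α * (∑ i, p i - 1) * p i))).sub
    ((ht.mul (hx.mul hn)).cmul (4 * α * κ * p i))).sub (hx.cmul (8 * κ ^ 2))).val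
    (by simp only [if_true]; ring)

/-- cutoff square root -/
def hfun (a y : ℝ) : ℝ := smoothTransition (2 * y / a - 1) * √y

lemma hfun_smooth (ha : 0 < a) : ContDiff ℝ ∞ (hfun a) := by
  rw [contDiff_iff_contDiffAt]
  intro y
  by_cases hy : y < a / 2
  · have : hfun a =ᶠ[nhds y] fun _ => 0 := by
      filter_upwards [Iio_mem_nhds hy] with w hw
      have hw' : w < a / 2 := hw
      unfold hfun
      rw [smoothTransition.zero_of_nonpos, zero_mul]
      rw [sub_nonpos, div_le_one ha]; linarith
    exact contDiffAt_const.congr_of_eventuallyEq this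
  · have hy0 : y ≠ 0 := by
      have : 0 < y := by linarith
      exact this.ne'
    unfold hfun
    refine ContDiffAt.mul ?_ (Real.contDiffAt_sqrt hy0)
    exact ContDiffAt.comp y (smoothTransition.contDiffAt) (by fun_prop)

lemma hfun_eq (ha : 0 < a) {y : ℝ} (hy : a ≤ y) : hfun a y = √y := by
  unfold hfun
  rw [smoothTransition.one_of_one_le, one_mul]
  rw [le_sub_iff_add_le, le_div_iff₀ ha]; linarith

/-- the smooth weight -/
def gw (α T0 κ a : ℝ) (p : Fin d → ℝ) (z : ℝ × EuclideanSpace ℝ (Fin d)) : ℝ :=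
  α * ((T0 - z.1) * hfun a (R2 p z.2)) + κ * R2 (fun _ => 1) z.2

lemma gw_smooth (ha : 0 < a) : ContDiff ℝ ∞ (gw α T0 κ a p) := by
  unfold gw
  have h1 : ContDiff ℝ ∞ (fun z : ℝ × EuclideanSpace ℝ (Fin d) => hfun a (R2 p z.2)) :=
    (hfun_smooth ha).comp (R2_smooth' p)
  have h2 := R2_smooth' (d := d) (fun _ => 1)
  fun_prop

lemma R2_nhds (hz : a < R2 p z.2) : ∀ᶠ y in nhds z, a < R2 p y.2 :=
  ((R2_smooth' p).continuous.continuousAt).eventually (Ioi_mem_nhds hz)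

lemma gw_eq (ha : 0 < a) (hz : a < R2 p z.2) : gw α T0 κ a p =ᶠ[nhds z] g1 α T0 κ p := by
  filter_upwards [R2_nhds hz] with y hy
  simp [gw, g1, rr, hfun_eq ha hy.le]

lemma gw_X (ha : 0 < a) (hz : a < R2 p z.2) (i : Fin d) :
    Dv (eX i) (gw α T0 κ a p) z = g1i α T0 κ p i z :=
  ((HD_g1_X (ha.trans hz) i).congr (gw_eq ha hz)).2

lemma gw_X_ev (ha : 0 < a) (hz : a < R2 p z.2) (i : Fin d) :
    Dv (eX i) (gw α T0 κ a p) =ᶠ[nhds z] g1i α T0 κ p i := by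
  filter_upwards [R2_nhds hz] with y hy
  exact gw_X ha hy i

lemma gw_XX (ha : 0 < a) (hz : a < R2 p z.2) (i j : Fin d) :
    Dv (eX j) (Dv (eX i) (gw α T0 κ a p)) z =
    (α * (T0 - z.1) * p i * ((if i = j then 1 else 0) * nu p z - z.2 i * (p j * z.2 j) * nu p z ^ 3)
      + 2 * κ * (if i = j then 1 else 0)) :=
  ((HD_g1i_X (ha.trans hz) i j).congr (gw_X_ev ha hz i)).2

lemma gw_T (ha : 0 < a) (hz : a < R2 p z.2) :
    Dv (eT d) (gw α T0 κ a p) z = -α * rr p z :=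
  ((HD_g1_T (ha.trans hz)).congr (gw_eq ha hz)).2

lemma sum_R2 (hp : ∀ i, p i * p i = p i) (h : 0 < R2 p z.2) :
    ∑ i, p i * z.2 i ^ 2 = rr p z ^ 2 := by rw [rr_sq h]; rfl

lemma Fof_gw (hp : ∀ i, p i * p i = p i) (ha : 0 < a) (hz : a < R2 p z.2) :
    Fof (gw α T0 κ a p) z = F1 α T0 κ p z := by
  have hpos := ha.trans hz
  have hrn := rr_nu hpos
  have hs := sum_R2 hp hpos
  unfold Fof
  simp only [gw_XX ha hz, gw_T ha hz, gw_X ha hz, if_true]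
  have e1 : ∀ i, (α * (T0 - z.1) * p i * (1 * nu p z - z.2 i * (p i * z.2 i) * nu p z ^ 3)
      + 2 * κ * 1) = (α * (T0 - z.1) * nu p z) * p i
        - (α * (T0 - z.1) * nu p z ^ 3) * (p i * z.2 i ^ 2) + 2 * κ := by
    intro i; linear_combination (-(α * (T0 - z.1) * nu p z ^ 3) * z.2 i ^ 2) * hp i
  have e2 : ∀ i, g1i α T0 κ p i z ^ 2 = (α^2 * (T0 - z.1)^2 * nu p z ^ 2
      + 4 * α * κ * (T0 - z.1) * nu p z) * (p i * z.2 i ^ 2) + 4 * κ ^ 2 * (1 * z.2 i ^ 2) := by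
    intro i; unfold g1i
    linear_combination (α^2 * (T0 - z.1)^2 * nu p z ^ 2 * z.2 i ^ 2) * hp i
  simp only [e1, e2, Finset.sum_add_distrib, Finset.sum_sub_distrib, ← Finset.mul_sum, hs]
  simp only [Finset.sum_const, Finset.card_univ, Fintype.card_fin, nsmul_eq_mul]
  unfold F1 R2
  have h2 : nu p z ^ 3 * rr p z ^ 2 = nu p z := by
    calc _ = nu p z * (rr p z * nu p z) ^ 2 := by ring
      _ = _ := by rw [hrn]; ring
  have h3 : nu p z ^ 2 * rr p z ^ 2 = 1 := by
    calc _ = (rr p z * nu p z) ^ 2 := by ring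
      _ = _ := by rw [hrn]; ring
  have h4 : nu p z * rr p z ^ 2 = rr p z := by
    calc _ = rr p z * (rr p z * nu p z) := by ring
      _ = _ := by rw [hrn]; ring
  simp only [one_mul]
  linear_combination (α * (T0 - z.1)) * h2 - α^2 * (T0 - z.1)^2 * h3 - (4 * α * κ * (T0 - z.1)) * h4

lemma LFof_gw (hp : ∀ i, p i * p i = p i) (ha : 0 < a) (hz : a < R2 p z.2) :
    Lof (Fof (gw α T0 κ a p)) z = 2 * α ^ 2 * (T0 - z.1) + 4 * α * κ * rr p z
      + α * (T0 - z.1) * ((∑ i, p i - 1) * (∑ i, p i - 3)) * nu p z ^ 3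
      - 4 * α * κ * (T0 - z.1) * (∑ i, p i - 1) * nu p z - 8 * d * κ ^ 2 := by
  have hpos := ha.trans hz
  have hrn := rr_nu hpos
  have hs := sum_R2 hp hpos
  have hev : ∀ y : ℝ × EuclideanSpace ℝ (Fin d), a < R2 p y.2 →
      Fof (gw α T0 κ a p) =ᶠ[nhds y] F1 α T0 κ p := by
    intro y hy
    filter_upwards [R2_nhds hy] with w hw
    exact Fof_gw hp ha hw
  have hX : ∀ i, Dv (eX i) (Fof (gw α T0 κ a p)) =ᶠ[nhds z] F1i α T0 κ p i := by
    intro i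
    filter_upwards [R2_nhds hz] with y hy
    exact ((HD_F1_X (ha.trans hy) i).congr (hev y hy)).2
  have hXX : ∀ i, Dv (eX i) (Dv (eX i) (Fof (gw α T0 κ a p))) z = _ := fun i =>
    ((HD_F1i_X hpos i).congr (hX i)).2
  unfold Lof
  simp only [hXX, ((HD_F1_T hpos).congr (hev z hz)).2]
  set n := ∑ i, p i with hn
  have e1 : ∀ i, (-α * p i * (nu p z - p i * z.2 i ^ 2 * nu p z ^ 3)
    + α * (n - 1) * p i * (T0 - z.1) * (nu p z ^ 3 - 3 * (p i * z.2 i ^ 2 * nu p z ^ 5))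
    - 4 * α * κ * p i * (T0 - z.1) * (nu p z - p i * z.2 i ^ 2 * nu p z ^ 3) - 8 * κ ^ 2)
    = (-α * nu p z + α * (n - 1) * (T0 - z.1) * nu p z ^ 3 - 4 * α * κ * (T0 - z.1) * nu p z) * p i
      + (α * nu p z ^ 3 - 3 * α * (n - 1) * (T0 - z.1) * nu p z ^ 5
        + 4 * α * κ * (T0 - z.1) * nu p z ^ 3) * (p i * z.2 i ^ 2) - 8 * κ ^ 2 := by
    intro i
    linear_combination (z.2 i ^ 2 * (α * nu p z ^ 3 - 3 * α * (n - 1) * (T0 - z.1) * nu p z ^ 5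
        + 4 * α * κ * (T0 - z.1) * nu p z ^ 3)) * hp i
  simp only [e1, Finset.sum_add_distrib, Finset.sum_sub_distrib, ← Finset.mul_sum, hs, ← hn]
  simp only [Finset.sum_const, Finset.card_univ, Fintype.card_fin, nsmul_eq_mul]
  have h2 : nu p z ^ 3 * rr p z ^ 2 = nu p z := by
    calc _ = nu p z * (rr p z * nu p z) ^ 2 := by ring
      _ = _ := by rw [hrn]; ring
  have h3 : nu p z ^ 5 * rr p z ^ 2 = nu p z ^ 3 := by
    calc _ = nu p z ^ 3 * (rr p z * nu p z) ^ 2 := by ring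
      _ = _ := by rw [hrn]; ring
  linear_combination (α + 4 * α * κ * (T0 - z.1)) * h2 - (3 * α * (n - 1) * (T0 - z.1)) * h3

lemma hess_gw (hp : ∀ i, p i * p i = p i) (ha : 0 < a) (hz : a < R2 p z.2) (hα : 0 ≤ α)
    (ht : z.1 ≤ T0) (ξ : Fin d → ℝ) :
    2 * κ * ∑ i, ξ i ^ 2 ≤
      ∑ i, ∑ j, Dv (eX i) (Dv (eX j) (gw α T0 κ a p)) z * (ξ i * ξ j) := by
  have hpos := ha.trans hz
  have hrn := rr_nu hpos
  have hs := sum_R2 hp hpos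
  simp only [gw_XX ha hz]
  have e1 : ∀ i j : Fin d, (α * (T0 - z.1) * p j * ((if j = i then 1 else 0) * nu p z
      - z.2 j * (p i * z.2 i) * nu p z ^ 3) + 2 * κ * (if j = i then 1 else 0)) * (ξ i * ξ j)
      = (if j = i then (α * (T0 - z.1) * nu p z * (p j * ξ j ^ 2) + 2 * κ * ξ j ^ 2) else 0)
        - α * (T0 - z.1) * nu p z ^ 3 * ((p i * z.2 i * ξ i) * (p j * z.2 j * ξ j)) := by
    intro i j
    split_ifs with h
    · subst h; ring
    · ring
  simp only [e1, Finset.sum_sub_distrib, Finset.sum_ite_eq', Finset.mem_univ, if_true,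
    ← Finset.mul_sum, ← Finset.sum_mul, Finset.sum_add_distrib]
  have cs : (∑ i, p i * z.2 i * ξ i) ^ 2 ≤ rr p z ^ 2 * ∑ i, p i * ξ i ^ 2 := by
    have := Finset.sum_mul_sq_le_sq_mul_sq Finset.univ (fun i => p i * z.2 i) (fun i => p i * ξ i)
    have e : ∀ c : Fin d → ℝ, ∑ i, (p i * c i) ^ 2 = ∑ i, p i * c i ^ 2 := fun c =>
      Finset.sum_congr rfl fun i _ => by linear_combination (c i ^ 2) * hp i
    rw [e, e, hs] at this
    refine le_trans (le_of_eq ?_) this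
    congr 1
    refine Finset.sum_congr rfl fun i _ => by linear_combination -(z.2 i * ξ i) * hp i
  have hnu : 0 < nu p z := inv_pos.2 (Real.sqrt_pos.2 hpos)
  have h2 : nu p z ^ 3 * rr p z ^ 2 = nu p z := by
    calc _ = nu p z * (rr p z * nu p z) ^ 2 := by ring
      _ = _ := by rw [hrn]; ring
  have hτ : 0 ≤ α * (T0 - z.1) := mul_nonneg hα (by linarith)
  have := mul_le_mul_of_nonneg_left cs (mul_nonneg hτ (pow_pos hnu 3).le)
  have e4 : α * (T0 - z.1) * nu p z ^ 3 * (rr p z ^ 2 * ∑ i, p i * ξ i ^ 2) =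
     α * (T0 - z.1) * nu p z * ∑ i, p i * ξ i ^ 2 := by
    linear_combination (α * (T0 - z.1) * ∑ i, p i * ξ i ^ 2) * h2
  rw [e4] at this
  nlinarith
end weight


section cutoffs
variable {d : ℕ}

lemma k_bounds {k : ℝ → ℝ} (hk : ContDiff ℝ ∞ k) (hc : HasCompactSupport (deriv k)) :
    ∃ M : ℝ, 0 ≤ M ∧ ∀ y, |deriv k y| ≤ M ∧ |y * deriv k y ^ 2| ≤ M ∧ |y * deriv (deriv k) y| ≤ M := by
  have h1 : ContDiff ℝ ∞ (deriv k) := by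
    have := (contDiff_infty_iff_deriv.1 hk).2
    exact this
  have h2 : ContDiff ℝ ∞ (deriv (deriv k)) := (contDiff_infty_iff_deriv.1 h1).2
  obtain ⟨M1, hM1⟩ := hc.exists_bound_of_continuous h1.continuous
  obtain ⟨M2, hM2⟩ := HasCompactSupport.exists_bound_of_continuous
    (f := fun y => y * deriv k y ^ 2) (by
      refine HasCompactSupport.intro hc fun y hy => ?_
      rw [image_eq_zero_of_notMem_tsupport hy]; simp)
    (continuous_id.mul (h1.continuous.pow 2))
  obtain ⟨M3, hM3⟩ := HasCompactSupport.exists_bound_of_continuous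
    (f := fun y => y * deriv (deriv k) y) (by
      refine HasCompactSupport.intro hc.deriv fun y hy => ?_
      rw [image_eq_zero_of_notMem_tsupport hy]; simp)
    (continuous_id.mul h2.continuous)
  simp only [Real.norm_eq_abs] at hM1 hM2 hM3
  refine ⟨max M1 (max M2 M3), le_trans ((abs_nonneg _).trans (hM1 0)) (le_max_left _ _), fun y =>
    ⟨(hM1 y).trans (le_max_left _ _), (hM2 y).trans ((le_max_left _ _).trans (le_max_right _ _)),
    (hM3 y).trans ((le_max_right _ _).trans (le_max_right _ _))⟩⟩

def k1 (y : ℝ) : ℝ := smoothTransition (y - 2)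
def k2 (y : ℝ) : ℝ := smoothTransition (3 - 6 * y)

lemma k1_smooth : ContDiff ℝ ∞ k1 := smoothTransition.contDiff.comp (by fun_prop)
lemma k2_smooth : ContDiff ℝ ∞ k2 := smoothTransition.contDiff.comp (by fun_prop)

lemma deriv_cpt {k : ℝ → ℝ} {l r c e : ℝ} (h1 : ∀ y < l, k y = c) (h2 : ∀ y, r < y → k y = e) :
    HasCompactSupport (deriv k) := by
  refine HasCompactSupport.intro (isCompact_Icc (a := l) (b := r)) fun y hy => ?_
  by_cases hyl : y < l
  · have : k =ᶠ[nhds y] fun _ => c := by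
      filter_upwards [Iio_mem_nhds hyl] with w hw using h1 w hw
    rw [this.deriv_eq]; simp
  · have hyr : r < y := by
      by_contra hcon
      exact hy ⟨not_lt.1 hyl, not_lt.1 hcon⟩
    have : k =ᶠ[nhds y] fun _ => e := by
      filter_upwards [Ioi_mem_nhds hyr] with w hw using h2 w hw
    rw [this.deriv_eq]; simp

lemma k1_cpt : HasCompactSupport (deriv k1) :=
  deriv_cpt (l := 2) (r := 3) (c := 0) (e := 1)
    (fun y hy => smoothTransition.zero_of_nonpos (by linarith))
    (fun y hy => smoothTransition.one_of_one_le (by linarith))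

lemma k2_cpt : HasCompactSupport (deriv k2) :=
  deriv_cpt (l := 1/3) (r := 1/2) (c := 1) (e := 0)
    (fun y hy => smoothTransition.one_of_one_le (by linarith))
    (fun y hy => smoothTransition.zero_of_nonpos (by linarith))

/-- bounded second-order data of a function at scale `m` -/
def Bd (m : ℝ) (f : ℝ × EuclideanSpace ℝ (Fin d) → ℝ) : Prop :=
  ContDiff ℝ ∞ f ∧ ∀ z, 0 ≤ f z ∧ f z ≤ 1 ∧ Dv (eT d) f z = 0 ∧
    ∀ i, (Dv (eX i) f z) ^ 2 ≤ m ∧ |Dv (eX i) (Dv (eX i) f) z| ≤ m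

lemma k_Bd {k : ℝ → ℝ} (hk : ContDiff ℝ ∞ k) (h01 : ∀ y, 0 ≤ k y ∧ k y ≤ 1)
    (hc : HasCompactSupport (deriv k)) :
    ∃ K : ℝ, 0 ≤ K ∧ ∀ (p : Fin d → ℝ), (∀ i, p i * p i = p i) → ∀ c : ℝ, 0 ≤ c →
      Bd (K * c) (fun z : ℝ × EuclideanSpace ℝ (Fin d) => k (c * R2 p z.2)) := by
  obtain ⟨M, hM0, hM⟩ := k_bounds hk hc
  refine ⟨6 * M, by positivity, fun p hp c hc0 => ?_⟩
  have h1 : ContDiff ℝ ∞ (deriv k) := (contDiff_infty_iff_deriv.1 hk).2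
  have hp0 : ∀ i, 0 ≤ p i := fun i => by rw [← hp i]; exact mul_self_nonneg _
  have hp1 : ∀ i, p i ≤ 1 := fun i => by nlinarith [hp i, hp0 i]
  have hle : ∀ (x : EuclideanSpace ℝ (Fin d)) i, p i * x i ^ 2 ≤ R2 p x := fun x i =>
    Finset.single_le_sum (f := fun i => p i * x i ^ 2)
      (fun j _ => mul_nonneg (hp0 j) (sq_nonneg _)) (Finset.mem_univ i)
  have hd : ∀ i z, HD (eX i) (fun z : ℝ × EuclideanSpace ℝ (Fin d) => k (c * R2 p z.2)) z
      (deriv k (c * R2 p z.2) * ((2 * c * p i) * z.2 i)) := by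
    intro i z
    have hkd : HasDerivAt k (deriv k (c * R2 p z.2)) (c * R2 p z.2) :=
      ((hk.differentiable (by simp)) _).hasDerivAt
    exact (HD.comp (f := fun z : ℝ × EuclideanSpace ℝ (Fin d) => c * R2 p z.2) hkd
      ((HD_R2_X p i z).cmul c)).val (by ring)
  have hdd : ∀ i z, Dv (eX i) (Dv (eX i) (fun z : ℝ × EuclideanSpace ℝ (Fin d) => k (c * R2 p z.2))) z
      = deriv (deriv k) (c * R2 p z.2) * (4 * c * (c * (p i * z.2 i ^ 2)))
        + deriv k (c * R2 p z.2) * (2 * c * p i) := by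
    intro i z
    have e : Dv (eX i) (fun z : ℝ × EuclideanSpace ℝ (Fin d) => k (c * R2 p z.2)) =
       fun z => deriv k (c * R2 p z.2) * ((2 * c * p i) * z.2 i) := funext fun z => (hd i z).2
    rw [e]
    have hkd : HasDerivAt (deriv k) (deriv (deriv k) (c * R2 p z.2)) (c * R2 p z.2) :=
      ((h1.differentiable (by simp)) _).hasDerivAt
    have h := (HD.comp (f := fun z : ℝ × EuclideanSpace ℝ (Fin d) => c * R2 p z.2) hkd
      ((HD_R2_X p i z).cmul c)).mul ((HD_coord_X i i z).cmul (2 * c * p i))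
    rw [h.2]
    simp only [if_true]
    linear_combination (4 * c ^ 2 * z.2 i ^ 2 * deriv (deriv k) (c * R2 p z.2)) * hp i
  refine ⟨hk.comp (contDiff_const.mul (R2_smooth' p)), fun z => ⟨(h01 _).1, (h01 _).2, ?_, fun i => ?_⟩⟩
  · have hkd : HasDerivAt k (deriv k (c * R2 p z.2)) (c * R2 p z.2) :=
      ((hk.differentiable (by simp)) _).hasDerivAt
    exact ((HD.comp (f := fun z : ℝ × EuclideanSpace ℝ (Fin d) => c * R2 p z.2) hkd
      ((HD_R2_T p z).cmul c)).val (by ring)).2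
  · obtain ⟨hb1, hb2, hb3⟩ := hM (c * R2 p z.2)
    have hR : 0 ≤ p i * z.2 i ^ 2 := mul_nonneg (hp0 i) (sq_nonneg _)
    have hR2 := hle z.2 i
    set y := c * R2 p z.2 with hy
    have hyy : c * (p i * z.2 i ^ 2) ≤ y := mul_le_mul_of_nonneg_left hR2 hc0
    have hyy0 : 0 ≤ c * (p i * z.2 i ^ 2) := mul_nonneg hc0 hR
    constructor
    · rw [(hd i z).2]
      have e : (deriv k y * (2 * c * p i * z.2 i)) ^ 2 =
          4 * c * ((c * (p i * z.2 i ^ 2)) * deriv k y ^ 2) := by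
        linear_combination (4 * c ^ 2 * z.2 i ^ 2 * deriv k y ^ 2) * hp i
      rw [e]
      have h3 : (c * (p i * z.2 i ^ 2)) * deriv k y ^ 2 ≤ M :=
        (mul_le_mul_of_nonneg_right hyy (sq_nonneg _)).trans ((le_abs_self _).trans hb2)
      nlinarith
    · rw [hdd]
      have h3 : |deriv (deriv k) y * (4 * c * (c * (p i * z.2 i ^ 2)))| ≤ 4 * c * M := by
        have : |deriv (deriv k) y * (c * (p i * z.2 i ^ 2))| ≤ M := by
          refine le_trans ?_ hb3
          rw [mul_comm, abs_mul _ (deriv (deriv k) y), abs_mul y, abs_of_nonneg hyy0,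
            abs_of_nonneg (hyy0.trans hyy)]
          exact mul_le_mul_of_nonneg_right hyy (abs_nonneg _)
        have e : deriv (deriv k) y * (4 * c * (c * (p i * z.2 i ^ 2))) =
          (4 * c) * (deriv (deriv k) y * (c * (p i * z.2 i ^ 2))) := by ring
        rw [e, abs_mul, abs_of_nonneg (by positivity : (0:ℝ) ≤ 4 * c)]
        exact mul_le_mul_of_nonneg_left this (by positivity)
      have h4 : |deriv k y * (2 * c * p i)| ≤ 2 * c * M := by
        rw [abs_mul, abs_of_nonneg (by have := hp0 i; positivity : (0:ℝ) ≤ 2 * c * p i)]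
        have : 2 * c * p i ≤ 2 * c := by nlinarith [hp1 i]
        calc _ ≤ M * (2 * c) := mul_le_mul hb1 this (by have := hp0 i; positivity) hM0
          _ = _ := by ring
      exact (abs_add_le _ _).trans (by linarith)

lemma Bd.mono {m m' : ℝ} {f : ℝ × EuclideanSpace ℝ (Fin d) → ℝ} (h : Bd m f) (hm : m ≤ m') :
    Bd m' f :=
  ⟨h.1, fun z => ⟨(h.2 z).1, (h.2 z).2.1, (h.2 z).2.2.1, fun i =>
    ⟨((h.2 z).2.2.2 i).1.trans hm, ((h.2 z).2.2.2 i).2.trans hm⟩⟩⟩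

lemma Dv_mul2 {f g : ℝ × EuclideanSpace ℝ (Fin d) → ℝ} (hf : ContDiff ℝ ∞ f) (hg : ContDiff ℝ ∞ g)
    (v z) : Dv v (Dv v (fun z => f z * g z)) z = Dv v (Dv v f) z * g z + 2 * (Dv v f z * Dv v g z)
      + f z * Dv v (Dv v g) z := by
  have e : Dv v (fun z => f z * g z) = fun z => Dv v f z * g z + f z * Dv v g z :=
    funext fun z => Dv_mul (smooth_diff hf z) (smooth_diff hg z) v
  have h1 := smooth_diff hf z
  have h2 := smooth_diff hg z
  have h3 := smooth_diff (Dv_smooth hf v) z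
  have h4 := smooth_diff (Dv_smooth hg v) z
  rw [e, Dv_add (by fun_prop) (by fun_prop), Dv_mul h3 h2, Dv_mul h1 h4]
  ring

lemma Bd.mul {m : ℝ} {f g : ℝ × EuclideanSpace ℝ (Fin d) → ℝ} (hf : Bd m f) (hg : Bd m g) :
    Bd (4 * m) (fun z => f z * g z) := by
  refine ⟨hf.1.mul hg.1, fun z => ?_⟩
  obtain ⟨f0, f1, ft, fx⟩ := hf.2 z
  obtain ⟨g0, g1, gt, gx⟩ := hg.2 z
  refine ⟨mul_nonneg f0 g0, mul_le_one₀ f1 g0 g1, ?_, fun i => ?_⟩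
  · rw [Dv_mul (smooth_diff hf.1 z) (smooth_diff hg.1 z), ft, gt]; ring
  · obtain ⟨fa, fb⟩ := fx i
    obtain ⟨ga, gb⟩ := gx i
    rw [Dv_mul (smooth_diff hf.1 z) (smooth_diff hg.1 z), Dv_mul2 hf.1 hg.1]
    have hf2 : f z ^ 2 ≤ 1 := by nlinarith
    have hg2 : g z ^ 2 ≤ 1 := by nlinarith
    constructor
    · have a1 : (Dv (eX i) f z * g z) ^ 2 ≤ m := by
        rw [mul_pow]; nlinarith [sq_nonneg (Dv (eX i) f z)]
      have a2 : (f z * Dv (eX i) g z) ^ 2 ≤ m := by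
        rw [mul_pow]; nlinarith [sq_nonneg (Dv (eX i) g z)]
      nlinarith [sq_nonneg (Dv (eX i) f z * g z - f z * Dv (eX i) g z)]
    · have b1 : |Dv (eX i) (Dv (eX i) f) z * g z| ≤ m := by
        rw [abs_mul, abs_of_nonneg g0]; nlinarith [abs_nonneg (Dv (eX i) (Dv (eX i) f) z)]
      have b2 : |f z * Dv (eX i) (Dv (eX i) g) z| ≤ m := by
        rw [abs_mul, abs_of_nonneg f0]; nlinarith [abs_nonneg (Dv (eX i) (Dv (eX i) g) z)]
      have b3 : |2 * (Dv (eX i) f z * Dv (eX i) g z)| ≤ 2 * m := by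
        rw [abs_le]
        constructor <;> nlinarith [sq_nonneg (Dv (eX i) f z - Dv (eX i) g z),
          sq_nonneg (Dv (eX i) f z + Dv (eX i) g z)]
      refine (abs_add_le _ _).trans ?_
      have := abs_add_le (Dv (eX i) (Dv (eX i) f) z * g z) (2 * (Dv (eX i) f z * Dv (eX i) g z))
      linarith

def psi (a b : ℝ) (p q : Fin d → ℝ) (z : ℝ × EuclideanSpace ℝ (Fin d)) : ℝ :=
  k1 (a⁻¹ * R2 p z.2) * (k2 (b⁻¹ * R2 p z.2) * k2 (b⁻¹ * R2 q z.2))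

lemma psi_Bd (d : ℕ) : ∃ K : ℝ, 0 ≤ K ∧ ∀ (p q : Fin d → ℝ), (∀ i, p i * p i = p i) →
    (∀ i, q i * q i = q i) → ∀ a b : ℝ, 0 < a → a ≤ b → Bd (K * a⁻¹) (psi a b p q) := by
  obtain ⟨K1, h1, H1⟩ := k_Bd (d := d) k1_smooth
    (fun y => ⟨smoothTransition.nonneg _, smoothTransition.le_one _⟩) k1_cpt
  obtain ⟨K2, h2, H2⟩ := k_Bd (d := d) k2_smooth
    (fun y => ⟨smoothTransition.nonneg _, smoothTransition.le_one _⟩) k2_cpt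
  refine ⟨16 * (K1 + K2), by positivity, fun p q hp hq a b ha hab => ?_⟩
  have hb : 0 < b := ha.trans_le hab
  have hab' : b⁻¹ ≤ a⁻¹ := inv_anti₀ ha hab
  have ha' : 0 < a⁻¹ := inv_pos.2 ha
  have hb' : 0 < b⁻¹ := inv_pos.2 hb
  have B1 := (H1 p hp a⁻¹ ha'.le).mono (m' := 4 * ((K1 + K2) * a⁻¹)) (by nlinarith)
  have B2 := (H2 p hp b⁻¹ hb'.le).mono (m' := (K1 + K2) * a⁻¹) (by nlinarith)
  have B3 := (H2 q hq b⁻¹ hb'.le).mono (m' := (K1 + K2) * a⁻¹) (by nlinarith)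
  exact (B1.mul (B2.mul B3)).mono (by nlinarith)

variable {p q : Fin d → ℝ} {a b : ℝ}

lemma psi_one (ha : 0 < a) (hb : 0 < b) {z : ℝ × EuclideanSpace ℝ (Fin d)} (h1 : 3 * a ≤ R2 p z.2)
    (h2 : R2 p z.2 ≤ b / 3) (h3 : R2 q z.2 ≤ b / 3) : psi a b p q z = 1 := by
  unfold psi k1 k2
  have e1 : 3 ≤ a⁻¹ * R2 p z.2 := by rw [inv_mul_eq_div, le_div_iff₀ ha]; linarith
  have e2 : b⁻¹ * R2 p z.2 ≤ 1/3 := by rw [inv_mul_eq_div, div_le_iff₀ hb]; linarith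
  have e3 : b⁻¹ * R2 q z.2 ≤ 1/3 := by rw [inv_mul_eq_div, div_le_iff₀ hb]; linarith
  rw [smoothTransition.one_of_one_le (by linarith), smoothTransition.one_of_one_le (by linarith),
    smoothTransition.one_of_one_le (by linarith)]
  ring

lemma psi_supp (ha : 0 < a) (hb : 0 < b) {z : ℝ × EuclideanSpace ℝ (Fin d)} (h : psi a b p q z ≠ 0) :
    2 * a ≤ R2 p z.2 ∧ R2 p z.2 ≤ b / 2 ∧ R2 q z.2 ≤ b / 2 := by
  unfold psi k1 k2 at h
  refine ⟨?_, ?_, ?_⟩ <;> by_contra hcon <;> push Not at hcon <;> apply h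
  · have : a⁻¹ * R2 p z.2 ≤ 2 := by rw [inv_mul_eq_div, div_le_iff₀ ha]; linarith
    rw [smoothTransition.zero_of_nonpos (by linarith)]; ring
  · have : 1 / 2 ≤ b⁻¹ * R2 p z.2 := by rw [inv_mul_eq_div, le_div_iff₀ hb]; linarith
    rw [smoothTransition.zero_of_nonpos (x := 3 - 6 * (b⁻¹ * R2 p z.2)) (by linarith)]; ring
  · have : 1 / 2 ≤ b⁻¹ * R2 q z.2 := by rw [inv_mul_eq_div, le_div_iff₀ hb]; linarith
    rw [smoothTransition.zero_of_nonpos (x := 3 - 6 * (b⁻¹ * R2 q z.2)) (by linarith)]; ring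

lemma w_tsupp (ha : 0 < a) (hb : 0 < b) {u : ℝ × EuclideanSpace ℝ (Fin d) → ℝ}
    {z : ℝ × EuclideanSpace ℝ (Fin d)} (h : z ∈ tsupport (fun z => psi a b p q z * u z)) :
    2 * a ≤ R2 p z.2 ∧ R2 p z.2 ≤ b / 2 ∧ R2 q z.2 ≤ b / 2 := by
  have hcl : IsClosed {z : ℝ × EuclideanSpace ℝ (Fin d) |
      2 * a ≤ R2 p z.2 ∧ R2 p z.2 ≤ b / 2 ∧ R2 q z.2 ≤ b / 2} := by
    have c1 := (R2_smooth' p).continuous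
    have c2 := (R2_smooth' q).continuous
    exact (isClosed_le continuous_const c1).inter
      ((isClosed_le c1 continuous_const).inter (isClosed_le c2 continuous_const))
  refine closure_minimal ?_ hcl h
  intro y hy
  exact psi_supp ha hb (left_ne_zero_of_mul hy)
end cutoffs


section pointwise
variable {d : ℕ}

structure Par (p q : Fin d → ℝ) (C0 T κ rm rp T0 : ℝ) : Prop where
  hp : ∀ i, p i * p i = p i
  hq : ∀ i, q i * q i = q i
  hpq : ∀ i, p i + q i = 1
  hn : 1 ≤ ∑ i, p i
  hnd : ∑ i, p i ≤ d
  hC : 6 * (d:ℝ) ≤ C0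
  hC6 : 6 ≤ C0
  hT : 0 < T
  hκ : 0 < κ
  hk : C0 * T * κ = 1
  hrm : 0 < rm
  hrp : rm < rp
  hcond : 4 ≤ κ * rm ^ 2
  hT0 : T / 2 ≤ T0
  hT0' : T0 ≤ T

variable {p q : Fin d → ℝ} {C0 T κ rm rp T0 : ℝ}

abbrev gg (T κ rm rp T0 : ℝ) (p : Fin d → ℝ) : ℝ × EuclideanSpace ℝ (Fin d) → ℝ :=
  gw (rp * κ / (2 * T)) T0 κ (rm ^ 2) p

lemma Par.kT (P : Par p q C0 T κ rm rp T0) : 6 * (d * (κ * T)) ≤ 1 ∧ 6 * (κ * T) ≤ 1 := by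
  have h := P.hk
  have hT := P.hT
  have hκ := P.hκ
  have e : 0 < κ * T := by positivity
  constructor
  · calc 6 * (d * (κ * T)) = 6 * d * (κ * T) := by ring
      _ ≤ C0 * (κ * T) := mul_le_mul_of_nonneg_right P.hC e.le
      _ = 1 := by linarith
  · calc 6 * (κ * T) ≤ C0 * (κ * T) := mul_le_mul_of_nonneg_right P.hC6 e.le
      _ = 1 := by linarith

lemma Par.kle (P : Par p q C0 T κ rm rp T0) : κ ≤ T⁻¹ := by
  have := P.kT.2
  have hT := P.hT
  have hκ := P.hκ
  rw [← one_div, le_div_iff₀ hT]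
  nlinarith [mul_pos hκ hT]

lemma R2_sum (hpq : ∀ i, p i + q i = 1) (x : EuclideanSpace ℝ (Fin d)) :
    R2 (fun _ => 1) x = R2 p x + R2 q x := by
  unfold R2
  rw [← Finset.sum_add_distrib]
  refine Finset.sum_congr rfl fun i _ => ?_
  rw [← add_mul, hpq]

lemma R2_nonneg (hp : ∀ i, p i * p i = p i) (x : EuclideanSpace ℝ (Fin d)) : 0 ≤ R2 p x :=
  Finset.sum_nonneg fun i _ => mul_nonneg (by rw [← hp i]; exact mul_self_nonneg _) (sq_nonneg _)

/-- basic facts on `r` -/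
lemma Par.rfacts (P : Par p q C0 T κ rm rp T0) {z : ℝ × EuclideanSpace ℝ (Fin d)}
    (h1 : rm ^ 2 < R2 p z.2) (h2 : R2 p z.2 ≤ rp ^ 2) :
    rm < rr p z ∧ rr p z ≤ rp ∧ 0 < nu p z ∧ rr p z * nu p z = 1 ∧ nu p z ≤ rr p z * κ / 4 ∧
    nu p z ^ 3 ≤ rr p z * κ ^ 2 / 16 ∧ rr p z ^ 2 = R2 p z.2 := by
  have hpos : 0 < R2 p z.2 := lt_of_le_of_lt (sq_nonneg _) h1
  have hr := rr_pos hpos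
  have hs := rr_sq hpos
  have hrn := rr_nu hpos
  have hν : 0 < nu p z := inv_pos.2 hr
  have hκ := P.hκ
  have a1 : rm < rr p z := by
    have := P.hrm
    nlinarith
  have hk2 : 4 ≤ κ * rr p z ^ 2 := P.hcond.trans (by rw [hs]; exact mul_le_mul_of_nonneg_left h1.le hκ.le)
  have hn2 : nu p z ^ 2 ≤ κ / 4 := by
    have : nu p z ^ 2 * (κ * rr p z ^ 2) = κ := by
      calc _ = κ * (rr p z * nu p z) ^ 2 := by ring
        _ = κ := by rw [hrn]; ring
    nlinarith [mul_le_mul_of_nonneg_left hk2 (sq_nonneg (nu p z))]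
  have hn1 : nu p z = rr p z * nu p z ^ 2 := by
    calc nu p z = (rr p z * nu p z) * nu p z := by rw [hrn]; ring
      _ = _ := by ring
  refine ⟨a1, ?_, hν, hrn, ?_, ?_, hs⟩
  · have := P.hrm
    have := P.hrp
    exact le_of_sq_le_sq (by rw [hs]; exact h2) (by linarith)
  · rw [hn1]; nlinarith
  · have e3 : nu p z ^ 3 = rr p z * (nu p z ^ 2) ^ 2 := by
      calc nu p z ^ 3 = nu p z * nu p z ^ 2 := by ring
        _ = (rr p z * nu p z ^ 2) * nu p z ^ 2 := by rw [← hn1]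
        _ = _ := by ring
    rw [e3]
    have : (nu p z ^ 2) ^ 2 ≤ (κ / 4) ^ 2 := pow_le_pow_left₀ (sq_nonneg _) hn2 2
    nlinarith

lemma Par.alpha (P : Par p q C0 T κ rm rp T0) : 0 < rp * κ / (2 * T) ∧
    rp * κ / (2 * T) * T = rp * κ / 2 := by
  have hT := P.hT
  have hκ := P.hκ
  have : 0 < rp := P.hrm.trans P.hrp
  constructor
  · positivity
  · field_simp

set_option maxHeartbeats 1000000 in
lemma Par.LF (P : Par p q C0 T κ rm rp T0) {z : ℝ × EuclideanSpace ℝ (Fin d)}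
    (h1 : rm ^ 2 < R2 p z.2) (h2 : R2 p z.2 ≤ rp ^ 2) (ht : 0 ≤ z.1) (ht' : z.1 ≤ T0) :
    4 * κ * T⁻¹ ≤ Lof (Fof (gg T κ rm rp T0 p)) z := by
  obtain ⟨r1, r2, hν, hrn, hn1, hn3, hs⟩ := P.rfacts h1 h2
  obtain ⟨hα, hαT⟩ := P.alpha
  obtain ⟨hd1, hd2⟩ := P.kT
  have hT := P.hT
  have hκ := P.hκ
  have hrm := P.hrm
  have hT0 := P.hT0'
  rw [LFof_gw P.hp (pow_pos P.hrm 2) h1]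
  set α := rp * κ / (2 * T) with hαd
  set r := rr p z
  set ν := nu p z
  set n := ∑ i, p i
  have hn := P.hn
  have hnd := P.hnd
  have hr : 0 < r := hrm.trans r1
  set τ := T0 - z.1 with hτ
  have hτ0 : 0 ≤ τ := by rw [hτ]; linarith
  have hτT : τ ≤ T := by rw [hτ]; linarith
  have hατ : 0 ≤ α * τ := by positivity
  have hατT : α * τ ≤ α * T := mul_le_mul_of_nonneg_left hτT hα.le
  have t1 : 0 ≤ 2 * α ^ 2 * τ := by positivity
  set m := α * κ * r with hm
  have hm0 : 0 < m := by positivity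
  -- third term
  have t3 : -(m / 6) ≤ α * τ * ((n - 1) * (n - 3)) * ν ^ 3 := by
    have b1 : α * τ * ν ^ 3 ≤ α * T * (r * κ ^ 2 / 16) :=
      mul_le_mul hατT hn3 (by positivity) (by positivity)
    have b2 : α * T * (r * κ ^ 2 / 16) = m * (κ * T) / 16 := by rw [hm]; ring
    have b3 : m * (κ * T) ≤ m * (1/6) := mul_le_mul_of_nonneg_left (by linarith) hm0.le
    have b4 : -1 ≤ (n - 1) * (n - 3) := by nlinarith [sq_nonneg (n - 2)]
    have b5 : 0 ≤ α * τ * ν ^ 3 := by positivity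
    have b6 := mul_le_mul_of_nonneg_left b4 b5
    have b7 : α * τ * ((n - 1) * (n - 3)) * ν ^ 3 = α * τ * ν ^ 3 * ((n - 1) * (n - 3)) := by ring
    rw [b7]
    linarith
  have t4 : 4 * α * κ * τ * (n - 1) * ν ≤ m / 6 := by
    have b1 : α * τ * ν ≤ α * T * (r * κ / 4) :=
      mul_le_mul hατT hn1 hν.le (by positivity)
    have b2 : (α * τ * ν) * (n - 1) ≤ α * T * (r * κ / 4) * d :=
      mul_le_mul b1 (by linarith) (by linarith) (by positivity)
    have b3 : 4 * κ * (α * T * (r * κ / 4) * d) = m * (d * (κ * T)) := by rw [hm]; ring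
    have b4 : m * (d * (κ * T)) ≤ m * (1/6) := mul_le_mul_of_nonneg_left (by linarith) hm0.le
    have b5 := mul_le_mul_of_nonneg_left b2 (by positivity : 0 ≤ 4 * κ)
    calc _ = 4 * κ * (α * τ * ν * (n - 1)) := by ring
      _ ≤ _ := by linarith
  have hmT : 2 * κ ≤ m * T := by
    have c1 : α * T * r = κ * (rp * r) / 2 := by rw [hαT]; ring
    have c2 : r ^ 2 ≤ rp * r := by rw [pow_two]; exact mul_le_mul_of_nonneg_right r2 hr.le
    have c3 : rm ^ 2 ≤ r ^ 2 := pow_le_pow_left₀ hrm.le r1.le 2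
    have c4 := P.hcond
    have c5 : κ * rm ^ 2 ≤ κ * (rp * r) := mul_le_mul_of_nonneg_left (c3.trans c2) hκ.le
    have c6 : m * T = κ * (α * T * r) := by rw [hm]; ring
    have c7 := mul_le_mul_of_nonneg_left (c4.trans c5) hκ.le
    rw [c6, c1]
    have c8 : κ * (κ * (rp * r) / 2) = κ * (κ * (rp * r)) / 2 := by ring
    rw [c8]
    linarith only [c7]
  have t5 : 8 * d * κ ^ 2 ≤ m := by
    have d0 : (0:ℝ) ≤ d := by positivity
    have e1 := mul_le_mul_of_nonneg_left hmT (by positivity : 0 ≤ 4 * (d * κ))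
    have e : 4 * (d * κ) * (m * T) = m * (4 * (d * (κ * T))) := by ring
    have e2 : 8 * d * κ ^ 2 = 4 * (d * κ) * (2 * κ) := by ring
    have e3 : m * (4 * (d * (κ * T))) ≤ m * 1 := mul_le_mul_of_nonneg_left (by linarith) hm0.le
    rw [e2]
    linarith only [e1, e, e3]
  have hfin : 4 * κ * T⁻¹ ≤ 2 * m := by
    rw [← div_eq_mul_inv, div_le_iff₀ hT]; linarith
  have : 4 * α * κ * r = 4 * m := by rw [hm]; ring
  linarith

lemma Par.Fneg (P : Par p q C0 T κ rm rp T0) {z : ℝ × EuclideanSpace ℝ (Fin d)}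
    (h1 : rm ^ 2 < R2 p z.2) (h2 : R2 p z.2 ≤ rp ^ 2) (ht' : z.1 ≤ T0) :
    Fof (gg T κ rm rp T0 p) z ≤ 0 := by
  obtain ⟨r1, r2, hν, hrn, hn1, hn3, hs⟩ := P.rfacts h1 h2
  obtain ⟨hα, hαT⟩ := P.alpha
  have hκ := P.hκ
  have hrm := P.hrm
  rw [Fof_gw P.hp (pow_pos P.hrm 2) h1]
  unfold F1
  have hτ0 : 0 ≤ T0 - z.1 := by linarith
  have hn : 0 ≤ ∑ i, p i - 1 := by linarith [P.hn]
  have hN : 0 ≤ R2 (fun _ => 1) z.2 := R2_nonneg (by simp) _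
  have hr : 0 < rr p z := hrm.trans r1
  have s1 : 0 ≤ rp * κ / (2 * T) * rr p z := by positivity
  have s2 : 0 ≤ rp * κ / (2 * T) * (∑ i, p i - 1) * ((T0 - z.1) * nu p z) := by positivity
  have s3 : 0 ≤ 2 * κ * d := by positivity
  have s4 : 0 ≤ (rp * κ / (2 * T)) ^ 2 * ((T0 - z.1) * (T0 - z.1)) := by positivity
  have s5 : 0 ≤ 4 * (rp * κ / (2 * T)) * κ * ((T0 - z.1) * rr p z) := by positivity
  have s6 : 0 ≤ 4 * κ ^ 2 * R2 (fun _ => 1) z.2 := by positivity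
  linarith

lemma Par.Fbd (P : Par p q C0 T κ rm rp T0) {z : ℝ × EuclideanSpace ℝ (Fin d)}
    (h1 : rm ^ 2 < R2 p z.2) (h2 : R2 p z.2 ≤ rp ^ 2) (h3 : R2 q z.2 ≤ rp ^ 2)
    (ht : 0 ≤ z.1) (ht' : z.1 ≤ T0) :
    - Fof (gg T κ rm rp T0 p) z ≤ (2 * d + 12) * T⁻¹ * (1 + κ * rp ^ 2) := by
  obtain ⟨r1, r2, hν, hrn, hn1, hn3, hs⟩ := P.rfacts h1 h2
  obtain ⟨hα, hαT⟩ := P.alpha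
  have hκ := P.hκ
  have hrm := P.hrm
  have hT := P.hT
  have hT0 := P.hT0'
  have hkle := P.kle
  rw [Fof_gw P.hp (pow_pos P.hrm 2) h1]
  unfold F1
  have hrp : 0 < rp := P.hrm.trans P.hrp
  set α := rp * κ / (2 * T) with hαd
  set r := rr p z
  set ν := nu p z
  set n := ∑ i, p i
  have hn := P.hn
  have hnd := P.hnd
  have hr : 0 < r := hrm.trans r1
  set τ := T0 - z.1 with hτ
  have hτ0 : 0 ≤ τ := by rw [hτ]; linarith
  have hτT : τ ≤ T := by rw [hτ]; linarith
  have hατ : 0 ≤ α * τ := by positivity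
  have hατT : α * τ ≤ rp * κ / 2 := hαT ▸ mul_le_mul_of_nonneg_left hτT hα.le
  set S := κ * rp ^ 2 with hS
  have hS0 : 0 < S := by positivity
  have hrr : r * rp ≤ rp ^ 2 := by nlinarith
  have hkS : κ * S ≤ T⁻¹ * S := mul_le_mul_of_nonneg_right hkle hS0.le
  have d0 : (0:ℝ) ≤ d := by positivity
  have s1 : α * r ≤ T⁻¹ * S := by
    have : α * r = T⁻¹ * (κ * (r * rp)) / 2 := by rw [hαd]; field_simp
    rw [this]
    have : T⁻¹ * (κ * (r * rp)) ≤ T⁻¹ * S := by rw [hS]; gcongr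
    have : 0 ≤ T⁻¹ * S := by positivity
    linarith
  have s2 : α * (n - 1) * (τ * ν) ≤ d * (T⁻¹ * S) := by
    have b1 : (α * τ) * ν ≤ rp * κ / 2 * (r * κ / 4) := mul_le_mul hατT hn1 hν.le (by positivity)
    have b2 : rp * κ / 2 * (r * κ / 4) ≤ κ * S := by
      have : rp * κ / 2 * (r * κ / 4) = κ * (κ * (r * rp)) / 8 := by ring
      rw [this]
      have : κ * (κ * (r * rp)) ≤ κ * S := by rw [hS]; gcongr
      have : 0 ≤ κ * S := by positivity
      linarith
    have b3 : (n - 1) * ((α * τ) * ν) ≤ d * (T⁻¹ * S) :=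
      mul_le_mul (by linarith) (b1.trans (b2.trans hkS)) (by positivity) d0
    calc _ = (n - 1) * ((α * τ) * ν) := by ring
      _ ≤ _ := b3
  have s3 : 2 * κ * d ≤ 2 * d * T⁻¹ := by nlinarith
  have s4 : α ^ 2 * (τ * τ) ≤ T⁻¹ * S := by
    have : (α * τ) ^ 2 ≤ (rp * κ / 2) ^ 2 := pow_le_pow_left₀ hατ hατT 2
    have e : (rp * κ / 2) ^ 2 = κ * S / 4 := by rw [hS]; ring
    have : 0 ≤ κ * S := by positivity
    nlinarith
  have s5 : 4 * α * κ * (τ * r) ≤ 2 * (T⁻¹ * S) := by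
    have b1 : (α * τ) * r ≤ rp * κ / 2 * rp := mul_le_mul hατT r2 hr.le (by positivity)
    have b2 := mul_le_mul_of_nonneg_left b1 (by positivity : 0 ≤ 4 * κ)
    have e : 4 * κ * (rp * κ / 2 * rp) = 2 * (κ * S) := by rw [hS]; ring
    calc _ = 4 * κ * ((α * τ) * r) := by ring
      _ ≤ _ := by linarith
  have s6 : 4 * κ ^ 2 * R2 (fun _ => 1) z.2 ≤ 8 * (T⁻¹ * S) := by
    rw [R2_sum P.hpq]
    have : 4 * κ ^ 2 * (R2 p z.2 + R2 q z.2) ≤ 4 * κ ^ 2 * (2 * rp ^ 2) := by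
      gcongr; linarith
    have e : 4 * κ ^ 2 * (2 * rp ^ 2) = 8 * (κ * S) := by rw [hS]; ring
    linarith
  have hTi : 0 < T⁻¹ := inv_pos.2 hT
  have hTS : 0 < T⁻¹ * S := by positivity
  have e : (2 * d + 12) * T⁻¹ * (1 + S) = 2 * d * T⁻¹ + 12 * T⁻¹ + 2 * (d * (T⁻¹ * S)) + 12 * (T⁻¹ * S) := by
    ring
  rw [e]
  have : 0 ≤ d * (T⁻¹ * S) := by positivity
  linarith

lemma Par.gval (P : Par p q C0 T κ rm rp T0) {z : ℝ × EuclideanSpace ℝ (Fin d)}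
    (h1 : rm ^ 2 < R2 p z.2) : gg T κ rm rp T0 p z =
      rp * κ / (2 * T) * ((T0 - z.1) * rr p z) + κ * R2 (fun _ => 1) z.2 :=
  (gw_eq (pow_pos P.hrm 2) h1).eq_of_nhds

/-- upper bound on `g` -/
lemma Par.gub (P : Par p q C0 T κ rm rp T0) {z : ℝ × EuclideanSpace ℝ (Fin d)}
    (h1 : rm ^ 2 < R2 p z.2) (ht : 0 ≤ z.1) :
    gg T κ rm rp T0 p z ≤ κ * (rp * rr p z) / 2 + κ * R2 (fun _ => 1) z.2 := by
  rw [P.gval h1]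
  obtain ⟨hα, hαT⟩ := P.alpha
  have hr : 0 ≤ rr p z := Real.sqrt_nonneg _
  have : rp * κ / (2 * T) * (T0 - z.1) ≤ rp * κ / 2 :=
    hαT ▸ mul_le_mul_of_nonneg_left (by linarith [P.hT0']) hα.le
  have := mul_le_mul_of_nonneg_right this hr
  linarith

lemma Par.g_trans (P : Par p q C0 T κ rm rp T0) {z : ℝ × EuclideanSpace ℝ (Fin d)}
    (h1 : rm ^ 2 < R2 p z.2) (ht : 0 ≤ z.1)
    (hN : R2 p z.2 ≤ 3 * rm ^ 2 ∨ rp ^ 2 / 3 ≤ R2 p z.2 ∨ rp ^ 2 / 3 ≤ R2 q z.2) :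
    gg T κ rm rp T0 p z ≤ κ * (rm * rp) + 2 * κ * R2 (fun _ => 1) z.2 := by
  refine (P.gub h1 ht).trans ?_
  have hpos : 0 < R2 p z.2 := lt_of_le_of_lt (sq_nonneg _) h1
  have hr := rr_pos hpos
  have hs := rr_sq hpos
  have hκ := P.hκ
  have hrm := P.hrm
  have hrp : 0 < rp := hrm.trans P.hrp
  have hq := R2_nonneg P.hq z.2
  have hsum := R2_sum P.hpq z.2
  set r := rr p z
  have key : rp * r / 2 ≤ rm * rp + R2 (fun _ => 1) z.2 := by
    rw [hsum]
    rcases hN with h | h | h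
    · have : r ≤ 2 * rm := by nlinarith
      nlinarith
    · have : rp / 2 ≤ r := by nlinarith
      nlinarith [mul_pos hrm hrp]
    · nlinarith [sq_nonneg (r - rp / 4), mul_pos hrm hrp]
  have := mul_le_mul_of_nonneg_left key hκ.le
  linarith

lemma Par.g_zero (P : Par p q C0 T κ rm rp T0) {z : ℝ × EuclideanSpace ℝ (Fin d)}
    (h1 : rm ^ 2 < R2 p z.2) (ht : 0 ≤ z.1) (h2 : R2 p z.2 ≤ rp ^ 2 / 2)
    (h3 : R2 q z.2 ≤ rp ^ 2 / 2) :
    gg T κ rm rp T0 p z ≤ 3 / 2 * (κ * rp ^ 2) := by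
  refine (P.gub h1 ht).trans ?_
  have hpos : 0 < R2 p z.2 := lt_of_le_of_lt (sq_nonneg _) h1
  have hr := rr_pos hpos
  have hs := rr_sq hpos
  have hκ := P.hκ
  have hrp : 0 < rp := P.hrm.trans P.hrp
  have hsum := R2_sum P.hpq z.2
  set r := rr p z
  have hrr : r ≤ rp := by nlinarith
  have key : rp * r / 2 + R2 (fun _ => 1) z.2 ≤ 3 / 2 * rp ^ 2 := by nlinarith
  have := mul_le_mul_of_nonneg_left key hκ.le
  linarith

lemma Par.g_low (P : Par p q C0 T κ rm rp T0) {z : ℝ × EuclideanSpace ℝ (Fin d)}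
    (h1 : 100 * rm ^ 2 ≤ R2 p z.2) (ht : z.1 ≤ T / 4) :
    5 / 4 * (κ * (rm * rp)) ≤ gg T κ rm rp T0 p z := by
  have hrm := P.hrm
  have h1' : rm ^ 2 < R2 p z.2 := by nlinarith
  rw [P.gval h1']
  have hpos : 0 < R2 p z.2 := lt_of_le_of_lt (sq_nonneg _) h1'
  have hr := rr_pos hpos
  have hs := rr_sq hpos
  have hκ := P.hκ
  have hrp : 0 < rp := P.hrm.trans P.hrp
  obtain ⟨hα, hαT⟩ := P.alpha
  have hN : 0 ≤ κ * R2 (fun _ => 1) z.2 := mul_nonneg hκ.le (R2_nonneg (by simp) _)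
  have hr10 : 10 * rm ≤ rr p z := by nlinarith
  have a1 : rp * κ / (2 * T) * (T / 4) ≤ rp * κ / (2 * T) * (T0 - z.1) :=
    mul_le_mul_of_nonneg_left (by linarith [P.hT0]) hα.le
  have a2 : rp * κ / (2 * T) * (T / 4) = rp * κ / 8 := by
    have : rp * κ / (2 * T) * (T / 4) = rp * κ / (2 * T) * T / 4 := by ring
    rw [this, hαT]; ring
  rw [a2] at a1
  have a3 : rp * κ / 8 * (10 * rm) ≤ rp * κ / (2 * T) * (T0 - z.1) * rr p z :=
    mul_le_mul a1 hr10 (by positivity) (le_trans (by positivity) a1)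
  nlinarith
end pointwise


section pw2
variable {d : ℕ} {p q : Fin d → ℝ} {C0 T κ rm rp T0 : ℝ}

def G2 (u : ℝ × EuclideanSpace ℝ (Fin d) → ℝ) (z : ℝ × EuclideanSpace ℝ (Fin d)) : ℝ :=
  ∑ i, (Dv (eX i) u z) ^ 2

def h0 (T : ℝ) (u : ℝ × EuclideanSpace ℝ (Fin d) → ℝ) (z : ℝ × EuclideanSpace ℝ (Fin d)) : ℝ :=
  T⁻¹ * u z ^ 2 + G2 u z

def hX (T κ : ℝ) (u : ℝ × EuclideanSpace ℝ (Fin d) → ℝ) (z : ℝ × EuclideanSpace ℝ (Fin d)) : ℝ :=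
  Real.exp (2 * κ * R2 (fun _ => 1) z.2) * h0 T u z

/-- the shell -/
def AA (p q : Fin d → ℝ) (rm rp : ℝ) : Set (EuclideanSpace ℝ (Fin d)) :=
  {x | rm ^ 2 ≤ R2 p x ∧ R2 p x ≤ rp ^ 2 ∧ R2 q x ≤ rp ^ 2}

def GG (p q : Fin d → ℝ) (rm rp : ℝ) : Set (EuclideanSpace ℝ (Fin d)) :=
  {x | 100 * rm ^ 2 ≤ R2 p x ∧ R2 p x ≤ rp ^ 2 / 4 ∧ R2 q x ≤ rp ^ 2 / 4}

structure Hu (p q : Fin d → ℝ) (T κ rm rp : ℝ) (u : ℝ × EuclideanSpace ℝ (Fin d) → ℝ) : Prop where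
  sm : ContDiff ℝ ∞ u
  cs : HasCompactSupport u
  ineq : ∀ z : ℝ × EuclideanSpace ℝ (Fin d), 0 ≤ z.1 → z.1 ≤ T → z.2 ∈ AA p q rm rp →
    |Lof u z| ≤ κ * |u z| + √κ * √(G2 u z)

lemma G2_nonneg (u : ℝ × EuclideanSpace ℝ (Fin d) → ℝ) (z) : 0 ≤ G2 u z :=
  Finset.sum_nonneg fun _ _ => sq_nonneg _

lemma h0_nonneg (hT : 0 < T) (u : ℝ × EuclideanSpace ℝ (Fin d) → ℝ) (z) : 0 ≤ h0 T u z := by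
  have := G2_nonneg u z
  unfold h0; positivity

lemma hX_nonneg (hT : 0 < T) (u : ℝ × EuclideanSpace ℝ (Fin d) → ℝ) (z) : 0 ≤ hX T κ u z :=
  mul_nonneg (exp_pos _).le (h0_nonneg hT u z)

lemma Lu_sq {l k a b : ℝ} (hk : 0 ≤ k) (hb : 0 ≤ b) (h : |l| ≤ k * |a| + √k * √b) :
    l ^ 2 ≤ 2 * k ^ 2 * a ^ 2 + 2 * k * b := by
  have h1 : l ^ 2 ≤ (k * |a| + √k * √b) ^ 2 := by
    rw [← sq_abs l]; exact pow_le_pow_left₀ (abs_nonneg _) h 2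
  have e1 : (k * |a|) ^ 2 = k ^ 2 * a ^ 2 := by rw [mul_pow, sq_abs]
  have e2 : (√k * √b) ^ 2 = k * b := by rw [mul_pow, sq_sqrt hk, sq_sqrt hb]
  nlinarith [sq_nonneg (k * |a| - √k * √b)]

lemma Hu.Lsq {u : ℝ × EuclideanSpace ℝ (Fin d) → ℝ} (H : Hu p q T κ rm rp u)
    (P : Par p q C0 T κ rm rp T0) {z} (ht : 0 ≤ z.1) (ht' : z.1 ≤ T) (hz : z.2 ∈ AA p q rm rp) :
    (Lof u z) ^ 2 ≤ 2 * κ * h0 T u z := by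
  have h := Lu_sq P.hκ.le (G2_nonneg u z) (H.ineq z ht ht' hz)
  have hk := P.kle
  have : κ * (κ * u z ^ 2) ≤ κ * (T⁻¹ * u z ^ 2) := by
    have := P.hκ
    gcongr
  unfold h0
  nlinarith

lemma I_low (P : Par p q C0 T κ rm rp T0) {z : ℝ × EuclideanSpace ℝ (Fin d)}
    (h1 : rm ^ 2 < R2 p z.2) (h2 : R2 p z.2 ≤ rp ^ 2) (ht : 0 ≤ z.1) (ht' : z.1 ≤ T0)
    (w : ℝ × EuclideanSpace ℝ (Fin d) → ℝ) :
    Real.exp (gg T κ rm rp T0 p z) * (2 * κ * h0 T w z - (1/2) * (Lof w z) ^ 2) ≤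
      Iof (gg T κ rm rp T0 p) w z := by
  unfold Iof
  refine mul_le_mul_of_nonneg_left ?_ (exp_pos _).le
  have a1 := P.LF h1 h2 ht ht'
  have a2 := hess_gw (α := rp * κ / (2 * T)) (T0 := T0) (κ := κ) P.hp (pow_pos P.hrm 2) h1 P.alpha.1.le ht'
    (fun i => Dv (eX i) w z)
  have a3 := mul_le_mul_of_nonneg_right a1 (sq_nonneg (w z))
  have a4 : 0 ≤ κ * G2 w z := mul_nonneg P.hκ.le (G2_nonneg w z)
  unfold h0
  unfold G2 at *
  nlinarith

lemma N_local (hrm : 0 < rm) (hrp : 0 < rp) {u : ℝ × EuclideanSpace ℝ (Fin d) → ℝ}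
    {z : ℝ × EuclideanSpace ℝ (Fin d)} (h1 : 3 * rm ^ 2 < R2 p z.2)
    (h2 : R2 p z.2 < rp ^ 2 / 3) (h3 : R2 q z.2 < rp ^ 2 / 3) :
    (fun z => psi (rm ^ 2) (rp ^ 2) p q z * u z) =ᶠ[nhds z] u := by
  have c1 := (R2_smooth' p).continuous
  have c2 := (R2_smooth' q).continuous
  have e1 := c1.continuousAt.eventually (lt_mem_nhds h1)
  have e2 := c1.continuousAt.eventually (gt_mem_nhds h2)
  have e3 := c2.continuousAt.eventually (gt_mem_nhds h3)
  filter_upwards [e1, e2, e3] with y y1 y2 y3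
  rw [psi_one (pow_pos hrm 2) (pow_pos hrp 2) y1.le y2.le y3.le, one_mul]

lemma Lof_congr {f g : ℝ × EuclideanSpace ℝ (Fin d) → ℝ} {z} (h : f =ᶠ[nhds z] g) :
    Lof f z = Lof g z := by
  unfold Lof
  rw [Dv_congr h]
  congr 1
  exact Finset.sum_congr rfl fun i _ => Dv_congr (Dv_congr_ev h _) _

lemma h0_congr {f g : ℝ × EuclideanSpace ℝ (Fin d) → ℝ} {z} (h : f =ᶠ[nhds z] g) :
    h0 T f z = h0 T g z := by
  unfold h0 G2
  rw [h.eq_of_nhds]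
  congr 1
  exact Finset.sum_congr rfl fun i _ => by rw [Dv_congr h]

/-- The cutoff estimates. -/
lemma w_bounds {K : ℝ} (hK : 0 ≤ K) {ψ u : ℝ × EuclideanSpace ℝ (Fin d) → ℝ}
    (hψ : Bd (K * (rm ^ 2)⁻¹) ψ)
    (H : Hu p q T κ rm rp u) (P : Par p q C0 T κ rm rp T0) (z) :
    G2 (fun z => ψ z * u z) z ≤ 3 * (2 + d * K + (d * K) ^ 2) * h0 T u z ∧
    (0 ≤ z.1 → z.1 ≤ T → z.2 ∈ AA p q rm rp →
      (Lof (fun z => ψ z * u z) z) ^ 2 ≤ 3 * (2 + d * K + (d * K) ^ 2) * κ * h0 T u z) := by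
  have hκ := P.hκ
  have hT := P.hT
  have hrm2 : 0 < rm ^ 2 := pow_pos P.hrm 2
  have hm : K * (rm ^ 2)⁻¹ ≤ K * κ / 4 := by
    have : (rm ^ 2)⁻¹ ≤ κ / 4 := by
      rw [inv_eq_one_div, div_le_iff₀ hrm2]; linarith [P.hcond]
    nlinarith
  obtain ⟨hψs, hψb⟩ := hψ.mono hm
  obtain ⟨p0, p1, pt, pi⟩ := hψb z
  have hkle := P.kle
  have d0 : (0:ℝ) ≤ d := by positivity
  set A : ℝ := d * K with hA
  have hA0 : 0 ≤ A := by positivity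
  have hg := G2_nonneg u z
  have hh := h0_nonneg hT u z
  have hu2 : κ * u z ^ 2 ≤ T⁻¹ * u z ^ 2 := mul_le_mul_of_nonneg_right hkle (sq_nonneg _)
  have hu0 : 0 ≤ κ * u z ^ 2 := by positivity
  have hgh : G2 u z ≤ h0 T u z := by unfold h0; linarith
  have huh : κ * u z ^ 2 ≤ h0 T u z := by unfold h0; linarith
  have hu20 : 0 ≤ u z ^ 2 := sq_nonneg _
  constructor
  · have e : ∀ i, (Dv (eX i) (fun z => ψ z * u z) z) ^ 2 ≤
        2 * (K * κ / 4) * u z ^ 2 + 2 * (Dv (eX i) u z) ^ 2 := by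
      intro i
      rw [Dv_mul (smooth_diff hψs z) (smooth_diff H.sm z)]
      have b1 := mul_le_mul_of_nonneg_right (pi i).1 hu20
      have b2 : (ψ z) ^ 2 * (Dv (eX i) u z) ^ 2 ≤ 1 * (Dv (eX i) u z) ^ 2 :=
        mul_le_mul_of_nonneg_right (pow_le_one₀ p0 p1) (sq_nonneg _)
      nlinarith [sq_nonneg (Dv (eX i) ψ z * u z - ψ z * Dv (eX i) u z)]
    have : G2 (fun z => ψ z * u z) z ≤ d * (2 * (K * κ / 4) * u z ^ 2) + 2 * G2 u z := by
      unfold G2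
      refine (Finset.sum_le_sum fun i _ => e i).trans ?_
      rw [Finset.sum_add_distrib, Finset.sum_const, Finset.card_univ, Fintype.card_fin, nsmul_eq_mul,
        ← Finset.mul_sum]
    have e2 : d * (2 * (K * κ / 4) * u z ^ 2) = A * (κ * u z ^ 2) / 2 := by rw [hA]; ring
    have e3 : A * (κ * u z ^ 2) ≤ A * h0 T u z := mul_le_mul_of_nonneg_left huh hA0
    have e4 : 0 ≤ A * h0 T u z := by positivity
    have e5 : 0 ≤ A ^ 2 * h0 T u z := by positivity
    linarith
  · intro ht ht' hz
    have hL := H.Lsq P ht ht' hz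
    have eq : Lof (fun z => ψ z * u z) z = ψ z * Lof u z + 2 * (∑ i, Dv (eX i) ψ z * Dv (eX i) u z)
        + (∑ i, Dv (eX i) (Dv (eX i) ψ) z) * u z := by
      unfold Lof
      rw [Dv_mul (smooth_diff hψs z) (smooth_diff H.sm z), pt]
      simp_rw [Dv_mul2 hψs H.sm]
      rw [Finset.sum_add_distrib, Finset.sum_add_distrib, ← Finset.mul_sum, ← Finset.mul_sum,
        ← Finset.sum_mul]
      ring
    rw [eq]
    set X1 := ψ z * Lof u z
    set X2 := ∑ i, Dv (eX i) ψ z * Dv (eX i) u z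
    set X3 := (∑ i, Dv (eX i) (Dv (eX i) ψ) z) with hX3
    have b1 : X1 ^ 2 ≤ 2 * κ * h0 T u z := by
      have : X1 ^ 2 = ψ z ^ 2 * (Lof u z) ^ 2 := mul_pow _ _ _
      rw [this]
      refine le_trans ?_ hL
      exact mul_le_of_le_one_left (sq_nonneg _) (pow_le_one₀ p0 p1)
    have b2 : X2 ^ 2 ≤ A / 4 * (κ * h0 T u z) := by
      have c1 : X2 ^ 2 ≤ (∑ i, (Dv (eX i) ψ z) ^ 2) * G2 u z :=
        Finset.sum_mul_sq_le_sq_mul_sq _ _ _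
      have c2 : ∑ i, (Dv (eX i) ψ z) ^ 2 ≤ d * (K * κ / 4) := by
        refine (Finset.sum_le_sum fun i _ => (pi i).1).trans ?_
        simp
      have c3 : (∑ i, (Dv (eX i) ψ z) ^ 2) * G2 u z ≤ d * (K * κ / 4) * h0 T u z :=
        mul_le_mul c2 hgh hg (by positivity)
      refine c1.trans (c3.trans (le_of_eq ?_))
      rw [hA]; ring
    have b3 : (X3 * u z) ^ 2 ≤ A ^ 2 / 16 * (κ * h0 T u z) := by
      have c1 : |X3| ≤ d * (K * κ / 4) := by
        refine (Finset.abs_sum_le_sum_abs _ _).trans ?_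
        refine (Finset.sum_le_sum fun i _ => (pi i).2).trans ?_
        simp
      have c2 : X3 ^ 2 ≤ (d * (K * κ / 4)) ^ 2 := by
        rw [← sq_abs]; exact pow_le_pow_left₀ (abs_nonneg _) c1 2
      rw [mul_pow]
      refine (mul_le_mul_of_nonneg_right c2 hu20).trans ?_
      have : (d * (K * κ / 4)) ^ 2 * u z ^ 2 = A ^ 2 / 16 * (κ * (κ * u z ^ 2)) := by rw [hA]; ring
      rw [this]
      gcongr
    have e4 : 0 ≤ κ * h0 T u z := by positivity
    have e5 : 0 ≤ A ^ 2 * (κ * h0 T u z) := by positivity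
    have e6 : (X1 + 2 * X2 + X3 * u z) ^ 2 ≤ 3 * (X1 ^ 2 + 4 * X2 ^ 2 + (X3 * u z) ^ 2) := by
      nlinarith [sq_nonneg (X1 - 2 * X2), sq_nonneg (X1 - X3 * u z), sq_nonneg (2 * X2 - X3 * u z)]
    refine e6.trans ?_
    have : 3 * (2 + A + A ^ 2) * κ * h0 T u z = 6 * (κ * h0 T u z) + 3 * A * (κ * h0 T u z)
      + 3 * (A ^ 2 * (κ * h0 T u z)) := by ring
    rw [this]
    linarith

abbrev ww (p q : Fin d → ℝ) (rm rp : ℝ) (u : ℝ × EuclideanSpace ℝ (Fin d) → ℝ) :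
    ℝ × EuclideanSpace ℝ (Fin d) → ℝ := fun z => psi (rm ^ 2) (rp ^ 2) p q z * u z

def MM (d : ℕ) (K : ℝ) : ℝ := 3 * (2 + d * K + (d * K) ^ 2) + 2 * d + 12

lemma GG_sub (hrm : 0 < rm) (hrp : 0 < rp) {x : EuclideanSpace ℝ (Fin d)} (hx : x ∈ GG p q rm rp) :
    3 * rm ^ 2 < R2 p x ∧ R2 p x < rp ^ 2 / 3 ∧ R2 q x < rp ^ 2 / 3 := by
  obtain ⟨a, b, c⟩ := hx
  have := pow_pos hrm 2
  have := pow_pos hrp 2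
  exact ⟨by linarith, by linarith, by linarith⟩

lemma pt_I {K : ℝ} (hK : 0 ≤ K) {u : ℝ × EuclideanSpace ℝ (Fin d) → ℝ}
    (hψ : Bd (K * (rm ^ 2)⁻¹) (psi (rm ^ 2) (rp ^ 2) p q))
    (H : Hu p q T κ rm rp u) (P : Par p q C0 T κ rm rp T0) (z) (ht : 0 ≤ z.1) (ht' : z.1 ≤ T0) :
    ((Icc 0 (T/4)) ×ˢ (GG p q rm rp)).indicator
      (fun z => κ * Real.exp (5 / 4 * (κ * (rm * rp))) * h0 T u z) z ≤
    Iof (gg T κ rm rp T0 p) (ww p q rm rp u) z +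
      ((Icc 0 T) ×ˢ (AA p q rm rp)).indicator
      (fun z => MM d K * κ * Real.exp (κ * (rm * rp)) * hX T κ u z) z := by
  have hκ := P.hκ
  have hT := P.hT
  have hrm := P.hrm
  have hrp : 0 < rp := hrm.trans P.hrp
  have hrm2 : 0 < rm ^ 2 := pow_pos hrm 2
  have hrp2 : 0 < rp ^ 2 := pow_pos hrp 2
  have hM : 0 ≤ MM d K := by unfold MM; positivity
  have hh := h0_nonneg hT u z
  have hind : 0 ≤ ((Icc 0 T) ×ˢ (AA p q rm rp)).indicator
      (fun z => MM d K * κ * Real.exp (κ * (rm * rp)) * hX T κ u z) z := by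
    refine indicator_nonneg (fun z _ => ?_) z
    have := hX_nonneg (κ := κ) hT u z
    positivity
  by_cases hN : 3 * rm ^ 2 < R2 p z.2 ∧ R2 p z.2 < rp ^ 2 / 3 ∧ R2 q z.2 < rp ^ 2 / 3
  · obtain ⟨n1, n2, n3⟩ := hN
    have hloc := N_local (u := u) hrm hrp n1 n2 n3
    have hI := I_low P (by linarith : rm ^ 2 < R2 p z.2) (by linarith) ht ht' (ww p q rm rp u)
    have hzA : z.2 ∈ AA p q rm rp := ⟨by linarith, by linarith, by linarith⟩
    have hL := H.Lsq P ht (ht'.trans P.hT0') hzA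
    rw [Lof_congr hloc, h0_congr hloc] at hI
    have h2 : Real.exp (gg T κ rm rp T0 p z) * (κ * h0 T u z) ≤ Iof (gg T κ rm rp T0 p) (ww p q rm rp u) z :=
      le_trans (mul_le_mul_of_nonneg_left (by linarith) (exp_pos _).le) hI
    have hκh : 0 ≤ κ * h0 T u z := by positivity
    by_cases hG : z ∈ (Icc 0 (T/4)) ×ˢ (GG p q rm rp)
    · rw [indicator_of_mem hG]
      have hgl := P.g_low hG.2.1 hG.1.2
      have : κ * Real.exp (5 / 4 * (κ * (rm * rp))) * h0 T u z ≤ Real.exp (gg T κ rm rp T0 p z) * (κ * h0 T u z) := by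
        calc _ = Real.exp (5 / 4 * (κ * (rm * rp))) * (κ * h0 T u z) := by ring
          _ ≤ _ := mul_le_mul_of_nonneg_right (exp_le_exp.2 hgl) hκh
      linarith
    · rw [indicator_of_notMem hG]
      have : 0 ≤ Real.exp (gg T κ rm rp T0 p z) * (κ * h0 T u z) := by positivity
      linarith
  · have hG : z ∉ (Icc 0 (T/4)) ×ˢ (GG p q rm rp) := fun h => hN (GG_sub hrm hrp h.2)
    rw [indicator_of_notMem hG]
    by_cases hs : z ∈ tsupport (ww p q rm rp u)
    · obtain ⟨s1, s2, s3⟩ := w_tsupp hrm2 hrp2 hs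
      have hzA : z.2 ∈ AA p q rm rp := ⟨by linarith, by linarith, by linarith⟩
      have hI := I_low P (by linarith : rm ^ 2 < R2 p z.2) (by linarith) ht ht' (ww p q rm rp u)
      have hL := (w_bounds hK hψ H P z).2 ht (ht'.trans P.hT0') hzA
      have hmem : z ∈ (Icc 0 T) ×ˢ (AA p q rm rp) := ⟨⟨ht, ht'.trans P.hT0'⟩, hzA⟩
      rw [indicator_of_mem hmem]
      have hg := P.g_trans (by linarith : rm ^ 2 < R2 p z.2) ht (by
        by_contra hcon
        push Not at hcon
        exact hN hcon)
      have hw := h0_nonneg hT (ww p q rm rp u) z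
      have hκw : 0 ≤ κ * h0 T (ww p q rm rp u) z := by positivity
      have hL2 : (Lof (ww p q rm rp u) z) ^ 2 ≤ MM d K * κ * h0 T u z := by
        refine hL.trans ?_
        have : 3 * (2 + d * K + (d * K) ^ 2) ≤ MM d K := by
          unfold MM
          have : (0:ℝ) ≤ d := by positivity
          linarith
        gcongr
      have hB : 0 ≤ MM d K * κ * h0 T u z := by positivity
      have e1 : Real.exp (gg T κ rm rp T0 p z) * (MM d K * κ * h0 T u z) ≤
          MM d K * κ * Real.exp (κ * (rm * rp)) * hX T κ u z := by
        unfold hX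
        calc _ ≤ Real.exp (κ * (rm * rp) + 2 * κ * R2 (fun _ => 1) z.2) * (MM d K * κ * h0 T u z) :=
              mul_le_mul_of_nonneg_right (exp_le_exp.2 hg) hB
          _ = _ := by rw [Real.exp_add]; ring
      have e2 : Real.exp (gg T κ rm rp T0 p z) * (-(MM d K * κ * h0 T u z)) ≤
        Real.exp (gg T κ rm rp T0 p z) * (2 * κ * h0 T (ww p q rm rp u) z - (1/2) * (Lof (ww p q rm rp u) z) ^ 2) :=
        mul_le_mul_of_nonneg_left (by linarith) (exp_pos _).le
      linarith
    · rw [Iof_zero hs]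
      linarith

lemma pt_top {K : ℝ} (hK : 0 ≤ K) {u : ℝ × EuclideanSpace ℝ (Fin d) → ℝ}
    (hψ : Bd (K * (rm ^ 2)⁻¹) (psi (rm ^ 2) (rp ^ 2) p q))
    (H : Hu p q T κ rm rp u) (P : Par p q C0 T κ rm rp T0) (x) :
    Eof (gg T κ rm rp T0 p) (ww p q rm rp u) (T0, x) ≤
      (AA p q rm rp).indicator (fun x => MM d K * hX T κ u (T0, x)) x := by
  have hκ := P.hκ
  have hT := P.hT
  have hrm := P.hrm
  have hrp : 0 < rp := hrm.trans P.hrp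
  have hrm2 : 0 < rm ^ 2 := pow_pos hrm 2
  have hrp2 : 0 < rp ^ 2 := pow_pos hrp 2
  have hM : 0 ≤ MM d K := by unfold MM; positivity
  by_cases hs : ((T0, x) : ℝ × EuclideanSpace ℝ (Fin d)) ∈ tsupport (ww p q rm rp u)
  · obtain ⟨s1, s2, s3⟩ := w_tsupp hrm2 hrp2 hs
    have hzA : x ∈ AA p q rm rp := ⟨by linarith, by linarith, by linarith⟩
    rw [indicator_of_mem hzA]
    have hr : rm ^ 2 < R2 p ((T0, x) : ℝ × EuclideanSpace ℝ (Fin d)).2 := by linarith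
    have hF := P.Fneg hr (by linarith) le_rfl
    have hW := (w_bounds hK hψ H P (T0, x)).1
    have hg := P.gval hr
    have hh := h0_nonneg hT u (T0, x)
    unfold Eof hX
    have hN : 0 ≤ κ * R2 (fun _ => 1) x := mul_nonneg hκ.le (R2_nonneg (by simp) _)
    have hg2 : gg T κ rm rp T0 p (T0, x) ≤ 2 * κ * R2 (fun _ => 1) x := by
      rw [hg]; simp only [sub_self]; linarith
    have e1 : Fof (gg T κ rm rp T0 p) (T0, x) * (ww p q rm rp u (T0, x)) ^ 2 ≤ 0 :=
      mul_nonpos_of_nonpos_of_nonneg hF (sq_nonneg _)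
    have e2 : G2 (ww p q rm rp u) (T0, x) ≤ MM d K * h0 T u (T0, x) := by
      refine hW.trans ?_
      have : 3 * (2 + d * K + (d * K) ^ 2) ≤ MM d K := by
        unfold MM
        have : (0:ℝ) ≤ d := by positivity
        linarith
      gcongr
    unfold G2 at e2
    calc _ ≤ Real.exp (gg T κ rm rp T0 p (T0, x)) * (MM d K * h0 T u (T0, x)) :=
          mul_le_mul_of_nonneg_left (by linarith) (exp_pos _).le
      _ ≤ Real.exp (2 * κ * R2 (fun _ => 1) x) * (MM d K * h0 T u (T0, x)) :=
          mul_le_mul_of_nonneg_right (exp_le_exp.2 hg2) (by positivity)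
      _ = _ := by ring
  · rw [Eof_zero hs]
    refine indicator_nonneg (fun x _ => ?_) x
    have := hX_nonneg (κ := κ) hT u (T0, x)
    positivity

lemma pt_bot {K : ℝ} (hK : 0 ≤ K) {u : ℝ × EuclideanSpace ℝ (Fin d) → ℝ}
    (hψ : Bd (K * (rm ^ 2)⁻¹) (psi (rm ^ 2) (rp ^ 2) p q))
    (P : Par p q C0 T κ rm rp T0) (x) :
    - Eof (gg T κ rm rp T0 p) (ww p q rm rp u) (0, x) ≤
      (AA p q rm rp).indicator (fun x => MM d K * T⁻¹ * Real.exp (2 * (κ * rp ^ 2)) * u (0, x) ^ 2) x := by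
  have hκ := P.hκ
  have hT := P.hT
  have hrm := P.hrm
  have hrp : 0 < rp := hrm.trans P.hrp
  have hrm2 : 0 < rm ^ 2 := pow_pos hrm 2
  have hrp2 : 0 < rp ^ 2 := pow_pos hrp 2
  have hM : 0 ≤ MM d K := by unfold MM; positivity
  by_cases hs : ((0, x) : ℝ × EuclideanSpace ℝ (Fin d)) ∈ tsupport (ww p q rm rp u)
  · obtain ⟨s1, s2, s3⟩ := w_tsupp hrm2 hrp2 hs
    have hzA : x ∈ AA p q rm rp := ⟨by linarith, by linarith, by linarith⟩
    rw [indicator_of_mem hzA]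
    have hr : rm ^ 2 < R2 p ((0, x) : ℝ × EuclideanSpace ℝ (Fin d)).2 := by linarith
    have ht0 : (0:ℝ) ≤ T0 := by linarith [P.hT0]
    have hF := P.Fbd hr (by linarith) (by linarith) le_rfl ht0
    have hg := P.g_zero hr le_rfl s2 s3
    set S := κ * rp ^ 2 with hS
    have hS0 : 0 < S := by positivity
    have hexp : 1 + S ≤ 2 * Real.exp (S / 2) := by linarith [Real.add_one_le_exp (S / 2)]
    obtain ⟨p0, p1, -⟩ := hψ.2 (0, x)
    have hw : (ww p q rm rp u (0, x)) ^ 2 ≤ u (0, x) ^ 2 := by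
      unfold ww
      rw [mul_pow]
      exact mul_le_of_le_one_left (sq_nonneg _) (pow_le_one₀ p0 p1)
    set w := ww p q rm rp u with hwd
    have hF' : - Fof (gg T κ rm rp T0 p) (0, x) ≤ (2 * d + 12) * T⁻¹ * (2 * Real.exp (S / 2)) :=
      hF.trans (mul_le_mul_of_nonneg_left hexp (by positivity))
    have e1 : (- Fof (gg T κ rm rp T0 p) (0, x)) * w (0, x) ^ 2 ≤
        (2 * d + 12) * T⁻¹ * (2 * Real.exp (S / 2)) * u (0, x) ^ 2 :=
      (mul_le_mul_of_nonneg_right hF' (sq_nonneg _)).trans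
        (mul_le_mul_of_nonneg_left hw (by positivity))
    have hG := G2_nonneg w (0, x)
    unfold G2 at hG
    unfold Eof
    have hB : 0 ≤ MM d K * T⁻¹ * Real.exp (S / 2) * u (0, x) ^ 2 := by positivity
    have e2 : (2 * d + 12) * T⁻¹ * (2 * Real.exp (S / 2)) * u (0, x) ^ 2 ≤
        2 * (MM d K * T⁻¹ * Real.exp (S / 2) * u (0, x) ^ 2) := by
      have hm : (2 * d + 12 : ℝ) ≤ MM d K := by
        unfold MM
        have : 0 ≤ 3 * (2 + d * K + (d * K) ^ 2) := by positivity
        linarith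
      have : 0 ≤ T⁻¹ * Real.exp (S / 2) * u (0, x) ^ 2 := by positivity
      have := mul_le_mul_of_nonneg_right hm this
      linarith
    calc _ = Real.exp (gg T κ rm rp T0 p (0, x)) * (- ∑ i, (Dv (eX i) w (0, x)) ^ 2
            + (1/2) * ((- Fof (gg T κ rm rp T0 p) (0, x)) * w (0, x) ^ 2)) := by ring
      _ ≤ Real.exp (gg T κ rm rp T0 p (0, x)) * (MM d K * T⁻¹ * Real.exp (S / 2) * u (0, x) ^ 2) :=
          mul_le_mul_of_nonneg_left (by linarith) (exp_pos _).le
      _ ≤ Real.exp (3 / 2 * S) * (MM d K * T⁻¹ * Real.exp (S / 2) * u (0, x) ^ 2) :=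
          mul_le_mul_of_nonneg_right (exp_le_exp.2 hg) hB
      _ = MM d K * T⁻¹ * (Real.exp (3 / 2 * S) * Real.exp (S / 2)) * u (0, x) ^ 2 := by ring
      _ = _ := by rw [← Real.exp_add]; congr 3; ring_nf
  · rw [Eof_zero hs, neg_zero]
    refine indicator_nonneg (fun x _ => ?_) x
    positivity
end pw2


section assemble
variable {d : ℕ} {p q : Fin d → ℝ} {C0 T κ rm rp T0 : ℝ}

lemma norm_R2 (x : EuclideanSpace ℝ (Fin d)) : ‖x‖ ^ 2 = R2 (fun _ => 1) x := by
  rw [EuclideanSpace.norm_sq_eq]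
  simp [R2]

lemma AA_closed : IsClosed (AA p q rm rp) := by
  have c1 := (R2_smooth p).continuous
  have c2 := (R2_smooth q).continuous
  exact (isClosed_le continuous_const c1).inter
    ((isClosed_le c1 continuous_const).inter (isClosed_le c2 continuous_const))

lemma GG_closed : IsClosed (GG p q rm rp) := by
  have c1 := (R2_smooth p).continuous
  have c2 := (R2_smooth q).continuous
  exact (isClosed_le continuous_const c1).inter
    ((isClosed_le c1 continuous_const).inter (isClosed_le c2 continuous_const))

lemma AA_cpt (hpq : ∀ i, p i + q i = 1) : IsCompact (AA p q rm rp) := by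
  refine Metric.isCompact_of_isClosed_isBounded AA_closed ?_
  refine (Metric.isBounded_closedBall (x := (0 : EuclideanSpace ℝ (Fin d))) (r := 2 * |rp|)).subset ?_
  intro x hx
  rw [mem_closedBall_zero_iff]
  have h := norm_R2 x
  rw [R2_sum hpq] at h
  obtain ⟨-, h1, h2⟩ := hx
  have : ‖x‖ ^ 2 ≤ (2 * |rp|) ^ 2 := by
    rw [h, mul_pow, sq_abs]; nlinarith [sq_nonneg rp]
  exact le_of_sq_le_sq this (by positivity)

lemma GG_cpt (hrm : 0 < rm) (hpq : ∀ i, p i + q i = 1) : IsCompact (GG p q rm rp) := by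
  refine (AA_cpt (rm := rm) (rp := rp) hpq).of_isClosed_subset GG_closed ?_
  rintro x ⟨a, b, c⟩
  have := pow_pos hrm 2
  have := sq_nonneg rp
  exact ⟨by linarith, by linarith, by linarith⟩

lemma h0_cont {u : ℝ × EuclideanSpace ℝ (Fin d) → ℝ} (hu : ContDiff ℝ ∞ u) : Continuous (h0 T u) := by
  unfold h0 G2
  have h := hu.continuous
  have h2 := fun i : Fin d => (Dv_smooth hu (eX i)).continuous
  fun_prop

lemma hX_cont {u : ℝ × EuclideanSpace ℝ (Fin d) → ℝ} (hu : ContDiff ℝ ∞ u) : Continuous (hX T κ u) := by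
  unfold hX
  have h := h0_cont (T := T) hu
  have h2 := (R2_smooth' (d := d) (fun _ => 1)).continuous
  fun_prop

lemma intOn_cpt {f : ℝ × EuclideanSpace ℝ (Fin d) → ℝ} (hf : Continuous f) {B : Set (EuclideanSpace ℝ (Fin d))}
    (hB : IsCompact B) (a b : ℝ) : IntegrableOn f (Icc a b ×ˢ B) :=
  hf.continuousOn.integrableOn_compact (isCompact_Icc.prod hB)

lemma iter {f : ℝ × EuclideanSpace ℝ (Fin d) → ℝ} (hf : Continuous f) {B : Set (EuclideanSpace ℝ (Fin d))}
    (hB : IsCompact B) (a b : ℝ) :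
    ∫ z in Icc a b ×ˢ B, f z = ∫ t in Icc a b, ∫ x in B, f (t, x) := by
  have h := intOn_cpt hf hB a b
  rw [Measure.volume_eq_prod] at h ⊢
  exact setIntegral_prod _ h

lemma exists_T0 (hT : 0 < T) {u : ℝ × EuclideanSpace ℝ (Fin d) → ℝ} (hu : ContDiff ℝ ∞ u)
    (hpq : ∀ i, p i + q i = 1) :
    ∃ T0, T / 2 ≤ T0 ∧ T0 ≤ T ∧ ∫ x in AA p q rm rp, hX T κ u (T0, x) ≤
      2 * T⁻¹ * ∫ z in Icc 0 T ×ˢ AA p q rm rp, hX T κ u z := by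
  have hcpt := AA_cpt (rm := rm) (rp := rp) hpq
  have hc := hX_cont (T := T) (κ := κ) hu
  have hIntg := intOn_cpt hc hcpt 0 T
  have hIntg2 := intOn_cpt hc hcpt (T/2) T
  have hvol : (volume (Icc (T/2) T)) = ENNReal.ofReal (T / 2) := by
    rw [Real.volume_Icc]; congr 1; ring
  have hφ : IntegrableOn (fun t => ∫ x in AA p q rm rp, hX T κ u (t, x)) (Icc (T/2) T) := by
    have h := hIntg2
    rw [IntegrableOn, Measure.volume_eq_prod, ← Measure.prod_restrict] at h
    exact h.integral_prod_left
  obtain ⟨T0, hm, hle⟩ := exists_le_setAverage (μ := volume) (s := Icc (T/2) T)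
    (f := fun t => ∫ x in AA p q rm rp, hX T κ u (t, x))
    (by rw [hvol]; simpa using hT) (by rw [hvol]; exact ENNReal.ofReal_ne_top) hφ
  refine ⟨T0, hm.1, hm.2, hle.trans ?_⟩
  rw [setAverage_eq, ← iter hc hcpt, smul_eq_mul, measureReal_def, hvol, ENNReal.toReal_ofReal (by linarith)]
  have e : (T / 2)⁻¹ = 2 * T⁻¹ := by field_simp
  rw [e]
  refine mul_le_mul_of_nonneg_left ?_ (by positivity)
  refine setIntegral_mono_set hIntg (ae_of_all _ fun z => hX_nonneg hT u z) ?_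
  refine (LE.le.eventuallyLE ?_)
  exact prod_mono (Icc_subset_Icc (by linarith) le_rfl) le_rfl

lemma ww_cpt {u : ℝ × EuclideanSpace ℝ (Fin d) → ℝ} (hu : HasCompactSupport u) :
    HasCompactSupport (ww p q rm rp u) := hu.mul_left

theorem core {K : ℝ} (hK : 0 ≤ K) {u : ℝ × EuclideanSpace ℝ (Fin d) → ℝ}
    (hψ : Bd (K * (rm ^ 2)⁻¹) (psi (rm ^ 2) (rp ^ 2) p q))
    (H : Hu p q T κ rm rp u) (P : ∀ T0, T / 2 ≤ T0 → T0 ≤ T → Par p q C0 T κ rm rp T0) (hT : 0 < T) :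
    ∫ z in Icc 0 (T/4) ×ˢ GG p q rm rp, h0 T u z ≤
      3 * MM d K * C0 * Real.exp (-(κ * (rm * rp)) / 4) *
        ((∫ z in Icc 0 T ×ˢ AA p q rm rp, hX T κ u z) +
          Real.exp (2 * (κ * rp ^ 2)) * ∫ x in AA p q rm rp, u (0, x) ^ 2) := by
  have hpq := (P T (by linarith) le_rfl).hpq
  obtain ⟨T0, t1, t2, hT0⟩ := exists_T0 (rm := rm) (rp := rp) (κ := κ) hT H.sm hpq
  replace P := P T0 t1 t2
  have hκ := P.hκ
  have hM : 0 ≤ MM d K := by unfold MM; positivity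
  have hT00 : 0 ≤ T0 := by linarith
  set g := gg T κ rm rp T0 p with hgd
  set w := ww p q rm rp u with hwd
  set s := κ * (rm * rp) with hs
  have hg : ContDiff ℝ ∞ g := gw_smooth (pow_pos P.hrm 2)
  have hw : ContDiff ℝ ∞ w := hψ.1.mul H.sm
  have hwc : HasCompactSupport w := ww_cpt H.cs
  have hA := AA_cpt (rm := rm) (rp := rp) hpq
  have hG := GG_cpt (rp := rp) P.hrm hpq
  have hcar := carleman hg hw hwc hT00
  have hX0 := fun z => hX_nonneg (κ := κ) hT u z
  set J := ∫ z in Icc 0 (T/4) ×ˢ GG p q rm rp, h0 T u z with hJ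
  set X := ∫ z in Icc 0 T ×ˢ AA p q rm rp, hX T κ u z with hXd
  set Y := ∫ x in AA p q rm rp, u (0, x) ^ 2 with hY
  have hXn : 0 ≤ X := integral_nonneg hX0
  have hYn : 0 ≤ Y := integral_nonneg fun x => sq_nonneg _
  have hcX := hX_cont (T := T) (κ := κ) H.sm
  have hch := h0_cont (T := T) H.sm
  -- interior
  have hmG : MeasurableSet (Icc 0 (T/4) ×ˢ GG p q rm rp) := measurableSet_Icc.prod GG_closed.measurableSet
  have hmA : MeasurableSet (Icc 0 T ×ˢ AA p q rm rp) := measurableSet_Icc.prod AA_closed.measurableSet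
  have I1 : Integrable ((Icc 0 (T/4) ×ˢ GG p q rm rp).indicator
      (fun z => κ * Real.exp (5 / 4 * s) * h0 T u z)) :=
    (integrable_indicator_iff hmG).2 (intOn_cpt (by fun_prop) hG _ _)
  have I2 : Integrable ((Icc 0 T ×ˢ AA p q rm rp).indicator
      (fun z => MM d K * κ * Real.exp s * hX T κ u z)) :=
    (integrable_indicator_iff hmA).2 (intOn_cpt (by fun_prop) hA _ _)
  have I3 : Integrable (Iof g w) :=
    (Iof_smooth hg hw).continuous.integrable_of_hasCompactSupport (cpt_of hwc fun z hz => Iof_zero hz)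
  have hmS : MeasurableSet (Icc 0 T0 ×ˢ (univ : Set (EuclideanSpace ℝ (Fin d)))) :=
    measurableSet_Icc.prod MeasurableSet.univ
  have step1 : κ * Real.exp (5 / 4 * s) * J ≤
      (∫ z in (Icc 0 T0) ×ˢ univ, Iof g w z) + MM d K * κ * Real.exp s * X := by
    have h1 : ∫ z in (Icc 0 T0) ×ˢ univ, (Icc 0 (T/4) ×ˢ GG p q rm rp).indicator
      (fun z => κ * Real.exp (5 / 4 * s) * h0 T u z) z = κ * Real.exp (5 / 4 * s) * J := by
      rw [setIntegral_indicator hmG, inter_eq_self_of_subset_right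
        (prod_mono (Icc_subset_Icc le_rfl (by linarith)) (subset_univ _)), integral_const_mul]
    have h2 : ∫ z in (Icc 0 T0) ×ˢ univ, (Icc 0 T ×ˢ AA p q rm rp).indicator
      (fun z => MM d K * κ * Real.exp s * hX T κ u z) z ≤ MM d K * κ * Real.exp s * X := by
      refine (setIntegral_le_integral I2 (ae_of_all _ fun z => indicator_nonneg (fun z _ => ?_) z)).trans ?_
      · have := hX0 z
        positivity
      · rw [integral_indicator hmA, integral_const_mul]
    rw [← h1]
    refine le_trans ?_ (add_le_add le_rfl h2)
    rw [← integral_add I3.integrableOn I2.integrableOn]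
    exact setIntegral_mono_on I1.integrableOn (I3.add I2).integrableOn hmS
      fun z hz => pt_I hK hψ H P z hz.1.1 hz.1.2
  have hEc : ∀ t, Integrable (fun x => Eof g w (t, x)) := fun t =>
    ((Eof_smooth hg hw).continuous.comp (by fun_prop)).integrable_of_hasCompactSupport
      (slice_cpt (cpt_of hwc fun z hz => Eof_zero hz) t)
  have step2 : ∫ x, Eof g w (T0, x) ≤ MM d K * (2 * T⁻¹ * X) := by
    have hI : Integrable ((AA p q rm rp).indicator (fun x => MM d K * hX T κ u (T0, x))) :=
      (integrable_indicator_iff AA_closed.measurableSet).2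
        (Continuous.continuousOn (by fun_prop) |>.integrableOn_compact hA)
    refine (integral_mono (hEc T0) hI fun x => pt_top hK hψ H P x).trans ?_
    rw [integral_indicator AA_closed.measurableSet, integral_const_mul]
    exact mul_le_mul_of_nonneg_left hT0 hM
  have step3 : - ∫ x, Eof g w (0, x) ≤ MM d K * T⁻¹ * Real.exp (2 * (κ * rp ^ 2)) * Y := by
    have huc := H.sm.continuous
    have hI : Integrable ((AA p q rm rp).indicator
        (fun x => MM d K * T⁻¹ * Real.exp (2 * (κ * rp ^ 2)) * u (0, x) ^ 2)) :=
      (integrable_indicator_iff AA_closed.measurableSet).2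
        (Continuous.continuousOn (by fun_prop) |>.integrableOn_compact hA)
    rw [← integral_neg]
    refine (integral_mono (hEc 0).neg hI fun x => pt_bot hK hψ P x).trans ?_
    rw [integral_indicator AA_closed.measurableSet, integral_const_mul]
  have hTk : T⁻¹ = C0 * κ := by
    have := P.hk
    field_simp
    linarith
  have hC6 := P.hC6
  have hs0 : 0 ≤ s := by
    have := P.hrm
    have := P.hrm.trans P.hrp
    positivity
  have hes : 1 ≤ Real.exp s := Real.one_le_exp hs0
  set E2 := Real.exp (2 * (κ * rp ^ 2))
  have hE2 : 0 < E2 := exp_pos _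
  rw [hTk] at step2 step3
  have tot : κ * (Real.exp (5 / 4 * s) * J) ≤ κ * (3 * MM d K * C0 * Real.exp s * (X + E2 * Y)) := by
    have b1 : MM d K * κ * Real.exp s * X ≤ MM d K * κ * Real.exp s * (C0 * X) := by
      refine mul_le_mul_of_nonneg_left ?_ (by positivity)
      nlinarith
    have b2 : 2 * MM d K * C0 * κ * X * 1 ≤ 2 * MM d K * C0 * κ * X * Real.exp s :=
      mul_le_mul_of_nonneg_left hes (by positivity)
    have b3 : MM d K * C0 * κ * E2 * Y * 1 ≤ MM d K * C0 * κ * E2 * Y * Real.exp s :=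
      mul_le_mul_of_nonneg_left hes (by positivity)
    have b4 : 0 ≤ MM d K * C0 * κ * E2 * Y * Real.exp s := by positivity
    have e : κ * (3 * MM d K * C0 * Real.exp s * (X + E2 * Y)) = MM d K * κ * Real.exp s * (C0 * X)
      + 2 * MM d K * C0 * κ * X * Real.exp s + 3 * (MM d K * C0 * κ * E2 * Y * Real.exp s) := by ring
    rw [e]
    linarith
  have tot2 := le_of_mul_le_mul_left tot hκ
  have e5 : Real.exp (-(5 / 4 * s)) * Real.exp (5 / 4 * s) = 1 := by rw [← Real.exp_add]; simp
  have e6 : Real.exp (-(5 / 4 * s)) * Real.exp s = Real.exp (-s / 4) := by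
    rw [← Real.exp_add]; congr 1; ring
  have := mul_le_mul_of_nonneg_left tot2 (exp_pos (-(5 / 4 * s))).le
  calc J = (Real.exp (-(5 / 4 * s)) * Real.exp (5 / 4 * s)) * J := by rw [e5, one_mul]
    _ = Real.exp (-(5 / 4 * s)) * (Real.exp (5 / 4 * s) * J) := by ring
    _ ≤ _ := this
    _ = 3 * MM d K * C0 * (Real.exp (-(5 / 4 * s)) * Real.exp s) * (X + E2 * Y) := by ring
    _ = _ := by rw [e6]
end assemble


section reduce

lemma extend_smooth {H : Type*} [NormedAddCommGroup H] [NormedSpace ℝ H] [FiniteDimensional ℝ H]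
    {K U : Set H} (hK : IsCompact K) (hU : IsOpen U) (hKU : K ⊆ U) {f : H → ℝ}
    (hf : ContDiffOn ℝ ∞ f U) :
    ∃ v : H → ℝ, ContDiff ℝ ∞ v ∧ HasCompactSupport v ∧ ∀ z ∈ K, f =ᶠ[nhds z] v := by
  have : ProperSpace H := FiniteDimensional.proper ℝ H
  obtain ⟨B, hB, hKB, hBU⟩ := exists_compact_between hK hU hKU
  obtain ⟨χ, h1, h0, -⟩ := exists_contMDiffMap_one_nhds_of_subset_interior (n := (⊤ : ℕ∞))
    (modelWithCornersSelf ℝ H) hK.isClosed hKB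
  have hχ : ContDiff ℝ ∞ χ := χ.contMDiff.contDiff
  refine ⟨fun z => χ z * f z, ?_, ?_, ?_⟩
  · rw [contDiff_iff_contDiffAt]
    intro z
    by_cases hz : z ∈ U
    · exact hχ.contDiffAt.mul (hf.contDiffAt (hU.mem_nhds hz))
    · have hzB : z ∉ B := fun h => hz (hBU h)
      have : (fun z => χ z * f z) =ᶠ[nhds z] fun _ => (0:ℝ) := by
        filter_upwards [hB.isClosed.isOpen_compl.mem_nhds hzB] with y hy
        rw [h0 y hy, zero_mul]
      exact contDiffAt_const.congr_of_eventuallyEq this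
  · refine HasCompactSupport.intro hB fun z hz => ?_
    rw [h0 z hz, zero_mul]
  · intro z hz
    filter_upwards [h1.filter_mono (nhds_le_nhdsSet hz)] with y hy
    rw [hy, one_mul]

variable {d : ℕ}

lemma pd_eq {u : ℝ → EuclideanSpace ℝ (Fin d) → ℝ} {v : ℝ × EuclideanSpace ℝ (Fin d) → ℝ}
    (hv : ContDiff ℝ ∞ v) {t : ℝ} {x : EuclideanSpace ℝ (Fin d)}
    (h : (fun z : ℝ × EuclideanSpace ℝ (Fin d) => u z.1 z.2) =ᶠ[nhds (t, x)] v) (i : Fin d) :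
    pdg i (u t) x = Dv (eX i) v (t, x) := by
  have hd : DifferentiableAt ℝ (fun z : ℝ × EuclideanSpace ℝ (Fin d) => u z.1 z.2) (t, x) :=
    (smooth_diff hv _).congr_of_eventuallyEq h
  rw [← Dv_congr h]
  exact slice_deriv hd _

lemma bh_eq {u : ℝ → EuclideanSpace ℝ (Fin d) → ℝ} {v : ℝ × EuclideanSpace ℝ (Fin d) → ℝ}
    (hv : ContDiff ℝ ∞ v) {t : ℝ} {x : EuclideanSpace ℝ (Fin d)}
    (h : (fun z : ℝ × EuclideanSpace ℝ (Fin d) => u z.1 z.2) =ᶠ[nhds (t, x)] v) :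
    bheat u t x = Lof v (t, x) := by
  have hd : DifferentiableAt ℝ (fun z : ℝ × EuclideanSpace ℝ (Fin d) => u z.1 z.2) (t, x) :=
    (smooth_diff hv _).congr_of_eventuallyEq h
  unfold bheat Lof lapg tdg
  congr 1
  · rw [← Dv_congr h]
    exact (slice_derivT hd).deriv
  · refine Finset.sum_congr rfl fun i _ => ?_
    have hcont : ContinuousAt (fun y : EuclideanSpace ℝ (Fin d) => (t, y)) x := by fun_prop
    have hev : pdg i (u t) =ᶠ[nhds x] fun y => Dv (eX i) v (t, y) := by
      filter_upwards [hcont.eventually h.eventuallyEq_nhds] with y hy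
      exact pd_eq hv hy i
    have : pdg i (pdg i (u t)) x = pdg i (fun y => Dv (eX i) v (t, y)) x := by
      unfold pdg at hev ⊢
      rw [hev.fderiv_eq]
    rw [this]
    exact slice_deriv (smooth_diff (Dv_smooth hv _) _) _

def pp (d₁ d₂ : ℕ) (i : Fin (d₁ + d₂)) : ℝ := if (i : ℕ) < d₁ then 1 else 0
def qq (d₁ d₂ : ℕ) (i : Fin (d₁ + d₂)) : ℝ := if (i : ℕ) < d₁ then 0 else 1

lemma rad_eq (d₁ d₂ : ℕ) (x) : radP d₁ d₂ x = √(R2 (pp d₁ d₂) x) := by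
  unfold radP R2 pp
  congr 1
  refine Finset.sum_congr rfl fun i _ => ?_
  split_ifs <;> simp

lemma zrad_eq (d₁ d₂ : ℕ) (x) : zradP d₁ d₂ x = √(R2 (qq d₁ d₂) x) := by
  unfold zradP R2 qq
  congr 1
  refine Finset.sum_congr rfl fun i _ => ?_
  split_ifs <;> simp

lemma pp_sum (d₁ d₂ : ℕ) : ∑ i, pp d₁ d₂ i = d₁ := by
  unfold pp
  rw [Fin.sum_univ_add]
  simp

lemma AA_iff {d₁ d₂ : ℕ} {rm rp : ℝ} (hrm : 0 < rm) (hrp : rm < rp) (x) :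
    (radP d₁ d₂ x ∈ Icc rm rp ∧ zradP d₁ d₂ x ≤ rp) ↔ x ∈ AA (pp d₁ d₂) (qq d₁ d₂) rm rp := by
  rw [rad_eq, zrad_eq, mem_Icc, Real.le_sqrt' hrm, Real.sqrt_le_iff, Real.sqrt_le_iff]
  have : 0 ≤ rp := by linarith
  simp [AA, this, and_assoc]

lemma GG_iff {d₁ d₂ : ℕ} {rm rp : ℝ} (hrm : 0 < rm) (hrp : rm < rp) (x) :
    (10 * rm ≤ radP d₁ d₂ x ∧ radP d₁ d₂ x ≤ rp / 2 ∧ zradP d₁ d₂ x ≤ rp / 2) ↔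
      x ∈ GG (pp d₁ d₂) (qq d₁ d₂) rm rp := by
  rw [rad_eq, zrad_eq, Real.le_sqrt' (by linarith), Real.sqrt_le_iff, Real.sqrt_le_iff]
  have h : 0 ≤ rp / 2 := by linarith
  have e1 : (10 * rm) ^ 2 = 100 * rm ^ 2 := by ring
  have e2 : (rp / 2) ^ 2 = rp ^ 2 / 4 := by ring
  rw [e1, e2]
  simp only [h, true_and, GG, mem_ofPred_eq]

end reduce

/-- Backward uniqueness Carleman estimate in a cylindrical shell. -/
theorem statement16 (d₁ d₂ : ℕ) (hd₁ : 1 ≤ d₁) :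
    ∃ C₀star C : ℝ, 1 ≤ C₀star ∧ 1 ≤ C ∧
      ∀ C₀ : ℝ, C₀star ≤ C₀ →
      ∀ (T rm rp : ℝ) (u : ℝ → EuclideanSpace ℝ (Fin (d₁ + d₂)) → ℝ),
        0 < T → 0 < rm → rm < rp →
        (∃ U : Set (ℝ × EuclideanSpace ℝ (Fin (d₁ + d₂))), IsOpen U ∧
          {z : ℝ × EuclideanSpace ℝ (Fin (d₁ + d₂)) |
              z.1 ∈ Icc 0 T ∧ radP d₁ d₂ z.2 ∈ Icc rm rp ∧ zradP d₁ d₂ z.2 ≤ rp} ⊆ U ∧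
          ContDiffOn ℝ (⊤ : ℕ∞) (fun z => u z.1 z.2) U) →
        (∀ t ∈ Icc (0:ℝ) T, ∀ x, radP d₁ d₂ x ∈ Icc rm rp → zradP d₁ d₂ x ≤ rp →
          |bheat u t x| ≤ (C₀ * T)⁻¹ * |u t x|
            + ((C₀ * T) ^ ((1:ℝ)/2))⁻¹ * Real.sqrt (∑ i, (pdg i (u t) x) ^ 2)) →
        4 * C₀ * T ≤ rm ^ 2 →
        (∫ t in Icc 0 (T/4),
            ∫ x in {x | 10 * rm ≤ radP d₁ d₂ x ∧ radP d₁ d₂ x ≤ rp/2 ∧ zradP d₁ d₂ x ≤ rp/2},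
              (T⁻¹ * (u t x) ^ 2 + ∑ i, (pdg i (u t) x) ^ 2))
          ≤ C * C₀ * Real.exp (-(rm * rp) / (4 * C₀ * T)) *
            ((∫ t in Icc (0:ℝ) T,
                ∫ x in {x | radP d₁ d₂ x ∈ Icc rm rp ∧ zradP d₁ d₂ x ≤ rp},
                  Real.exp (2 * ‖x‖ ^ 2 / (C₀ * T)) *
                    (T⁻¹ * (u t x) ^ 2 + ∑ i, (pdg i (u t) x) ^ 2))
              + Real.exp (2 * rp ^ 2 / (C₀ * T)) *
                (∫ x in {x | radP d₁ d₂ x ∈ Icc rm rp ∧ zradP d₁ d₂ x ≤ rp},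
                  (u 0 x) ^ 2)) := by
  obtain ⟨K, hK, hψ⟩ := psi_Bd (d₁ + d₂)
  have hd : (1:ℝ) ≤ d₁ := by exact_mod_cast hd₁
  have hd2 : (0:ℝ) ≤ d₂ := by positivity
  have hM : 12 ≤ MM (d₁ + d₂) K := by
    unfold MM
    have : 0 ≤ 3 * (2 + ((d₁ + d₂ : ℕ):ℝ) * K + (((d₁ + d₂ : ℕ):ℝ) * K) ^ 2) := by positivity
    have : (0:ℝ) ≤ ((d₁ + d₂ : ℕ):ℝ) := by positivity
    linarith
  refine ⟨6 * ((d₁ + d₂ : ℕ):ℝ), 3 * MM (d₁ + d₂) K, by push_cast; linarith, by linarith, ?_⟩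
  intro C₀ hC₀ T rm rp u hT hrm hrp hU hineq hcond
  obtain ⟨U, hUo, hUs, hUd⟩ := hU
  have hC6 : 6 ≤ C₀ := by push_cast at hC₀; linarith
  have hCT : 0 < C₀ * T := by positivity
  set κ := (C₀ * T)⁻¹ with hκd
  have hκ : 0 < κ := inv_pos.2 hCT
  have hpq : ∀ i, pp d₁ d₂ i + qq d₁ d₂ i = 1 := fun i => by unfold pp qq; split_ifs <;> norm_num
  have hp : ∀ i, pp d₁ d₂ i * pp d₁ d₂ i = pp d₁ d₂ i := fun i => by unfold pp; split_ifs <;> norm_num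
  have hq : ∀ i, qq d₁ d₂ i * qq d₁ d₂ i = qq d₁ d₂ i := fun i => by unfold qq; split_ifs <;> norm_num
  set p := pp d₁ d₂ with hpd
  set q := qq d₁ d₂ with hqd
  have hsetA : {x | radP d₁ d₂ x ∈ Icc rm rp ∧ zradP d₁ d₂ x ≤ rp} = AA p q rm rp :=
    Set.ext fun x => AA_iff hrm hrp x
  have hsetG : {x | 10 * rm ≤ radP d₁ d₂ x ∧ radP d₁ d₂ x ≤ rp/2 ∧ zradP d₁ d₂ x ≤ rp/2} =
      GG p q rm rp := Set.ext fun x => GG_iff hrm hrp x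
  rw [hsetA, hsetG]
  have hAc : IsCompact (AA p q rm rp) := AA_cpt hpq
  have hGc : IsCompact (GG p q rm rp) := GG_cpt hrm hpq
  have hGA : GG p q rm rp ⊆ AA p q rm rp := by
    rintro x ⟨a, b, c⟩
    have := pow_pos hrm 2
    have := sq_nonneg rp
    exact ⟨by linarith, by linarith, by linarith⟩
  obtain ⟨v, hv, hvc, hloc⟩ := extend_smooth (K := Icc 0 T ×ˢ AA p q rm rp) (isCompact_Icc.prod hAc) hUo
    (by
      refine Subset.trans ?_ hUs
      rintro ⟨t, x⟩ ⟨h1, h2⟩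
      exact ⟨h1, (AA_iff hrm hrp x).2 h2⟩) hUd
  have hval : ∀ t ∈ Icc 0 T, ∀ x ∈ AA p q rm rp, u t x = v (t, x) := fun t ht x hx =>
    (hloc (t, x) ⟨ht, hx⟩).eq_of_nhds
  have hpd' : ∀ t ∈ Icc 0 T, ∀ x ∈ AA p q rm rp, ∑ i, (pdg i (u t) x) ^ 2 = G2 v (t, x) :=
    fun t ht x hx => Finset.sum_congr rfl fun i _ => by rw [pd_eq hv (hloc (t, x) ⟨ht, hx⟩)]
  have hsq : ((C₀ * T) ^ ((1:ℝ)/2))⁻¹ = √κ := by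
    rw [← Real.sqrt_eq_rpow, hκd, Real.sqrt_inv]
  have H : Hu p q T κ rm rp v := by
    refine ⟨hv, hvc, ?_⟩
    rintro ⟨t, x⟩ h1 h2 hx
    have hx' := (AA_iff hrm hrp x).2 hx
    have h := hineq t ⟨h1, h2⟩ x hx'.1 hx'.2
    rw [bh_eq hv (hloc (t, x) ⟨⟨h1, h2⟩, hx⟩), hpd' t ⟨h1, h2⟩ x hx, hval t ⟨h1, h2⟩ x hx, hsq] at h
    exact h
  have hk : C₀ * T * κ = 1 := mul_inv_cancel₀ hCT.ne'
  have P : ∀ T0, T / 2 ≤ T0 → T0 ≤ T → Par p q C₀ T κ rm rp T0 := by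
    intro T0 a b
    refine ⟨hp, hq, hpq, ?_, ?_, hC₀, hC6, hT, hκ, hk, hrm, hrp, ?_, a, b⟩
    · rw [hpd, pp_sum]; exact hd
    · rw [hpd, pp_sum]; push_cast; linarith
    · have := mul_le_mul_of_nonneg_left hcond hκ.le
      nlinarith
  have hcore := core hK (hψ p q hp hq (rm ^ 2) (rp ^ 2) (pow_pos hrm 2)
    (pow_le_pow_left₀ hrm.le hrp.le 2)) H P hT
  rw [iter (h0_cont hv) hGc, iter (hX_cont hv) hAc] at hcore
  have hmA := (AA_closed (p := p) (q := q) (rm := rm) (rp := rp)).measurableSet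
  have hmG := (GG_closed (p := p) (q := q) (rm := rm) (rp := rp)).measurableSet
  have hdv : ∀ a, a / (C₀ * T) = κ * a := fun a => by rw [hκd]; ring
  have e1 : (∫ t in Icc 0 (T/4), ∫ x in GG p q rm rp, (T⁻¹ * (u t x) ^ 2 + ∑ i, (pdg i (u t) x) ^ 2)) =
      ∫ t in Icc 0 (T/4), ∫ x in GG p q rm rp, h0 T v (t, x) := by
    refine setIntegral_congr_fun measurableSet_Icc fun t ht => setIntegral_congr_fun hmG fun x hx => ?_
    have ht' : t ∈ Icc 0 T := ⟨ht.1, by linarith [ht.2]⟩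
    simp only [h0]
    rw [hval t ht' x (hGA hx), hpd' t ht' x (hGA hx)]
  have e2 : (∫ t in Icc (0:ℝ) T, ∫ x in AA p q rm rp, Real.exp (2 * ‖x‖ ^ 2 / (C₀ * T)) *
      (T⁻¹ * (u t x) ^ 2 + ∑ i, (pdg i (u t) x) ^ 2)) =
      ∫ t in Icc 0 T, ∫ x in AA p q rm rp, hX T κ v (t, x) := by
    refine setIntegral_congr_fun measurableSet_Icc fun t ht => setIntegral_congr_fun hmA fun x hx => ?_
    simp only [h0, hX]
    rw [hval t ht x hx, hpd' t ht x hx, norm_R2, hdv]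
    congr 2
    ring
  have e3 : ∫ x in AA p q rm rp, (u 0 x) ^ 2 = ∫ x in AA p q rm rp, v (0, x) ^ 2 := by
    refine setIntegral_congr_fun hmA fun x hx => ?_
    rw [hval 0 ⟨le_rfl, hT.le⟩ x hx]
  have e4 : -(rm * rp) / (4 * C₀ * T) = -(κ * (rm * rp)) / 4 := by
    rw [hκd]; field_simp
  have e5 : 2 * rp ^ 2 / (C₀ * T) = 2 * (κ * rp ^ 2) := by rw [hdv]; ring
  rw [e1, e2, e3, e4, e5]
  exact hcore
end
end
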